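/- arXiv:1410.7910 — 2 statements merged into one kernel-verified Lean document; each statement's English description precedes it below -/
import Mathlib

section
/- Let I_{g,1} denote the number of isomorphism classes of one-vertex triangulations of the once-punctured genus-g surface, defined combinatorially as the number of orbits of the conjugation action σ·ω = σωσ⁻¹ of the centralizer of ρ in the permutation group of Fin (3N), where N = 4g−2, on the set {ω ∈ Ω_N : ω∘ρ has exactly one orbit}. Then I_{g,1} ∼ (2/(3·√π·(4g−2)^{3/2}))·((12g−6)/e)^{2g−1} as g → ∞; that is, the ratio of I_{g,1} to this expression tends to 1. -/
open Filter Real Topology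

/-- `Omega N`: the perfect matchings of the `3N` half-edges, i.e. fixed-point-free
involutions of `Fin (3N)`. -/
def Omega (N : ℕ) : Type := {ω : Equiv.Perm (Fin (3 * N)) // ∀ a, ω (ω a) = a ∧ ω a ≠ a}

/-- The underlying function of `ρ`: the 3-cycle `(3v, 3v+1, 3v+2)` on each block. -/
def rhoFun {N : ℕ} (a : Fin (3 * N)) : Fin (3 * N) :=
  ⟨3 * (a.val / 3) + (a.val + 1) % 3, by have := a.isLt; omega⟩

/-- `ρ`: the permutation of the half-edges acting as the 3-cycle `(3v, 3v+1, 3v+2)`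
on each block `B_v`. -/
noncomputable def rho (N : ℕ) : Equiv.Perm (Fin (3 * N)) :=
  Equiv.ofBijective rhoFun
    (Finite.injective_iff_bijective.mp (by
      intro a b h
      have h' := congrArg Fin.val h
      simp only [rhoFun] at h'
      exact Fin.ext (by omega)))

/-- `ω` encodes a one-vertex (one-puncture) triangulation exactly when the permutation
`ω ∘ ρ` has a single orbit on the half-edges. -/
def OneOrbit {N : ℕ} (ω : Omega N) : Prop :=
  ∀ a b : Fin (3 * N), (ω.val * rho N).SameCycle a b

/-- Two one-orbit configurations encode isomorphic one-vertex triangulations exactly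
when they are conjugate by a permutation commuting with `ρ`. -/
def TriIsoRel (g : ℕ) (t t' : {ω : Omega (4 * g - 2) // OneOrbit ω}) : Prop :=
  ∃ σ : Equiv.Perm (Fin (3 * (4 * g - 2))),
    σ * rho (4 * g - 2) = rho (4 * g - 2) * σ ∧ σ * t.val.val * σ⁻¹ = t'.val.val

/-- `Ig1 g`: the number of isomorphism classes of one-vertex triangulations of the
once-punctured genus-`g` surface, i.e. the number of orbits of the conjugation action
of the centralizer of `ρ` on the one-orbit configurations in `Ω_{4g-2}`. -/
noncomputable def Ig1 (g : ℕ) : ℕ := Nat.card (Quot (TriIsoRel g))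

namespace OVT
open Equiv

/-- `f` has a single orbit. -/
def Tr {H : Type*} (f : Perm H) : Prop := ∀ a b, f.SameCycle a b

/-- fixed-point-free involutions `α` with `σ * α` having a single orbit -/
def IsGlu {H : Type*} (σ α : Perm H) : Prop := (∀ a, α (α a) = a ∧ α a ≠ a) ∧ Tr (σ * α)

/-- number of gluings -/
noncomputable def cnt {H : Type*} (σ : Perm H) : ℕ := Set.ncard {α | IsGlu σ α}

structure IsPos {H : Type*} (f : Perm H) (m : ℕ) (pos : H → ℕ) : Prop where
  inj : Function.Injective pos
  lt : ∀ x, pos x < m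
  surj : ∀ k < m, ∃ x, pos x = k
  step : ∀ x, pos (f x) = if pos x + 1 = m then 0 else pos x + 1

theorem exists_pos {H : Type*} [Finite H] [Nonempty H] (f : Perm H) (h : Tr f) :
    ∃ pos, IsPos f (Nat.card H) pos := by
  classical
  have := Fintype.ofFinite H
  obtain ⟨r⟩ := ‹Nonempty H›
  have hc : f.IsCycleOn (Finset.univ : Finset H) := by
    refine ⟨by simpa using f.bijective.bijOn_univ, fun a _ b _ => h a b⟩
  set m := Nat.card H with hm
  have hm' : (Finset.univ : Finset H).card = m := by simp [hm]
  have hmpos : 0 < m := by rw [hm]; exact Nat.card_pos_iff.2 ⟨⟨r⟩, inferInstance⟩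
  have hex : ∀ x, ∃ k < m, (f ^ k) r = x := fun x => by
    obtain ⟨n, hn, h⟩ := hc.exists_pow_eq (Finset.mem_univ r) (Finset.mem_univ x)
    exact ⟨n, by omega, h⟩
  have heq : ∀ k l, k < m → l < m → (f ^ k) r = (f ^ l) r → k = l := fun k l hk hl h => by
    have := (hc.pow_apply_eq_pow_apply (Finset.mem_univ r)).1 h
    rw [hm'] at this
    exact Nat.ModEq.eq_of_lt_of_lt this hk hl
  choose pos hlt hpos using hex
  refine ⟨pos, ?_, hlt, ?_, ?_⟩
  · intro x y hxy
    rw [← hpos x, ← hpos y, hxy]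
  · intro k hk
    exact ⟨(f ^ k) r, heq _ _ (hlt _) hk (hpos _)⟩
  · intro x
    have e1 : (f ^ (pos x + 1)) r = f x := by rw [pow_succ', Perm.mul_apply, hpos]
    split_ifs with h1
    · apply heq _ _ (hlt _) hmpos
      rw [hpos, ← e1, h1, ← hm', hc.pow_card_apply (Finset.mem_univ r)]; simp
    · apply heq _ _ (hlt _) (by have := hlt x; omega)
      rw [hpos, ← e1]

theorem IsPos.seg {H : Type*} {f z : Perm H} {m : ℕ} {pos : H → ℕ} (hp : IsPos f m pos)
    (y : H) (e : ℕ) (hz : ∀ x, pos y < pos x → pos x < e → z x = x) (x : H) (h1 : pos y ≤ pos x)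
    (h2 : pos x < e) : (z * f).SameCycle y x := by
  obtain ⟨n, hn⟩ := Nat.exists_eq_add_of_le h1
  induction n generalizing x with
  | zero => rw [hp.inj hn]
  | succ n ih =>
    have hx := hp.lt x
    obtain ⟨w, hw⟩ := hp.surj (pos y + n) (by omega)
    have hfw : f w = x := by
      apply hp.inj; rw [hp.step, if_neg (by omega)]; omega
    have := ih w (by omega) (by omega) hw
    have h3 : (z * f) w = x := by
      rw [Perm.mul_apply, hfw, hz x (by omega) h2]
    rw [← h3]
    exact Perm.sameCycle_apply_right.2 this

theorem IsPos.three_pos {H : Type*} {f z : Perm H} {m : ℕ} {pos : H → ℕ} (hp : IsPos f m pos)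
    (a b c : H) (ha : z a = b) (hb : z b = c) (hc : z c = a)
    (hz : ∀ x, x ≠ a → x ≠ b → x ≠ c → z x = x) (hab : pos a < pos b) (hbc : pos b < pos c) :
    Tr (z * f) := by
  have hz' : ∀ x, pos x ≠ pos a → pos x ≠ pos b → pos x ≠ pos c → z x = x := fun x h1 h2 h3 =>
    hz x (fun h => h1 (h ▸ rfl)) (fun h => h2 (h ▸ rfl)) (fun h => h3 (h ▸ rfl))
  have hcm := hp.lt c
  have sab := hp.seg (z := z) a (pos b) (fun x h1 h2 => hz' x (by omega) (by omega) (by omega))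
  have sbc := hp.seg (z := z) b (pos c) (fun x h1 h2 => hz' x (by omega) (by omega) (by omega))
  have scm := hp.seg (z := z) c m (fun x h1 h2 => hz' x (by omega) (by omega) (by omega))
  have key : ∀ y e w u, (z * f).SameCycle y w → pos w + 1 = pos e → z e = u →
      (z * f).SameCycle y u := by
    intro y e w u h1 h2 h3
    have hfw : f w = e := by
      apply hp.inj; have := hp.lt e; rw [hp.step, if_neg (by omega)]; omega
    have h4 : (z * f) w = u := by rw [Perm.mul_apply, hfw, h3]
    rw [← h4]; exact Perm.sameCycle_apply_right.2 h1
  have hba : (z * f).SameCycle b a := by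
    obtain ⟨w, hw⟩ := hp.surj (pos c - 1) (by omega)
    exact key b c w a (sbc w (by omega) (by omega)) (by omega) hc
  have hac : (z * f).SameCycle a c := by
    obtain ⟨w, hw⟩ := hp.surj (pos b - 1) (by omega)
    exact key a b w c (sab w (by omega) (by omega)) (by omega) hb
  have all : ∀ x, (z * f).SameCycle a x := by
    intro x
    by_cases h1 : pos x < pos a
    · obtain ⟨o, ho⟩ := hp.surj 0 (by omega)
      obtain ⟨w, hw⟩ := hp.surj (m - 1) (by omega)
      have h2 := scm w (by omega) (by omega)
      have hfw : f w = o := by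
        apply hp.inj; rw [hp.step, if_pos (by omega), ho]
      have h4 : (z * f) w = o := by
        rw [Perm.mul_apply, hfw, hz' o (by omega) (by omega) (by omega)]
      have h5 : (z * f).SameCycle c o := by
        rw [← h4]; exact Perm.sameCycle_apply_right.2 h2
      exact hac.trans (h5.trans (hp.seg (z := z) o (pos a)
        (fun x h1 h2 => hz' x (by omega) (by omega) (by omega)) x (by omega) h1))
    by_cases h2 : pos x < pos b
    · exact sab x (by omega) h2
    by_cases h3 : pos x < pos c
    · exact hba.symm.trans (sbc x (by omega) h3)
    · exact hac.trans (scm x (by omega) (hp.lt x))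
  exact fun x y => (all x).symm.trans (all y)

theorem IsPos.three_neg {H : Type*} [Finite H] {f z : Perm H} {m : ℕ} {pos : H → ℕ}
    (hp : IsPos f m pos)
    (a b c : H) (hc : z c = a)
    (hz : ∀ x, x ≠ a → x ≠ b → x ≠ c → z x = x) (hab : pos a < pos c) (hbc : pos c < pos b) :
    ¬ Tr (z * f) := by
  intro h
  have hz' : ∀ x, pos x ≠ pos a → pos x ≠ pos b → pos x ≠ pos c → z x = x := fun x h1 h2 h3 =>
    hz x (fun h => h1 (h ▸ rfl)) (fun h => h2 (h ▸ rfl)) (fun h => h3 (h ▸ rfl))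
  obtain ⟨n, _, hn⟩ := (h a b).exists_pow_eq''
  have : ∀ n, pos a ≤ pos (((z * f) ^ n) a) ∧ pos (((z * f) ^ n) a) < pos c := by
    intro n
    induction n with
    | zero => simp [hab]
    | succ n ih =>
      rw [pow_succ', Perm.mul_apply]
      set w := ((z * f) ^ n) a
      have hb := hp.lt b
      have hs : pos (f w) = pos w + 1 := by rw [hp.step, if_neg (by omega)]
      rw [Perm.mul_apply]
      by_cases hw : pos w + 1 = pos c
      · have : f w = c := hp.inj (by omega)
        rw [this, hc]; omega
      · rw [hz' (f w) (by omega) (by omega) (by omega)]; omega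
  have := this n
  obtain ⟨n', hn'⟩ := hn
  have := ‹∀ n, pos a ≤ pos (((z * f) ^ n) a) ∧ pos (((z * f) ^ n) a) < pos c› n
  grind
end OVT

namespace OVT
open Equiv

def Inc (p q r : ℕ) : Prop := (p < q ∧ q < r) ∨ (q < r ∧ r < p) ∨ (r < p ∧ p < q)

theorem IsPos.three_iff {H : Type*} [Finite H] {f z : Perm H} {m : ℕ} {pos : H → ℕ}
    (hp : IsPos f m pos)
    (a b c : H) (ha : z a = b) (hb : z b = c) (hc : z c = a)
    (hab : a ≠ b) (hbc : b ≠ c) (hca : c ≠ a)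
    (hz : ∀ x, x ≠ a → x ≠ b → x ≠ c → z x = x) :
    Tr (z * f) ↔ Inc (pos a) (pos b) (pos c) := by
  have h1 : pos a ≠ pos b := fun h => hab (hp.inj h)
  have h2 : pos b ≠ pos c := fun h => hbc (hp.inj h)
  have h3 : pos c ≠ pos a := fun h => hca (hp.inj h)
  constructor
  · intro h
    by_contra hn
    have : (pos a < pos c ∧ pos c < pos b) ∨ (pos b < pos a ∧ pos a < pos c) ∨
      (pos c < pos b ∧ pos b < pos a) := by
      unfold Inc at hn; omega
    rcases this with h | h | h
    · exact hp.three_neg a b c hc hz h.1 h.2 ‹_›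
    · exact hp.three_neg b c a ha (fun x h1 h2 h3 => hz x h3 h1 h2) h.1 h.2 ‹_›
    · exact hp.three_neg c a b hb (fun x h1 h2 h3 => hz x h2 h3 h1) h.1 h.2 ‹_›
  · rintro (h | h | h)
    · exact hp.three_pos a b c ha hb hc hz h.1 h.2
    · exact hp.three_pos b c a hb hc ha (fun x h1 h2 h3 => hz x h3 h1 h2) h.1 h.2
    · exact hp.three_pos c a b hc ha hb (fun x h1 h2 h3 => hz x h2 h3 h1) h.1 h.2

theorem ncard_conj {H H' : Type*} (e : H ≃ H') (P : Perm H → Prop) (Q : Perm H' → Prop)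
    (h : ∀ α, P α ↔ Q (e.permCongr α)) : Set.ncard {α | P α} = Set.ncard {α | Q α} :=
  Nat.card_congr (Equiv.subtypeEquiv e.permCongr h)

theorem sameCycle_semiconj {H H' : Type*} (e : H ≃ H') (f : Perm H) (f' : Perm H')
    (h : ∀ x, e (f x) = f' (e x)) (a b : H) : f.SameCycle a b ↔ f'.SameCycle (e a) (e b) := by
  have hf : f' = e.permCongr f := by
    ext x; rw [Equiv.permCongr_apply, h]; simp
  subst hf
  have : ∀ n : ℤ, (e.permCongr f) ^ n = e.permCongr (f ^ n) := fun n =>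
    (map_zpow (Equiv.permCongrHom e) f n).symm
  unfold Perm.SameCycle
  simp [this]

theorem tr_semiconj {H H' : Type*} (e : H ≃ H') (f : Perm H) (f' : Perm H')
    (h : ∀ x, e (f x) = f' (e x)) : Tr f ↔ Tr f' := by
  unfold Tr
  constructor
  · intro ht a b
    have := (sameCycle_semiconj e f f' h _ _).1 (ht (e.symm a) (e.symm b))
    simpa using this
  · exact fun ht a b => (sameCycle_semiconj e f f' h _ _).2 (ht _ _)

theorem isGlu_semiconj {H H' : Type*} (e : H ≃ H') (σ : Perm H) (σ' : Perm H')
    (h : ∀ x, e (σ x) = σ' (e x)) (α : Perm H) : IsGlu σ α ↔ IsGlu σ' (e.permCongr α) := by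
  unfold IsGlu
  apply and_congr
  · constructor
    · intro ha a
      have := ha (e.symm a)
      simp only [Equiv.permCongr_apply, Equiv.symm_apply_apply, this.1, Equiv.apply_symm_apply,
        true_and]
      intro hh
      exact this.2 (by rw [Equiv.eq_symm_apply, hh])
    · intro ha a
      have := ha (e a)
      simpa using this
  · apply tr_semiconj e
    intro x
    simp [h]

theorem cnt_semiconj {H H' : Type*} (e : H ≃ H') (σ : Perm H) (σ' : Perm H')
    (h : ∀ x, e (σ x) = σ' (e x)) : cnt σ = cnt σ' :=
  ncard_conj e _ _ (isGlu_semiconj e σ σ' h)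

/-- half-edges: trivalent nodes `V` and leaves `L` -/
abbrev Hf (V L : Type) := V × Fin 3 ⊕ L

def rot (V L : Type) : Perm (Hf V L) :=
  Equiv.sumCongr (Equiv.prodCongr (Equiv.refl V) (finRotate 3)) (Equiv.refl L)

@[simp] theorem rot_inl {V L : Type} (w : V) (i : Fin 3) :
    rot V L (Sum.inl (w, i)) = Sum.inl (w, finRotate 3 i) := rfl
@[simp] theorem rot_inr {V L : Type} (l : L) : rot V L (Sum.inr l) = Sum.inr l := rfl

section
variable {V L : Type} [DecidableEq V]

/-- apply the permutation `κ` of `Fin 3` at node `v` -/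
def atN (L : Type) (κ : Perm (Fin 3)) (v : V) : Perm (Hf V L) :=
  Equiv.sumCongr (Equiv.prodShear (Equiv.refl V) (fun w => if w = v then κ else 1)) (Equiv.refl L)

def rex (L : Type) (v : V) : Perm (Hf V L) :=
  Equiv.sumCongr (Equiv.prodShear (Equiv.refl V) (fun w => if w = v then 1 else finRotate 3))
    (Equiv.refl L)

@[simp] theorem atN_inl (κ : Perm (Fin 3)) (v w : V) (i : Fin 3) :
    atN L κ v (Sum.inl (w, i)) = Sum.inl (w, if w = v then κ i else i) := by
  by_cases h : w = v <;> simp [atN, h]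
@[simp] theorem atN_inr (κ : Perm (Fin 3)) (v : V) (l : L) : atN L κ v (Sum.inr l) = Sum.inr l := rfl
@[simp] theorem rex_inl (v w : V) (i : Fin 3) :
    rex L v (Sum.inl (w, i)) = Sum.inl (w, if w = v then i else finRotate 3 i) := by
  by_cases h : w = v <;> simp [rex, h]
@[simp] theorem rex_inr (v : V) (l : L) : rex L v (Sum.inr l) = Sum.inr l := rfl

theorem rot_eq (v : V) : rot V L = atN L (finRotate 3) v * rex L v := by
  ext x
  rcases x with ⟨w, i⟩ | l
  · by_cases h : w = v <;> simp [h]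
  · simp

theorem rex_eq (v : V) : rex L v = atN L (finRotate 3)⁻¹ v * rot V L := by
  ext x
  rcases x with ⟨w, i⟩ | l
  · by_cases h : w = v <;> simp [h]
  · simp

theorem atN_three (κ : Perm (Fin 3)) (v : V) (i j k : Fin 3) (h : ∀ t, t = i ∨ t = j ∨ t = k)
    (x : Hf V L) (h1 : x ≠ Sum.inl (v, i)) (h2 : x ≠ Sum.inl (v, j)) (h3 : x ≠ Sum.inl (v, k)) :
    atN L κ v x = x := by
  rcases x with ⟨w, t⟩ | l
  · by_cases hw : w = v
    · subst hw
      rcases h t with rfl | rfl | rfl <;> simp_all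
    · simp [hw]
  · simp

theorem tr_plus [Finite V] [Finite L] {f : Perm (Hf V L)} {m : ℕ} {pos : Hf V L → ℕ}
    (hp : IsPos f m pos) (v : V) : Tr (atN L (finRotate 3) v * f) ↔
      Inc (pos (Sum.inl (v, 0))) (pos (Sum.inl (v, 1))) (pos (Sum.inl (v, 2))) := by
  apply hp.three_iff
  · simp
  · simp
  · simp
  · simp
  · simp
  · simp
  · exact atN_three _ v 0 1 2 (by decide)

theorem tr_minus [Finite V] [Finite L] {f : Perm (Hf V L)} {m : ℕ} {pos : Hf V L → ℕ}
    (hp : IsPos f m pos) (v : V) : Tr (atN L (finRotate 3)⁻¹ v * f) ↔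
      Inc (pos (Sum.inl (v, 0))) (pos (Sum.inl (v, 2))) (pos (Sum.inl (v, 1))) := by
  have h0 : (finRotate 3)⁻¹ 0 = 2 := by decide
  have h2 : (finRotate 3)⁻¹ 2 = 1 := by decide
  have h1 : (finRotate 3)⁻¹ 1 = 0 := by decide
  apply hp.three_iff
  · simp only [atN_inl, if_true, h0]
  · simp only [atN_inl, if_true, h2]
  · simp only [atN_inl, if_true, h1]
  · simp
  · simp
  · simp
  · exact atN_three _ v 0 2 1 (by decide)

open Classical in
/-- the number of intertwined nodes -/
theorem trisection [Fintype V] [Fintype L] [Nonempty V] (α : Perm (Hf V L))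
    (hα : IsGlu (rot V L) α) :
    2 * (Finset.univ.filter fun v : V => IsGlu (rex L v) α).card + Fintype.card L
      = Fintype.card V + 2 := by
  have : Nonempty (Hf V L) := ⟨Sum.inl (Classical.arbitrary V, 0)⟩
  obtain ⟨pos, hp⟩ := exists_pos _ hα.2
  set m := Nat.card (Hf V L) with hm
  have hm1 : Fintype.card (Hf V L) = m := by simp [hm]
  have hm2 : m = Fintype.card V * 3 + Fintype.card L := by rw [← hm1]; simp
  let d : Hf V L → ℕ := fun x => if pos (rot V L x) ≤ pos x then 1 else 0
  let q : Hf V L → ℕ := fun x => if pos x = m - 1 then 1 else 0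
  have hd : ∀ x, d x + d (α x) = 1 + (q x + q (α x)) := by
    intro x
    have h1 : rot V L x = (rot V L * α) (α x) := by simp [(hα.1 x).1]
    have h2 : rot V L (α x) = (rot V L * α) x := by simp
    have h3 : pos x ≠ pos (α x) := fun h => (hα.1 x).2 (hp.inj h).symm
    have h4 := hp.lt x
    have h5 := hp.lt (α x)
    simp only [d, q]
    rw [h2, h1, hp.step, hp.step]
    split_ifs <;> omega
  have hq : ∑ x, q x = 1 := by
    obtain ⟨x, hx⟩ := hp.surj (m - 1) (by have : 0 < m := by
                                                rw [← hm1]; exact Fintype.card_pos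
                                          omega)
    rw [Finset.sum_eq_single x]
    · simp [q, hx]
    · intro y _ hy
      have : pos y ≠ m - 1 := fun h => hy (hp.inj (h.trans hx.symm))
      simp [q, this]
    · simp
  have hs := Finset.sum_congr rfl (fun x (_ : x ∈ (Finset.univ : Finset (Hf V L))) => hd x)
  rw [Finset.sum_add_distrib, Finset.sum_add_distrib, Finset.sum_add_distrib,
    Equiv.sum_comp α d, Equiv.sum_comp α q, hq] at hs
  simp only [Finset.sum_const, Finset.card_univ, hm1, smul_eq_mul, mul_one] at hs
  have hn : ∀ v : V, ∑ i : Fin 3, d (Sum.inl (v, i)) = 1 + if IsGlu (rex L v) α then 1 else 0 := by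
    intro v
    have : IsGlu (rex L v) α ↔
        Inc (pos (Sum.inl (v, 0))) (pos (Sum.inl (v, 2))) (pos (Sum.inl (v, 1))) := by
      rw [← tr_minus hp v, IsGlu, ← mul_assoc, ← rex_eq]
      exact and_iff_right hα.1
    simp only [this]
    have e1 : pos (Sum.inl (v, 0)) ≠ pos (Sum.inl (v, 1)) := fun h => by simpa using hp.inj h
    have e2 : pos (Sum.inl (v, 1)) ≠ pos (Sum.inl (v, 2)) := fun h => by simpa using hp.inj h
    have e3 : pos (Sum.inl (v, 0)) ≠ pos (Sum.inl (v, 2)) := fun h => by simpa using hp.inj h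
    have f0 : finRotate 3 0 = 1 := by decide
    have f1 : finRotate 3 1 = 2 := by decide
    have f2 : finRotate 3 2 = 0 := by decide
    simp only [Fin.sum_univ_three, d, rot_inl, f0, f1, f2]
    by_cases hI : Inc (pos (Sum.inl (v, 0))) (pos (Sum.inl (v, 2))) (pos (Sum.inl (v, 1)))
    · rw [if_pos hI]; unfold Inc at hI; split_ifs <;> omega
    · rw [if_neg hI]; unfold Inc at hI; split_ifs <;> omega
  have hl : ∀ l : L, d (Sum.inr l) = 1 := by simp [d]
  rw [Fintype.sum_sum_type, Fintype.sum_prod_type] at hs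
  simp only [hn, hl, Finset.sum_add_distrib, Finset.sum_const, Finset.card_univ, smul_eq_mul,
    mul_one, Finset.sum_boole, Nat.cast_id] at hs
  omega
end
end OVT

namespace OVT
open Equiv

section
variable {V L : Type} [DecidableEq V]

noncomputable def yy (L : Type) (v : V) : ℕ :=
  Set.ncard {α | IsGlu (rot V L) α ∧ IsGlu (rex L v) α}

theorem yy_eq (v w : V) : yy L v = yy L w := by
  let e : Hf V L ≃ Hf V L :=
    Equiv.sumCongr (Equiv.prodCongr (swap v w) (Equiv.refl _)) (Equiv.refl L)
  apply ncard_conj e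
  intro α
  apply and_congr
  · apply isGlu_semiconj
    rintro (⟨u, i⟩ | l) <;> simp [e]
  · apply isGlu_semiconj
    rintro (⟨u, i⟩ | l)
    · have : swap v w u = w ↔ u = v := by
        rw [Equiv.swap_apply_eq_iff, Equiv.swap_apply_right]
      simp only [rex_inl, e, Equiv.sumCongr_apply, Sum.map_inl, Equiv.prodCongr_apply, Prod.map,
        this, Equiv.refl_apply]
    · simp [e]

theorem two_yy [Finite V] [Finite L] (v : V) : cnt (rex L v) = 2 * yy L v := by
  classical
  have : Finite (Perm (Hf V L)) := inferInstance
  have hne : Nonempty (Hf V L) := ⟨Sum.inl (v, 0)⟩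
  let P : Perm (Hf V L) → Prop := fun α => IsGlu (atN L (finRotate 3)⁻¹ v * rex L v) α ∧
    IsGlu (rex L v) α
  have h1 : yy L v = Set.ncard {α | P α} := by
    apply ncard_conj (atN L (swap 1 2) v)
    intro α
    have hs : ∀ i : Fin 3, swap 1 2 (finRotate 3 i) = (finRotate 3)⁻¹ (swap 1 2 i) := by decide
    apply and_congr
    · apply isGlu_semiconj
      rintro (⟨u, i⟩ | l)
      · by_cases hu : u = v
        · simp only [rot_inl, atN_inl, hu, if_true, Perm.mul_apply, rex_inl, hs]
        · simp only [rot_inl, atN_inl, hu, if_false, Perm.mul_apply, rex_inl]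
      · simp
    · apply isGlu_semiconj
      rintro (⟨u, i⟩ | l)
      · by_cases hu : u = v
        · simp only [atN_inl, hu, if_true, rex_inl]
        · simp only [atN_inl, hu, if_false, rex_inl]
      · simp
  have h2 : {α | IsGlu (rex L v) α} = {α | IsGlu (rot V L) α ∧ IsGlu (rex L v) α} ∪ {α | P α} := by
    ext α
    simp only [Set.mem_union, Set.mem_setOf_eq, P, ← or_and_right]
    constructor
    · intro h
      refine ⟨?_, h⟩
      obtain ⟨pos, hp⟩ := exists_pos _ h.2
      have e1 : pos (Sum.inl (v, 0)) ≠ pos (Sum.inl (v, 1)) := fun h => by simpa using hp.inj h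
      have e2 : pos (Sum.inl (v, 1)) ≠ pos (Sum.inl (v, 2)) := fun h => by simpa using hp.inj h
      have e3 : pos (Sum.inl (v, 0)) ≠ pos (Sum.inl (v, 2)) := fun h => by simpa using hp.inj h
      have p1 := tr_plus hp v
      have p2 := tr_minus hp v
      rw [← mul_assoc] at p1 p2
      rw [← rot_eq] at p1
      have : Tr (rot V L * α) ∨ Tr (atN L (finRotate 3)⁻¹ v * rex L v * α) := by
        rw [p1, p2]; unfold Inc; omega
      rcases this with t | t
      · exact Or.inl ⟨h.1, t⟩
      · exact Or.inr ⟨h.1, t⟩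
    · exact fun h => h.2
  have h3 : Disjoint {α | IsGlu (rot V L) α ∧ IsGlu (rex L v) α} {α | P α} := by
    rw [Set.disjoint_left]
    rintro α ⟨ha, hb⟩ ⟨hc, _⟩
    obtain ⟨pos, hp⟩ := exists_pos _ hb.2
    have p1 := tr_plus hp v
    have p2 := tr_minus hp v
    rw [← mul_assoc] at p1 p2
    rw [← rot_eq] at p1
    have q1 := p1.1 ha.2
    have q2 := p2.1 hc.2
    unfold Inc at q1 q2; omega
  rw [cnt, h2, Set.ncard_union_eq h3 (Set.toFinite _) (Set.toFinite _), ← h1, yy, two_mul]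

theorem sum_yy [Fintype V] [Fintype L] [Nonempty V] :
    2 * ∑ v : V, yy L v + Fintype.card L * cnt (rot V L) = (Fintype.card V + 2) * cnt (rot V L) := by
  classical
  let A : Finset (Perm (Hf V L)) := Finset.univ.filter (IsGlu (rot V L))
  have hA : cnt (rot V L) = A.card := by
    rw [cnt, ← Set.ncard_coe_finset]; congr 1; ext; simp [A]
  have hy : ∀ v : V, yy L v = ∑ α ∈ A, if IsGlu (rex L v) α then 1 else 0 := by
    intro v
    rw [Finset.sum_boole, yy, Nat.cast_id, ← Set.ncard_coe_finset]
    congr 1; ext; simp [A]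
  have hsum : ∑ v : V, yy L v = ∑ α ∈ A, (Finset.univ.filter fun v : V => IsGlu (rex L v) α).card := by
    simp_rw [hy]
    rw [Finset.sum_comm]
    simp
  have : ∑ α ∈ A, (2 * (Finset.univ.filter fun v : V => IsGlu (rex L v) α).card + Fintype.card L)
      = ∑ α ∈ A, (Fintype.card V + 2) := by
    apply Finset.sum_congr rfl
    intro α hα
    have := trisection α (Finset.mem_filter.1 hα).2
    convert this
  rw [Finset.sum_add_distrib, ← Finset.mul_sum, ← hsum] at this
  simp only [Finset.sum_const, smul_eq_mul] at this
  rw [hA]; linarith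
end

theorem tri_rec {V L : Type} [Fintype V] [Fintype L] :
    (Fintype.card V + 1) * cnt (rot V (L ⊕ Fin 3)) + Fintype.card L * cnt (rot (Option V) L)
      = (Fintype.card V + 3) * cnt (rot (Option V) L) := by
  classical
  have h1 := sum_yy (V := Option V) (L := L)
  have h2 : cnt (rot V (L ⊕ Fin 3)) = cnt (rex L (none : Option V)) := by
    let e : Hf V (L ⊕ Fin 3) ≃ Hf (Option V) L :=
      { toFun := fun x => match x with
          | Sum.inl (w, i) => Sum.inl (some w, i)
          | Sum.inr (Sum.inl l) => Sum.inr l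
          | Sum.inr (Sum.inr i) => Sum.inl (none, i)
        invFun := fun x => match x with
          | Sum.inl (some w, i) => Sum.inl (w, i)
          | Sum.inl (none, i) => Sum.inr (Sum.inr i)
          | Sum.inr l => Sum.inr (Sum.inl l)
        left_inv := by rintro (⟨w, i⟩ | l | i) <;> rfl
        right_inv := by rintro (⟨_ | w, i⟩ | l) <;> rfl }
    apply cnt_semiconj e
    rintro (⟨w, i⟩ | l | i)
    · have : e (Sum.inl (w, i)) = Sum.inl (some w, i) := rfl
      rw [this]
      simp only [rot_inl, rex_inl, reduceCtorEq, if_false]; rfl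
    · rfl
    · have : e (Sum.inr (Sum.inr i)) = Sum.inl (none, i) := rfl
      simp only [rot_inr, this, rex_inl, if_true]
  have h3 := two_yy (L := L) (none : Option V)
  rw [Finset.sum_congr rfl (fun v _ => yy_eq v (none : Option V))] at h1
  simp only [Finset.sum_const, Finset.card_univ, Fintype.card_option, smul_eq_mul] at h1
  rw [h2, h3]
  linarith
end OVT

namespace OVT
open Equiv

theorem sameCycle_map {A B : Type*} [Finite A] (f : Perm A) (g : Perm B) (p : A → B)
    (h : ∀ a, g.SameCycle (p a) (p (f a))) (a b : A) (hab : f.SameCycle a b) :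
    g.SameCycle (p a) (p b) := by
  obtain ⟨n, _, hn⟩ := hab.exists_pow_eq'
  subst hn
  clear hab
  clear * - h
  induction n with
  | zero => exact Perm.SameCycle.refl _ _
  | succ n ih =>
    refine ih.trans ?_
    rw [pow_succ', Perm.mul_apply]
    exact h _

def sig4 : Perm (Fin 4) := ⟨![0, 2, 3, 1], ![0, 3, 1, 2], by decide, by decide⟩
def bet4 : Perm (Fin 4) := ⟨![1, 0, 3, 2], ![1, 0, 3, 2], by decide, by decide⟩

section
variable {H : Type} [DecidableEq H]

def insP (α : Perm H) (h : H) : Perm (H ⊕ Fin 4) :=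
  swap (Sum.inl (α h)) (Sum.inr 2) * Equiv.sumCongr α bet4 * swap (Sum.inl (α h)) (Sum.inr 2)

variable {α : Perm H} {h : H}

theorem insP_0 : insP α h (Sum.inr 0) = Sum.inr 1 := by
  have : bet4 0 = 1 := rfl
  simp [insP, swap_apply_def, this]
theorem insP_1 : insP α h (Sum.inr 1) = Sum.inr 0 := by
  have : bet4 1 = 0 := rfl
  simp [insP, swap_apply_def, this]
theorem insP_2 (ha : ∀ a, α (α a) = a ∧ α a ≠ a) : insP α h (Sum.inr 2) = Sum.inl h := by
  have := (ha h).2.symm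
  simp [insP, swap_apply_def, ha, this]
theorem insP_3 : insP α h (Sum.inr 3) = Sum.inl (α h) := by
  have : bet4 3 = 2 := rfl
  simp [insP, swap_apply_def, this]
theorem insP_h (ha : ∀ a, α (α a) = a ∧ α a ≠ a) : insP α h (Sum.inl h) = Sum.inr 2 := by
  have := (ha h).2.symm
  simp [insP, swap_apply_def, this]
theorem insP_ah : insP α h (Sum.inl (α h)) = Sum.inr 3 := by
  have : bet4 2 = 3 := rfl
  simp [insP, swap_apply_def, this]
theorem insP_x {x : H} (h1 : x ≠ h) (h2 : x ≠ α h) : insP α h (Sum.inl x) = Sum.inl (α x) := by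
  simp [insP, swap_apply_def, h1, h2]

theorem insP_glu [Finite H] (σ : Perm H) (ha : IsGlu σ α) :
    IsGlu (Equiv.sumCongr σ sig4) (insP α h) := by
  obtain ⟨ha, ht⟩ := ha
  constructor
  · rintro (x | i)
    · by_cases h1 : x = h
      · subst h1; rw [insP_h ha, insP_2 ha]; simp
      by_cases h2 : x = α h
      · subst h2; rw [insP_ah, insP_3]; simp
      rw [insP_x h1 h2, insP_x]
      · simp [ha]
      · rintro rfl; exact h2 (ha x).1.symm
      · intro h3; exact h1 (α.injective h3)
    · fin_cases i
      · simp [insP_0, insP_1]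
      · simp [insP_0, insP_1]
      · simp [insP_2 ha, insP_h ha]
      · simp [insP_3, insP_ah]
  · set f : Perm (H ⊕ Fin 4) := Equiv.sumCongr σ sig4 * insP α h with hf
    have f0 : f (Sum.inr 0) = Sum.inr 2 := by simp [hf, insP_0]; rfl
    have f1 : f (Sum.inr 1) = Sum.inr 0 := by simp [hf, insP_1]; rfl
    have f2 : f (Sum.inr 2) = Sum.inl (σ h) := by simp [hf, insP_2 ha]
    have f3 : f (Sum.inr 3) = Sum.inl (σ (α h)) := by simp [hf, insP_3]
    have fh : f (Sum.inl h) = Sum.inr 3 := by simp [hf, insP_h ha]; rfl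
    have fah : f (Sum.inl (α h)) = Sum.inr 1 := by simp [hf, insP_ah]; rfl
    have st : ∀ x y, f x = y → f.SameCycle x y := by
      rintro x _ rfl
      exact Perm.sameCycle_apply_right.2 (Perm.SameCycle.refl _ _)
    have c1 : f.SameCycle (Sum.inl (α h)) (Sum.inr 0) := (st _ _ fah).trans (st _ _ f1)
    have c2 : f.SameCycle (Sum.inl (α h)) (Sum.inr 2) := c1.trans (st _ _ f0)
    have key : ∀ x y, f.SameCycle (Sum.inl x) (Sum.inl y) := by
      intro x y
      apply sameCycle_map (σ * α) f Sum.inl _ x y (ht x y)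
      intro x
      by_cases h1 : x = h
      · subst h1; exact (st _ _ fh).trans (st _ _ f3)
      by_cases h2 : x = α h
      · subst h2
        refine c2.trans ((st _ _ f2).trans ?_)
        simp [ha]
        exact Perm.SameCycle.refl _ _
      apply st
      simp [hf, insP_x h1 h2]
    have all : ∀ z, f.SameCycle (Sum.inl h) z := by
      rintro (x | i)
      · exact key _ _
      · fin_cases i
        · exact (key _ _).trans c1
        · exact (key _ _).trans (st _ _ fah)
        · exact (key _ _).trans c2
        · exact st _ _ fh
    exact fun x y => (all x).symm.trans (all y)

theorem tr_of_insP [Finite H] (σ : Perm H) (ha : ∀ a, α (α a) = a ∧ α a ≠ a)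
    (ht : Tr (Equiv.sumCongr σ sig4 * insP α h)) : Tr (σ * α) := by
  set f : Perm (H ⊕ Fin 4) := Equiv.sumCongr σ sig4 * insP α h with hf
  have f0 : f (Sum.inr 0) = Sum.inr 2 := by simp [hf, insP_0]; rfl
  have f1 : f (Sum.inr 1) = Sum.inr 0 := by simp [hf, insP_1]; rfl
  have f2 : f (Sum.inr 2) = Sum.inl (σ h) := by simp [hf, insP_2 ha]
  have f3 : f (Sum.inr 3) = Sum.inl (σ (α h)) := by simp [hf, insP_3]
  have fh : f (Sum.inl h) = Sum.inr 3 := by simp [hf, insP_h ha]; rfl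
  have fah : f (Sum.inl (α h)) = Sum.inr 1 := by simp [hf, insP_ah]; rfl
  let p : H ⊕ Fin 4 → H := Sum.elim id ![α h, α h, α h, h]
  intro x y
  have := sameCycle_map f (σ * α) p ?_ _ _ (ht (Sum.inl x) (Sum.inl y))
  · simpa [p] using this
  have st : ∀ x, (σ * α).SameCycle x (σ (α x)) := by
    intro x
    exact Perm.sameCycle_apply_right.2 (Perm.SameCycle.refl _ _)
  rintro (x | i)
  · by_cases h1 : x = h
    · subst h1; rw [fh]; exact Perm.SameCycle.refl _ _
    by_cases h2 : x = α h
    · subst h2; rw [fah]; exact Perm.SameCycle.refl _ _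
    have : f (Sum.inl x) = Sum.inl (σ (α x)) := by simp [hf, insP_x h1 h2]
    rw [this]; exact st x
  · fin_cases i
    · simp only [Fin.zero_eta, f0]; exact Perm.SameCycle.refl _ _
    · simp only [Fin.mk_one, f1]; exact Perm.SameCycle.refl _ _
    · simp only [Fin.reduceFinMk, f2]
      have := st (α h)
      rw [(ha h).1] at this; exact this
    · simp only [Fin.reduceFinMk, f3]; exact st h

theorem exists_insP [Finite H] (σ : Perm H) (γ : Perm (H ⊕ Fin 4))
    (hγ : IsGlu (Equiv.sumCongr σ sig4) γ) (h0 : γ (Sum.inr 0) = Sum.inr 1) :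
    ∃ α h, IsGlu σ α ∧ insP α h = γ := by
  obtain ⟨ha, ht⟩ := hγ
  have h1 : γ (Sum.inr 1) = Sum.inr 0 := by rw [← h0, (ha _).1]
  have hinj := γ.injective
  have n23 : γ (Sum.inr 2) ≠ Sum.inr 3 := by
    intro h2
    have h3 : γ (Sum.inr 3) = Sum.inr 2 := by rw [← h2, (ha _).1]
    have hfix : (Equiv.sumCongr σ sig4 * γ) (Sum.inr 3) = Sum.inr 3 := by
      simp [h3]; rfl
    obtain ⟨n, hn⟩ := ht (Sum.inr 3) (Sum.inr 0)
    rw [Perm.zpow_apply_eq_self_of_apply_eq_self hfix] at hn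
    simp at hn
  obtain ⟨u, hu⟩ : ∃ u, γ (Sum.inr 2) = Sum.inl u := by
    rcases hx : γ (Sum.inr 2) with u | i
    · exact ⟨u, rfl⟩
    · exfalso
      fin_cases i
      · exact absurd (hinj (hx.trans h1.symm)) (by simp)
      · exact absurd (hinj (hx.trans h0.symm)) (by simp)
      · exact (ha _).2 hx
      · exact n23 hx
  obtain ⟨v, hv⟩ : ∃ v, γ (Sum.inr 3) = Sum.inl v := by
    rcases hx : γ (Sum.inr 3) with u | i
    · exact ⟨u, rfl⟩
    · exfalso
      fin_cases i
      · exact absurd (hinj (hx.trans h1.symm)) (by simp)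
      · exact absurd (hinj (hx.trans h0.symm)) (by simp)
      · apply n23
        have := (ha (Sum.inr 3)).1
        rw [hx] at this; exact this
      · exact (ha _).2 hx
  have hu' : γ (Sum.inl u) = Sum.inr 2 := by rw [← hu, (ha _).1]
  have hv' : γ (Sum.inl v) = Sum.inr 3 := by rw [← hv, (ha _).1]
  have huv : u ≠ v := by rintro rfl; rw [hu'] at hv'; simp at hv'
  set s : Perm (H ⊕ Fin 4) := swap (Sum.inl v) (Sum.inr 2) with hs
  set δ := s * γ * s with hδ
  have hss : s * s = 1 := swap_mul_self _ _
  have d0 : δ (Sum.inr 0) = Sum.inr 1 := by simp [hδ, hs, swap_apply_def, h0]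
  have d1 : δ (Sum.inr 1) = Sum.inr 0 := by simp [hδ, hs, swap_apply_def, h1]
  have d2 : δ (Sum.inr 2) = Sum.inr 3 := by simp [hδ, hs, swap_apply_def, hv']
  have d3 : δ (Sum.inr 3) = Sum.inr 2 := by simp [hδ, hs, swap_apply_def, hv]
  have du : δ (Sum.inl u) = Sum.inl v := by simp [hδ, hs, swap_apply_def, hu', huv]
  have di : ∀ a, δ (δ a) = a ∧ δ a ≠ a := by
    intro a
    have e1 : ∀ x, s (s x) = x := fun x => by
      rw [← Perm.mul_apply, hss]; rfl
    constructor
    · simp [hδ, e1, ha]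
    · intro hh
      apply (ha (s a)).2
      apply s.injective
      rw [e1]; exact hh
  have hm : Set.MapsTo δ (Set.range Sum.inl) (Set.range Sum.inl) := by
    rintro _ ⟨x, rfl⟩
    rcases hx : δ (Sum.inl x) with y | i
    · exact ⟨y, rfl⟩
    · exfalso
      have : δ (Sum.inr i) = Sum.inl x := by rw [← hx, (di _).1]
      fin_cases i
      · exact absurd (d0.symm.trans this) (by simp)
      · exact absurd (d1.symm.trans this) (by simp)
      · exact absurd (d2.symm.trans this) (by simp)
      · exact absurd (d3.symm.trans this) (by simp)
  obtain ⟨⟨α, β⟩, hab⟩ := Perm.mem_sumCongrHom_range_of_perm_mapsTo_inl hm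
  have hab' : Equiv.sumCongr α β = δ := hab
  have hα : ∀ x, δ (Sum.inl x) = Sum.inl (α x) := fun x => by rw [← hab']; rfl
  have hβ : ∀ i, δ (Sum.inr i) = Sum.inr (β i) := fun x => by rw [← hab']; rfl
  have hβ' : β = bet4 := by
    ext i
    have : (Sum.inr (β i) : H ⊕ Fin 4) = Sum.inr (bet4 i) := by
      rw [← hβ]
      fin_cases i
      · exact d0
      · exact d1
      · exact d2
      · exact d3
    rw [Sum.inr.inj this]
  have hαu : α u = v := Sum.inl.inj ((hα u).symm.trans du)
  have hfi : ∀ a, α (α a) = a ∧ α a ≠ a := by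
    intro a
    have := di (Sum.inl a)
    rw [hα, hα] at this
    simpa using this
  have hins : insP α u = γ := by
    rw [insP, hαu, ← hβ', hab', hδ, ← hs]
    have : s * (s * γ * s) * s = (s * s) * γ * (s * s) := by group
    rw [this, hss]; simp
  exact ⟨α, u, ⟨hfi, tr_of_insP (h := u) σ hfi (by rw [hins]; exact ht)⟩, hins⟩

theorem remy_bij [Fintype H] (σ : Perm H) :
    Set.ncard {γ | IsGlu (Equiv.sumCongr σ sig4) γ ∧ γ (Sum.inr 0) = Sum.inr 1}
      = cnt σ * Fintype.card H := by
  have : {γ | IsGlu (Equiv.sumCongr σ sig4) γ ∧ γ (Sum.inr 0) = Sum.inr 1} =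
      (fun p : Perm H × H => insP p.1 p.2) '' ({α | IsGlu σ α} ×ˢ (Set.univ : Set H)) := by
    ext γ
    constructor
    · rintro ⟨h1, h2⟩
      obtain ⟨α, h, ha, rfl⟩ := exists_insP σ γ h1 h2
      exact ⟨(α, h), by simpa using ha, rfl⟩
    · rintro ⟨⟨α, h⟩, ha, rfl⟩
      exact ⟨insP_glu σ (by simpa using ha), insP_0⟩
  rw [this, Set.InjOn.ncard_image, Set.ncard_prod, Set.ncard_univ, cnt, Nat.card_eq_fintype_card]
  rintro ⟨α, h⟩ ha ⟨α', h'⟩ ha' he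
  replace ha : IsGlu σ α := by simpa using ha
  replace ha' : IsGlu σ α' := by simpa using ha'
  simp only at he
  have hh : h = h' := by
    have := congrArg (fun p => p (Sum.inr 2)) he
    simp only [insP_2 ha.1, insP_2 ha'.1] at this
    exact Sum.inl.inj this
  subst hh
  have hh : α h = α' h := by
    have := congrArg (fun p => p (Sum.inr 3)) he
    simp only [insP_3] at this
    exact Sum.inl.inj this
  congr 1
  ext x
  by_cases h1 : x = h
  · rw [h1, hh]
  by_cases h2 : x = α h
  · have e1 : α x = h := by rw [h2, (ha.1 _).1]
    have e2 : α' x = h := by rw [h2, hh, (ha'.1 _).1]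
    rw [e1, e2]
  have := congrArg (fun p => p (Sum.inl x)) he
  simp only [insP_x h1 h2, insP_x h1 (hh ▸ h2)] at this
  exact Sum.inl.inj this
end

theorem remy_rec {V L : Type} [Fintype V] [Fintype L] :
    cnt (rot (Option V) (Option L)) =
      3 * (Fintype.card V + 1) * (3 * Fintype.card V + Fintype.card L) * cnt (rot V L) := by
  classical
  let A : Finset (Perm (Hf (Option V) (Option L))) := Finset.univ.filter (IsGlu (rot _ _))
  have hA : cnt (rot (Option V) (Option L)) = A.card := by
    rw [cnt, ← Set.ncard_coe_finset]; congr 1; ext; simp [A]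
  let B : Option V × Fin 3 → Set (Perm (Hf (Option V) (Option L))) := fun q =>
    {α | IsGlu (rot _ _) α ∧ α (Sum.inr none) = Sum.inl q}
  have hB0 : Set.ncard (B (none, 0)) = cnt (rot V L) * (3 * Fintype.card V + Fintype.card L) := by
    have h1 := remy_bij (rot V L)
    have h2 : Fintype.card (Hf V L) = 3 * Fintype.card V + Fintype.card L := by
      simp [mul_comm]
    rw [← h2, ← h1]
    let e : Hf (Option V) (Option L) ≃ Hf V L ⊕ Fin 4 :=
      { toFun := fun x => match x with
          | Sum.inl (some w, i) => Sum.inl (Sum.inl (w, i))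
          | Sum.inl (none, i) => Sum.inr i.succ
          | Sum.inr (some l) => Sum.inl (Sum.inr l)
          | Sum.inr none => Sum.inr 0
        invFun := fun x => match x with
          | Sum.inl (Sum.inl (w, i)) => Sum.inl (some w, i)
          | Sum.inl (Sum.inr l) => Sum.inr (some l)
          | Sum.inr i => Fin.cases (Sum.inr none) (fun j => Sum.inl (none, j)) i
        left_inv := by rintro (⟨_ | w, i⟩ | _ | l) <;> rfl
        right_inv := by
          rintro ((⟨w, i⟩ | l) | i)
          · rfl
          · rfl
          · refine Fin.cases ?_ (fun j => ?_) i <;> rfl }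
    have hr : ∀ x, e (rot _ _ x) = Equiv.sumCongr (rot V L) sig4 (e x) := by
      rintro (⟨_ | w, i⟩ | _ | l)
      · fin_cases i <;> rfl
      · rfl
      · rfl
      · rfl
    apply ncard_conj e
    intro α
    apply and_congr
    · exact isGlu_semiconj e _ _ hr α
    · rw [Equiv.permCongr_apply]
      have : e.symm (Sum.inr 0) = Sum.inr none := rfl
      rw [this]
      have : Sum.inr 1 = e (Sum.inl (none, 0)) := rfl
      rw [this, e.apply_eq_iff_eq]
  have hB : ∀ q, Set.ncard (B q) = Set.ncard (B (none, 0)) := by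
    rintro ⟨w, i⟩
    let e : Hf (Option V) (Option L) ≃ Hf (Option V) (Option L) :=
      Equiv.sumCongr (Equiv.prodCongr (swap w none) (finRotate 3 ^ (-(i : ℤ)))) (Equiv.refl _)
    apply ncard_conj e
    intro α
    apply and_congr
    · apply isGlu_semiconj e
      rintro (⟨w, i⟩ | l)
      · have : ∀ (n : ℤ) j, (finRotate 3 ^ n) (finRotate 3 j) = finRotate 3 ((finRotate 3 ^ n) j) :=
          fun n j => by
            rw [← Perm.mul_apply, ← Perm.mul_apply, mul_zpow_self, mul_self_zpow]
        simp only [rot_inl, e, Equiv.sumCongr_apply, Sum.map_inl, Equiv.prodCongr_apply, Prod.map,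
          this]
      · rfl
    · rw [Equiv.permCongr_apply]
      have : e.symm (Sum.inr none) = Sum.inr none := rfl
      rw [this]
      have : Sum.inl (none, 0) = e (Sum.inl (w, i)) := by
        have : ∀ i : Fin 3, (finRotate 3 ^ (-(i : ℤ))) i = 0 := by decide
        simp only [e, Equiv.sumCongr_apply, Sum.map_inl, Equiv.prodCongr_apply, Prod.map, this,
          swap_apply_left]
      rw [this, e.apply_eq_iff_eq]
  have hfix : ∀ α ∈ A, ∃ q, α (Sum.inr none) = Sum.inl q := by
    intro α hα
    have hα := (Finset.mem_filter.1 hα).2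
    rcases hx : α (Sum.inr none) with q | l
    · exact ⟨q, rfl⟩
    · exfalso
      have h1 : α (Sum.inr l) = Sum.inr none := by rw [← hx, (hα.1 _).1]
      have key := sameCycle_map (rot _ _ * α) (1 : Perm (Fin 2))
        (fun x => if x = Sum.inr none ∨ x = Sum.inr l then 0 else 1) ?_ _ _
        (hα.2 (Sum.inr none) (Sum.inl (none, 0)))
      · simp at key
      · intro a
        simp only [Perm.sameCycle_one]
        set f : Perm (Hf (Option V) (Option L)) := rot _ _ * α with hf
        have e1 : f (Sum.inr none) = Sum.inr l := by simp [hf, hx]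
        have e2 : f (Sum.inr l) = Sum.inr none := by simp [hf, h1]
        have : (a = Sum.inr none ∨ a = Sum.inr l) ↔ (f a = Sum.inr none ∨ f a = Sum.inr l) := by
          constructor
          · rintro (rfl | rfl)
            · exact Or.inr e1
            · exact Or.inl e2
          · rintro (h | h)
            · exact Or.inr (f.injective (h.trans e2.symm))
            · exact Or.inl (f.injective (h.trans e1.symm))
        simp only [this]
  have hcard : A.card = ∑ q, Set.ncard (B q) := by
    have : ∀ q, Set.ncard (B q) = (A.filter fun α => α (Sum.inr none) = Sum.inl q).card := by
      intro q
      rw [← Set.ncard_coe_finset]; congr 1; ext; simp [A, B]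
    simp_rw [this]
    rw [← Finset.card_biUnion]
    · congr 1
      ext α
      simp only [Finset.mem_biUnion, Finset.mem_filter, Finset.mem_univ, true_and]
      constructor
      · intro h
        obtain ⟨q, hq⟩ := hfix α h
        exact ⟨q, h, hq⟩
      · rintro ⟨q, h, _⟩; exact h
    · intro q _ q' _ hqq
      rw [Function.onFun, Finset.disjoint_left]
      intro α h1 h2
      apply hqq
      have h1 := (Finset.mem_filter.1 h1).2
      have h2 := (Finset.mem_filter.1 h2).2
      exact Sum.inl.inj (h1.symm.trans h2)
  rw [hA, hcard, Finset.sum_congr rfl (fun q _ => hB q)]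
  simp only [Finset.sum_const, Finset.card_univ, Fintype.card_prod, Fintype.card_option,
    Fintype.card_fin, smul_eq_mul, hB0]
  ring
end OVT

namespace OVT
open Equiv

theorem cnt_rot_congr {V L V' L' : Type} (a : V ≃ V') (b : L ≃ L') :
    cnt (rot V L) = cnt (rot V' L') := by
  apply cnt_semiconj (Equiv.sumCongr (Equiv.prodCongr a (Equiv.refl _)) b)
  rintro (⟨w, i⟩ | l)
  · simp only [rot_inl, Equiv.sumCongr_apply, Sum.map_inl, Equiv.prodCongr_apply, Prod.map,
      Equiv.refl_apply]
  · rfl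

noncomputable def xx (t l : ℕ) : ℕ := cnt (rot (Fin t) (Fin l))

theorem xx_tri (t l : ℕ) : (t + 1) * xx t (l + 3) + l * xx (t + 1) l = (t + 3) * xx (t + 1) l := by
  have h := tri_rec (V := Fin t) (L := Fin l)
  rw [cnt_rot_congr (Equiv.refl _) (finSumFinEquiv (m := l) (n := 3)),
    cnt_rot_congr (finSuccEquiv t).symm (Equiv.refl (Fin l))] at h
  simpa [xx] using h

theorem xx_remy (t l : ℕ) : xx (t + 1) (l + 1) = 3 * (t + 1) * (3 * t + l) * xx t l := by
  have h := remy_rec (V := Fin t) (L := Fin l)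
  rw [cnt_rot_congr (finSuccEquiv t).symm (finSuccEquiv l).symm] at h
  simpa [xx] using h

theorem xx_base : xx 0 2 = 1 := by
  unfold xx
  let e : Fin 2 ≃ Hf (Fin 0) (Fin 2) := (Equiv.emptySum (Fin 0 × Fin 3) (Fin 2)).symm
  rw [← cnt_semiconj e 1 _ (by intro x; rfl)]
  have : {α : Perm (Fin 2) | IsGlu 1 α} = {swap 0 1} := by
    ext α
    simp only [Set.mem_singleton_iff]
    constructor
    · rintro ⟨h, -⟩
      have h0 := (h 0).2
      clear h; revert h0; revert α; decide
    · rintro rfl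
      refine ⟨by decide, ?_⟩
      intro a b
      have : ∀ a b : Fin 2, a = b ∨ (1 * swap (0 : Fin 2) 1) a = b := by decide
      rcases this a b with h | h
      · exact ⟨0, by simpa using h⟩
      · exact ⟨1, by simpa using h⟩
  rw [cnt, this, Set.ncard_singleton]

theorem xx_step (n : ℕ) : (n + 6) * xx (n + 4) 0 =
    (n + 4) * (3 * (n + 3) * (3 * (n + 2) + 2) * (3 * (n + 2) * (3 * (n + 1) + 1) *
      (3 * (n + 1) * (3 * n) * xx n 0))) := by
  have h1 := xx_tri (n + 3) 0
  have h2 := xx_remy (n + 2) 2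
  have h3 := xx_remy (n + 1) 1
  have h4 := xx_remy n 0
  simp only [zero_mul, add_zero, zero_add, Nat.reduceAdd, add_assoc] at h1 h2 h3 h4
  rw [h2, h3, h4] at h1
  exact h1.symm

open Nat in
theorem xx_closed (k : ℕ) : xx (4 * k + 2) 0 * ((12 * k + 6) * 12 ^ (k + 1) * (k + 1)! * (3 * k + 1)!)
    = 2 * (6 * k + 3)! * (3 ^ (4 * k + 2) * (4 * k + 2)!) := by
  induction k with
  | zero =>
    have h1 := xx_tri 1 0
    have h2 := xx_remy 0 2
    simp [xx_base] at h1 h2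
    simp [factorial]
    omega
  | succ k ih =>
    have hs := xx_step (4 * k + 2)
    have e1 : 4 * (k + 1) + 2 = 4 * k + 2 + 4 := by ring
    have f1 : (6 * (k + 1) + 3)! = (6*k+9)*((6*k+8)*((6*k+7)*((6*k+6)*((6*k+5)*((6*k+4)*(6*k+3)!))))) := by
      rw [show 6 * (k + 1) + 3 = 6 * k + 3 + 1 + 1 + 1 + 1 + 1 + 1 by ring]
      simp only [Nat.factorial_succ]
    have f2 : (4 * k + 2 + 4)! = (4*k+6)*((4*k+5)*((4*k+4)*((4*k+3)*(4*k+2)!))) := by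
      rw [show 4 * k + 2 + 4 = 4 * k + 2 + 1 + 1 + 1 + 1 by ring]
      simp only [Nat.factorial_succ]
    have f3 : (3 * (k + 1) + 1)! = (3*k+4)*((3*k+3)*((3*k+2)*(3*k+1)!)) := by
      rw [show 3 * (k + 1) + 1 = 3 * k + 1 + 1 + 1 + 1 by ring]
      simp only [Nat.factorial_succ]
    have f4 : (k + 1 + 1)! = (k + 2) * (k + 1)! := by
      rw [Nat.factorial_succ]
    rw [e1, f1, f2, f3, f4]
    generalize (6*k+3)! = A at *
    generalize (4*k+2)! = B at *
    generalize (3*k+1)! = C at *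
    generalize (k+1)! = D at *
    generalize xx (4*k+2) 0 = x at *
    generalize xx (4*k+2+4) 0 = y at *
    have hpos : 0 < 4 * k + 2 + 6 := by omega
    apply Nat.eq_of_mul_eq_mul_left hpos
    have p1 : 12 ^ (k + 1 + 1) = 12 * 12 ^ (k + 1) := by ring
    have p2 : 3 ^ (4 * k + 2 + 4) = 81 * 3 ^ (4 * k + 2) := by ring
    rw [p1, p2]
    generalize 12 ^ (k + 1) = P at *
    generalize 3 ^ (4 * k + 2) = Q at *
    zify at *
    linear_combination ((12 * (k + 1) + 6) * (12 * P) * ((k + 2) * D) * ((3*k+4)*((3*k+3)*((3*k+2)*C)))) * hs +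
      (4*k+8) * (81 * (4*k+6)*(4*k+5)*(4*k+4)*(4*k+3)) * ((6*k+9)*(6*k+8)*(6*k+7)*(6*k+6)*(6*k+5)*(6*k+4)) * ih
end OVT

namespace OVT
open Equiv

theorem count_partial {ι β : Type*} [Fintype ι] [Fintype β] [DecidableEq ι] [DecidableEq β] (K : ℕ)
    (hβ : 1 ≤ Fintype.card β) :
    ((Finset.univ : Finset (ι → Option β)).filter
      (fun g => (Finset.univ.filter fun i => g i ≠ none).card ≤ K)).card
      ≤ 2 ^ Fintype.card ι * Fintype.card β ^ K := by
  classical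
  set A := (Finset.univ : Finset (ι → Option β)).filter
      (fun g => (Finset.univ.filter fun i => g i ≠ none).card ≤ K) with hA
  have h := Finset.card_eq_sum_card_fiberwise (s := A) (t := (Finset.univ : Finset (Finset ι)))
    (f := fun g => Finset.univ.filter fun i => g i ≠ none) (by intro x _; simp)
  rw [h]
  have : ∀ S ∈ (Finset.univ : Finset (Finset ι)),
      (A.filter fun g => (Finset.univ.filter fun i => g i ≠ none) = S).card
        ≤ Fintype.card β ^ K := by
    intro S _
    by_cases hS : S.card ≤ K
    · refine le_trans (Finset.card_le_card (t := Fintype.piFinset (fun i => if i ∈ S then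
        (Finset.univ : Finset β).image some else {none})) ?_) ?_
      · intro g hg
        rw [Finset.mem_filter] at hg
        rw [Fintype.mem_piFinset]
        intro i
        rw [← hg.2]
        cases hgi : g i <;> simp [hgi]
      · rw [Fintype.card_piFinset]
        have : ∀ i, (if i ∈ S then (Finset.univ : Finset β).image some else {none}).card
            = if i ∈ S then Fintype.card β else 1 := by
          intro i
          split_ifs
          · rw [Finset.card_image_of_injective _ (Option.some_injective β), Finset.card_univ]
          · simp
        simp only [this, Finset.prod_ite_mem, Finset.univ_inter, Finset.prod_const]
        exact Nat.pow_le_pow_right hβ hS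
    · rw [Finset.card_eq_zero.2]
      · exact Nat.zero_le _
      · rw [Finset.eq_empty_iff_forall_notMem]
        intro g hg
        rw [Finset.mem_filter, hA, Finset.mem_filter] at hg
        rw [hg.2] at hg
        exact hS hg.1.2
  refine le_trans (Finset.sum_le_sum this) ?_
  simp

noncomputable def rep {Y : Type*} (t : Perm Y) (y : Y) : Y :=
  (Quotient.mk (Perm.SameCycle.setoid t) y).out

theorem rep_same {Y : Type*} (t : Perm Y) (y : Y) : t.SameCycle (rep t y) y :=
  Quotient.exact (s := Perm.SameCycle.setoid t) (Quotient.out_eq _)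

theorem rep_eq {Y : Type*} (t : Perm Y) {a b : Y} (h : t.SameCycle a b) : rep t a = rep t b := by
  unfold rep
  rw [Quotient.sound (s := Perm.SameCycle.setoid t) h]

theorem rep_rep {Y : Type*} (t : Perm Y) (y : Y) : rep t (rep t y) = rep t y :=
  rep_eq t (rep_same t y)

theorem exists_pow_lt {Y : Type*} {t : Perm Y} {p : ℕ} (hp : 0 < p) (ht : t ^ p = 1) {a b : Y}
    (h : t.SameCycle a b) : ∃ j < p, (t ^ j) a = b := by
  obtain ⟨n, hn⟩ := h
  refine ⟨(n % p).toNat, ?_, ?_⟩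
  · have := Int.emod_lt_of_pos n (by exact_mod_cast hp : (0 : ℤ) < p)
    have := Int.emod_nonneg n (by exact_mod_cast hp.ne' : (p : ℤ) ≠ 0)
    omega
  · have h0 := Int.emod_nonneg n (by exact_mod_cast hp.ne' : (p : ℤ) ≠ 0)
    rw [← hn, ← zpow_natCast, Int.toNat_of_nonneg h0]
    conv_rhs => rw [← Int.mul_ediv_add_emod n p, zpow_add, zpow_mul]
    simp [ht]

theorem fix_of_pow {Y : Type*} {t : Perm Y} {p j : ℕ} (hp : p.Prime) (ht : t ^ p = 1) {y : Y}
    (hj : ¬ p ∣ j) (h : (t ^ j) y = y) : t y = y := by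
  have h1 : Function.IsPeriodicPt t p y := by
    rw [Function.IsPeriodicPt, ← Perm.coe_pow, ht]; rfl
  have h2 : Function.IsPeriodicPt t j y := by
    rw [Function.IsPeriodicPt, ← Perm.coe_pow]; exact h
  have := h1.gcd h2
  rw [(Nat.Prime.coprime_iff_not_dvd hp).2 hj] at this
  exact this

section
variable {V : Type} 

def r3 (V : Type) : Perm (V × Fin 3) := Equiv.prodCongr (Equiv.refl V) (finRotate 3)

theorem comm_r3 {σ : Perm (V × Fin 3)} (h : σ * r3 V = r3 V * σ) (v : V) (i : Fin 3) :
    σ (v, i) = ((σ (v, 0)).1, (σ (v, 0)).2 + i) := by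
  have hc : ∀ x, σ (r3 V x) = r3 V (σ x) := fun x => by
    rw [← Perm.mul_apply, h]; rfl
  have f0 : finRotate 3 0 = 1 := by decide
  have f1 : finRotate 3 1 = 2 := by decide
  have fr : ∀ i, finRotate 3 i = i + 1 := by decide
  have h1 : σ (v, 1) = ((σ (v, 0)).1, (σ (v, 0)).2 + 1) := by
    have := hc (v, 0)
    simp only [r3, Equiv.prodCongr_apply, Prod.map, Equiv.refl_apply, f0] at this
    rw [this, fr]
  have h2 : σ (v, 2) = ((σ (v, 0)).1, (σ (v, 0)).2 + 2) := by
    have := hc (v, 1)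
    simp only [r3, Equiv.prodCongr_apply, Prod.map, Equiv.refl_apply, f1] at this
    rw [this, fr, h1]
    simp only [add_assoc]; rfl
  fin_cases i
  · simp
  · exact h1
  · exact h2

theorem exists_bar {σ : Perm (V × Fin 3)} (h : σ * r3 V = r3 V * σ) :
    ∃ t : Perm V, ∀ v i, (σ (v, i)).1 = t v := by
  have h' : σ⁻¹ * r3 V = r3 V * σ⁻¹ := by
    rw [inv_mul_eq_iff_eq_mul, ← mul_assoc, h, mul_assoc]; simp
  refine ⟨⟨fun v => (σ (v, 0)).1, fun v => (σ⁻¹ (v, 0)).1, ?_, ?_⟩, ?_⟩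
  · intro v
    have h1 := comm_r3 h' (σ (v, 0)).1 (σ (v, 0)).2
    have : σ⁻¹ ((σ (v, 0)).1, (σ (v, 0)).2) = (v, 0) := by simp
    rw [this] at h1
    exact (congrArg Prod.fst h1).symm
  · intro v
    have h1 := comm_r3 h (σ⁻¹ (v, 0)).1 (σ⁻¹ (v, 0)).2
    have : σ ((σ⁻¹ (v, 0)).1, (σ⁻¹ (v, 0)).2) = (v, 0) := by simp
    rw [this] at h1
    exact (congrArg Prod.fst h1).symm
  · intro v i
    rw [comm_r3 h]; rfl

variable [DecidableEq V]

noncomputable def codeT (τ : Perm (V × Fin 3)) (t : Perm V) (v : V) : Option (V × Fin 3) :=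
  if t v ≠ v ∧ rep t v ≠ v then some (τ (v, 0)) else none

theorem codeT_agree {τ τ' : Perm (V × Fin 3)} {t t' : Perm V} 
    (h : τ * r3 V = r3 V * τ) (h' : τ' * r3 V = r3 V * τ')
    (hF : codeT τ t = codeT τ' t') (x : V × Fin 3) (h1 : t x.1 ≠ x.1) (h2 : rep t x.1 ≠ x.1) :
    τ' x = τ x := by
  obtain ⟨v, i⟩ := x
  have := congrFun hF v
  simp only [codeT] at this
  rw [if_pos ⟨h1, h2⟩] at this
  split_ifs at this with h3
  rw [comm_r3 h, comm_r3 h', Option.some.inj this]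

theorem bar_pow {τ : Perm (V × Fin 3)} {t : Perm V} (ht : ∀ v i, (τ (v, i)).1 = t v) (n : ℕ)
    (x : V × Fin 3) : ((τ ^ n) x).1 = (t ^ n) x.1 := by
  induction n with
  | zero => rfl
  | succ n ih =>
    rw [pow_succ', pow_succ', Perm.mul_apply, Perm.mul_apply, ← ih]
    exact ht _ _

theorem codeT_rep {τ τ' : Perm (V × Fin 3)} {t t' : Perm V} {p : ℕ} (hp : p.Prime)
    (h : τ * r3 V = r3 V * τ) (h' : τ' * r3 V = r3 V * τ')
    (ht : ∀ v i, (τ (v, i)).1 = t v) (hτ : τ ^ p = 1) (hτ' : τ' ^ p = 1)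
    (hF : codeT τ t = codeT τ' t') (x : V × Fin 3) (h1 : t x.1 ≠ x.1) (h2 : rep t x.1 = x.1) :
    τ' x = τ x := by
  have htp : t ^ p = 1 := by
    ext v
    have := bar_pow ht p (v, 0)
    rw [hτ] at this
    exact this.symm
  have key : ∀ j, j + 1 ≤ p → (τ' ^ j) (τ x) = (τ ^ j) (τ x) := by
    intro j
    induction j with
    | zero => intro _; rfl
    | succ j ih =>
      intro hj
      rw [pow_succ', pow_succ', Perm.mul_apply, Perm.mul_apply, ih (by omega)]
      have e1 : (τ ^ j) (τ x) = (τ ^ (j + 1)) x := by rw [pow_succ, Perm.mul_apply]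
      have e2 : ((τ ^ j) (τ x)).1 = (t ^ (j + 1)) x.1 := by rw [e1, bar_pow ht]
      have hsc : t.SameCycle x.1 ((t ^ (j + 1)) x.1) := ⟨(j + 1 : ℕ), by rw [zpow_natCast]⟩
      apply codeT_agree h h' hF
      · rw [e2]
        intro h3
        apply h1
        apply (t ^ (j + 1)).injective
        rw [← Perm.mul_apply, ← pow_succ, pow_succ', Perm.mul_apply]
        exact h3
      · rw [e2, ← rep_eq t hsc, h2]
        intro h3
        apply h1
        exact fix_of_pow hp htp (j := j + 1) (Nat.not_dvd_of_pos_of_lt (by omega) (by omega)) h3.symm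
  have hp1 := hp.pos
  have k1 := key (p - 1) (by omega)
  have e3 : (τ ^ (p - 1)) (τ x) = x := by
    rw [← Perm.mul_apply, ← pow_succ, Nat.sub_add_cancel hp1, hτ]; rfl
  rw [e3] at k1
  rw [← k1, ← Perm.mul_apply, ← pow_succ', Nat.sub_add_cancel hp1, hτ']
  rw [k1]; rfl

theorem codeT_inj {τ τ' : Perm (V × Fin 3)} {t t' : Perm V} {p : ℕ} (hp : p.Prime)
    (h : τ * r3 V = r3 V * τ) (h' : τ' * r3 V = r3 V * τ')
    (ht : ∀ v i, (τ (v, i)).1 = t v) (ht' : ∀ v i, (τ' (v, i)).1 = t' v)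
    (hτ : τ ^ p = 1) (hτ' : τ' ^ p = 1)
    (hF : codeT τ t = codeT τ' t') (hl : ∀ v, (τ (v, 0)).2 = (τ' (v, 0)).2) : τ = τ' := by
  ext1 x
  by_cases h1 : t x.1 = x.1
  · by_cases h2 : t' x.1 = x.1
    · obtain ⟨v, i⟩ := x
      rw [comm_r3 h, comm_r3 h', hl, ht, ht']
      simp only at h1 h2
      rw [h1, h2]
    · by_cases h3 : rep t' x.1 = x.1
      · exact codeT_rep hp h' h ht' hτ' hτ hF.symm x h2 h3
      · exact codeT_agree h' h hF.symm x h2 h3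
  · by_cases h3 : rep t x.1 = x.1
    · exact (codeT_rep hp h h' ht hτ hτ' hF x h1 h3).symm
    · exact (codeT_agree h h' hF x h1 h3).symm

theorem codeT_card [Fintype V] {τ : Perm (V × Fin 3)} {t : Perm V} {p : ℕ} (hp : p.Prime)
    (htp : t ^ p = 1) :
    p * (Finset.univ.filter fun v => codeT τ t v ≠ none).card ≤ (p - 1) * Fintype.card V := by
  classical
  set M := Finset.univ.filter fun v => t v ≠ v with hM
  set R := M.filter fun v => rep t v = v with hR
  have hA : (Finset.univ.filter fun v => codeT τ t v ≠ none) = M.filter fun v => ¬ rep t v = v := by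
    ext v
    simp [codeT, hM]
  have hsum : R.card + (M.filter fun v => ¬ rep t v = v).card = M.card :=
    Finset.card_filter_add_card_filter_not _
  have hMR : M.card ≤ R.card * p := by
    have : M ⊆ (R ×ˢ Finset.range p).image (fun q => (t ^ q.2) q.1) := by
      intro w hw
      rw [hM, Finset.mem_filter] at hw
      obtain ⟨j, hj, hj'⟩ := exists_pow_lt hp.pos htp (rep_same t w)
      rw [Finset.mem_image]
      refine ⟨(rep t w, j), ?_, hj'⟩
      simp only [Finset.mem_product, Finset.mem_range, hj, and_true, hR, hM, Finset.mem_filter,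
        Finset.mem_univ, true_and, rep_rep]
      intro hfix
      apply hw.2
      have : (t ^ j) (rep t w) = rep t w := Perm.pow_apply_eq_self_of_apply_eq_self hfix j
      rw [this] at hj'
      rw [← hj', hfix]
    refine (Finset.card_le_card this).trans (Finset.card_image_le.trans ?_)
    simp
  have hMV : M.card ≤ Fintype.card V := Finset.card_le_univ _
  rw [hA]
  set a := (M.filter fun v => ¬ rep t v = v).card
  obtain ⟨q, rfl⟩ : ∃ q, p = q + 1 := ⟨p - 1, by have := hp.pos; omega⟩
  simp only [Nat.add_sub_cancel]
  nlinarith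
end

section
variable {H : Type} [Fintype H] [DecidableEq H]

noncomputable def codeW (ι : H → ℕ) (τ ω : Perm H) (x : H) : Option H :=
  if rep τ x = x ∧ ι x < ι (rep τ (ω x)) then some (ω x) else none

theorem sc_pow {t : Perm H} (n : ℕ) (x : H) : t.SameCycle x ((t ^ n) x) :=
  ⟨(n : ℕ), by rw [zpow_natCast]⟩

theorem comm_pow {t w : Perm H} (h : t * w = w * t) (n : ℕ) (x : H) :
    (t ^ n) (w x) = w ((t ^ n) x) := by
  have : t ^ n * w = w * t ^ n := (Commute.pow_left h n).eq
  rw [← Perm.mul_apply, this]; rfl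

theorem codeW_agree {ι : H → ℕ} {τ ω ω' : Perm H} 
    {p : ℕ} (hp : p.Prime) (hτ : τ ^ p = 1) (hc : τ * ω = ω * τ) (hc' : τ * ω' = ω' * τ)
    (hi : ∀ x, ω (ω x) = x) (hi' : ∀ x, ω' (ω' x) = x) 
    (hF : codeW ι τ ω = codeW ι τ ω') (x : H) (hx : ι (rep τ x) ≠ ι (rep τ (ω x))) : ω' x = ω x := by
  have main : ∀ y, ι (rep τ y) < ι (rep τ (ω y)) → ω' y = ω y := by
    intro y hy
    obtain ⟨j, _, hj⟩ := exists_pow_lt hp.pos hτ (rep_same τ y)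
    have e1 : rep τ (ω (rep τ y)) = rep τ (ω y) := by
      apply rep_eq
      conv_rhs => rw [← hj, ← comm_pow hc]
      exact sc_pow _ _
    have := congrFun hF (rep τ y)
    simp only [codeW] at this
    rw [if_pos ⟨rep_rep τ y, by rw [e1]; exact hy⟩] at this
    split_ifs at this
    rw [← hj, ← comm_pow hc, ← comm_pow hc', Option.some.inj this]
  rcases lt_or_gt_of_ne hx with h | h
  · exact main x h
  · have := main (ω x) (by rw [hi]; exact h)
    rw [hi] at this
    rw [← this, hi', this]

theorem codeW_inj {ι : H → ℕ} (hι : Function.Injective ι) {τ ω ω' : Perm H}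
    {p : ℕ} (hp : p.Prime) (hτ : τ ^ p = 1) (hc : τ * ω = ω * τ) (hc' : τ * ω' = ω' * τ)
    (hi : ∀ x, ω (ω x) = x ∧ ω x ≠ x) (hi' : ∀ x, ω' (ω' x) = x ∧ ω' x ≠ x)
    (hF : codeW ι τ ω = codeW ι τ ω') : ω = ω' := by
  ext1 x
  by_cases h1 : ι (rep τ x) = ι (rep τ (ω x))
  · by_cases h2 : ι (rep τ x) = ι (rep τ (ω' x))
    · have key : ∀ w : Perm H, τ * w = w * τ → (∀ x, w (w x) = x ∧ w x ≠ x) →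
          ι (rep τ x) = ι (rep τ (w x)) → w x = τ x := by
        intro w hc hi h1
        have hs : τ.SameCycle x (w x) :=
          (rep_same τ x).symm.trans ((hι h1) ▸ rep_same τ (w x))
        obtain ⟨j, hjp, hj⟩ := exists_pow_lt hp.pos hτ hs
        have h2 : (τ ^ (j + j)) x = x := by
          rw [pow_add, Perm.mul_apply, hj, comm_pow hc, hj, (hi x).1]
        have hj0 : j ≠ 0 := by
          rintro rfl
          exact (hi x).2 hj.symm
        have hfx : τ x ≠ x := by
          intro hfix
          rw [Perm.pow_apply_eq_self_of_apply_eq_self hfix j] at hj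
          exact (hi x).2 hj.symm
        have hd : p ∣ j + j := by
          by_contra hd
          exact hfx (fix_of_pow hp hτ hd h2)
        have hjd : ¬ p ∣ j := Nat.not_dvd_of_pos_of_lt (by omega) hjp
        rw [← two_mul, hp.dvd_mul] at hd
        have hp2 : p = 2 := (Nat.prime_dvd_prime_iff_eq hp Nat.prime_two).1 (hd.resolve_right hjd)
        have : j = 1 := by omega
        subst this
        exact hj.symm
      rw [key ω hc hi h1, key ω' hc' hi' h2]
    · exact codeW_agree hp hτ hc' hc (fun x => (hi' x).1) (fun x => (hi x).1) hF.symm x h2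
  · exact (codeW_agree hp hτ hc hc' (fun x => (hi x).1) (fun x => (hi' x).1) hF x h1).symm

theorem codeW_card {ι : H → ℕ} {τ ω : Perm H}
    {p : ℕ} (hp : p.Prime) (hτ : τ ^ p = 1) (hfree : ∀ x, τ x ≠ x) (hc : τ * ω = ω * τ) 
    (hi : ∀ x, ω (ω x) = x) :
    2 * p * (Finset.univ.filter fun x => codeW ι τ ω x ≠ none).card ≤ Fintype.card H := by
  classical
  have hpow : ∀ j k, j < p → k < p → ∀ x, (τ ^ j) x = (τ ^ k) x → j = k := by
    have : ∀ j k, j ≤ k → j < p → k < p → ∀ x, (τ ^ j) x = (τ ^ k) x → j = k := by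
      intro j k hjk hj hk x h
      by_contra hne
      obtain ⟨d, rfl⟩ := Nat.exists_eq_add_of_le hjk
      rw [pow_add, Perm.mul_apply] at h
      exact hfree x (fix_of_pow hp hτ (j := d) (Nat.not_dvd_of_pos_of_lt (by omega) (by omega))
        ((τ ^ j).injective h).symm)
    intro j k hj hk x h
    rcases le_total j k with h1 | h1
    · exact this j k h1 hj hk x h
    · exact (this k j h1 hk hj x h.symm).symm
  set S := (Finset.univ.filter fun x => codeW ι τ ω x ≠ none) with hS
  have hmem : ∀ x ∈ S, rep τ x = x ∧ ι x < ι (rep τ (ω x)) := by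
    intro x hx
    rw [hS, Finset.mem_filter] at hx
    by_contra hn
    exact hx.2 (by simp [codeW, hn])
  have hr : ∀ j x, x ∈ S → rep τ ((τ ^ j) x) = x := fun j x hx => by
    rw [← rep_eq τ (sc_pow j x), (hmem x hx).1]
  have cross : ∀ x ∈ S, ∀ y ∈ S, ∀ j k, (τ ^ j) x ≠ (τ ^ k) (ω y) := by
    intro x hx y hy j k h
    have h1 : x = rep τ (ω y) := by
      rw [← hr j x hx, h, ← rep_eq τ (sc_pow k (ω y))]
    have h2 : rep τ (ω x) = y := by
      have : (τ ^ j) (ω x) = (τ ^ k) y := by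
        rw [comm_pow hc, h, comm_pow hc, hi]
      rw [← hr k y hy, ← this, ← rep_eq τ (sc_pow j (ω x))]
    have a1 := (hmem x hx).2
    have a2 := (hmem y hy).2
    rw [← h1] at a2
    rw [h2] at a1
    omega
  let f : (S × Fin p) × Bool → H := fun q => bif q.2 then (τ ^ (q.1.2 : ℕ)) q.1.1
    else (τ ^ (q.1.2 : ℕ)) (ω q.1.1)
  have hf : Function.Injective f := by
    rintro ⟨⟨⟨x, hx⟩, j⟩, b⟩ ⟨⟨⟨y, hy⟩, k⟩, c⟩ h
    have base : (τ ^ (j : ℕ)) x = (τ ^ (k : ℕ)) y → (x = y ∧ j = k) := by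
      intro h
      have : x = y := by rw [← hr j x hx, h, hr k y hy]
      subst this
      exact ⟨rfl, Fin.ext (hpow _ _ j.2 k.2 x h)⟩
    cases b <;> cases c <;> simp only [f, cond_true, cond_false] at h
    · rw [comm_pow hc, comm_pow hc] at h
      obtain ⟨rfl, rfl⟩ := base (ω.injective h)
      rfl
    · exact absurd h.symm (cross _ hy _ hx _ _)
    · exact absurd h (cross _ hx _ hy _ _)
    · obtain ⟨rfl, rfl⟩ := base h
      rfl
  have := Fintype.card_le_of_injective f hf
  simp only [Fintype.card_prod, Fintype.card_coe, Fintype.card_fin, Fintype.card_bool] at this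
  linarith
end
end OVT

namespace OVT
open Equiv

def IsBad (N : ℕ) (ω : Perm (Fin N × Fin 3)) : Prop :=
  (∀ x, ω (ω x) = x ∧ ω x ≠ x) ∧ ∃ (p : ℕ) (τ : Perm (Fin N × Fin 3)), p.Prime ∧ p ≤ 3 * N ∧
    τ ^ p = 1 ∧ (∀ x, τ x ≠ x) ∧ τ * r3 (Fin N) = r3 (Fin N) * τ ∧ τ * ω = ω * τ

theorem bad_count (N : ℕ) (hN : 1 ≤ N) : Set.ncard {ω | IsBad N ω} ≤
    (3 * N + 1) * (3 ^ N * (2 ^ (4 * N) * (3 * N) ^ (5 * N / 4))) := by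
  classical
  have hex : ∀ ω : {ω // IsBad N ω}, ∃ (p : ℕ) (τ : Perm (Fin N × Fin 3)) (t : Perm (Fin N)),
      p.Prime ∧ p ≤ 3 * N ∧ τ ^ p = 1 ∧ (∀ x, τ x ≠ x) ∧ τ * r3 (Fin N) = r3 (Fin N) * τ ∧
      τ * ω.1 = ω.1 * τ ∧ ∀ v i, (τ (v, i)).1 = t v := by
    rintro ⟨ω, h, p, τ, h1, h2, h3, h4, h5, h6⟩
    obtain ⟨t, ht⟩ := exists_bar h5
    exact ⟨p, τ, t, h1, h2, h3, h4, h5, h6, ht⟩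
  choose p τ t h1 h2 h3 h4 h5 h6 h7 using hex
  let ι : Fin N × Fin 3 → ℕ := fun x => (finProdFinEquiv x : ℕ)
  have hι : Function.Injective ι := fun a b h => finProdFinEquiv.injective (Fin.ext h)
  let A := ((Finset.univ : Finset (Fin N ⊕ Fin N × Fin 3 → Option (Fin N × Fin 3))).filter
      (fun g => (Finset.univ.filter fun i => g i ≠ none).card ≤ 5 * N / 4))
  let F : {ω // IsBad N ω} → Fin N ⊕ Fin N × Fin 3 → Option (Fin N × Fin 3) := fun ω =>
    Sum.elim (codeT (τ ω) (t ω)) (codeW ι (τ ω) ω.1)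
  have hF : ∀ ω, F ω ∈ A := by
    intro ω
    rw [Finset.mem_filter]
    refine ⟨Finset.mem_univ _, ?_⟩
    have htp : t ω ^ p ω = 1 := by
      ext1 v
      have := bar_pow (h7 ω) (p ω) (v, 0)
      rw [h3] at this
      exact this.symm
    have c1 := codeT_card (τ := τ ω) (h1 ω) htp
    have c2 := codeW_card (ι := ι) (h1 ω) (h3 ω) (h4 ω) (h6 ω) (fun x => (ω.2.1 x).1)
    have c3 : (Finset.univ.filter fun i => F ω i ≠ none).card =
        (Finset.univ.filter fun v => codeT (τ ω) (t ω) v ≠ none).card +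
        (Finset.univ.filter fun x => codeW ι (τ ω) ω.1 x ≠ none).card := by
      rw [Finset.card_filter, Finset.card_filter, Finset.card_filter, Fintype.sum_sum_type]
      rfl
    rw [c3, Nat.le_div_iff_mul_le (by norm_num)]
    simp only [Fintype.card_prod, Fintype.card_fin] at c1 c2
    have hp2 := (h1 ω).two_le
    generalize (Finset.univ.filter fun v => codeT (τ ω) (t ω) v ≠ none).card = a at *
    generalize (Finset.univ.filter fun x => codeW ι (τ ω) ω.1 x ≠ none).card = b at *
    obtain ⟨q, hq⟩ : ∃ q, p ω = q + 2 := ⟨p ω - 2, by omega⟩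
    rw [hq] at c1 c2
    have : q + 2 - 1 = q + 1 := by omega
    rw [this] at c1
    have key : 2 * (q + 2) * (a + b) ≤ (2 * (q + 2) + 1) * N := by nlinarith
    have k2 : (q + 2) * ((a + b) * 4) ≤ (q + 2) * (5 * N) := by nlinarith
    exact Nat.le_of_mul_le_mul_left k2 (by omega)
  have hinj : Function.Injective (fun ω : {ω // IsBad N ω} =>
      ((⟨p ω, Nat.lt_succ_of_le (h2 ω)⟩ : Fin (3 * N + 1)),
        ((fun v => (τ ω (v, 0)).2 : Fin N → Fin 3), (⟨F ω, hF ω⟩ : A)))) := by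
    intro ω ω' h
    simp only [Prod.mk.injEq, Fin.mk.injEq, Subtype.mk.injEq] at h
    obtain ⟨e1, e2, e3⟩ := h
    have f1 : codeT (τ ω) (t ω) = codeT (τ ω') (t ω') := by
      funext v; exact congrFun e3 (Sum.inl v)
    have f2 : codeW ι (τ ω) ω.1 = codeW ι (τ ω') ω'.1 := by
      funext v; exact congrFun e3 (Sum.inr v)
    have e4 : τ ω = τ ω' := codeT_inj (h1 ω) (h5 ω) (h5 ω') (h7 ω) (h7 ω') (h3 ω)
      (by rw [e1]; exact h3 ω') f1 (fun v => congrFun e2 v)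
    apply Subtype.ext
    refine codeW_inj hι (h1 ω) (h3 ω) (h6 ω) ?_ ω.2.1 ω'.2.1 (f2.trans ?_)
    · rw [e4]; exact h6 ω'
    · rw [e4]
  have hc := Nat.card_le_card_of_injective _ hinj
  have hA := count_partial (ι := Fin N ⊕ Fin N × Fin 3) (β := Fin N × Fin 3) (5 * N / 4)
    (by simp; omega)
  have e0 : Set.ncard {ω | IsBad N ω} = Nat.card {ω // IsBad N ω} := rfl
  rw [e0]
  refine hc.trans ?_
  rw [Nat.card_prod, Nat.card_prod, Nat.card_eq_fintype_card, Nat.card_eq_fintype_card,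
    Nat.card_eq_fintype_card, Fintype.card_fin, Fintype.card_pi_const, Fintype.card_fin,
    Fintype.card_coe]
  refine Nat.mul_le_mul_left _ (Nat.mul_le_mul_left _ (hA.trans (le_of_eq ?_)))
  simp only [Fintype.card_prod, Fintype.card_fin, Fintype.card_sum]
  congr 2 <;> ring
end OVT

namespace OVT
open Equiv

def ConjRel {H : Type} (ρ : Perm H) (a b : {ω : Perm H // IsGlu ρ ω}) : Prop :=
  ∃ σ : Perm H, σ * ρ = ρ * σ ∧ σ * a.1 * σ⁻¹ = b.1

theorem isGlu_conj {H : Type} {ρ σ ω : Perm H} (h : σ * ρ = ρ * σ) (hω : IsGlu ρ ω) :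
    IsGlu ρ (σ * ω * σ⁻¹) :=
  (isGlu_semiconj σ ρ ρ (fun x => by rw [← Perm.mul_apply, h]; rfl) ω).1 hω

theorem eq_of_fix {H : Type} {ρ σ ω : Perm H} (h : σ * ρ = ρ * σ) (h' : σ * ω = ω * σ)
    (hω : IsGlu ρ ω) (x : H) (hx : σ x = x) : σ = 1 := by
  ext1 y
  obtain ⟨n, hn⟩ := hω.2 x y
  have hc : Commute σ (ρ * ω) := (Commute.mul_right (h : Commute σ ρ) (h' : Commute σ ω))
  have := (hc.zpow_right n).eq
  rw [← hn, ← Perm.mul_apply, this, Perm.mul_apply, hx]; rfl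

@[reducible]
def conjAct {H : Type} (ρ : Perm H) :
    MulAction (Subgroup.centralizer ({ρ} : Set (Perm H))) {ω : Perm H // IsGlu ρ ω} where
  smul σ ω := ⟨σ.1 * ω.1 * σ.1⁻¹, isGlu_conj (Subgroup.mem_centralizer_singleton_iff.1 σ.2) ω.2⟩
  one_smul ω := Subtype.ext (by change (1 : Perm H) * ω.1 * 1⁻¹ = ω.1; simp)
  mul_smul σ τ ω := Subtype.ext (by
    change (σ.1 * τ.1) * ω.1 * (σ.1 * τ.1)⁻¹ = σ.1 * (τ.1 * ω.1 * τ.1⁻¹) * σ.1⁻¹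
    group)

theorem burnside {H : Type} (ρ : Perm H) :
    Nat.card {q : Perm H × Perm H // q.1 * ρ = ρ * q.1 ∧ IsGlu ρ q.2 ∧ q.1 * q.2 = q.2 * q.1} =
    Nat.card (Quot (ConjRel ρ)) * Nat.card (Subgroup.centralizer ({ρ} : Set (Perm H))) := by
  let _ := conjAct ρ
  have e := MulAction.sigmaFixedByEquivOrbitsProdGroup (Subgroup.centralizer ({ρ} : Set (Perm H)))
    {ω : Perm H // IsGlu ρ ω}
  have hs : ∀ (σ : Subgroup.centralizer ({ρ} : Set (Perm H))) (ω : {ω : Perm H // IsGlu ρ ω}),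
    (σ • ω).1 = σ.1 * ω.1 * σ.1⁻¹ := fun _ _ => rfl
  have e1 : Nat.card (Quot (ConjRel ρ)) = Nat.card (MulAction.orbitRel.Quotient
      (Subgroup.centralizer ({ρ} : Set (Perm H))) {ω : Perm H // IsGlu ρ ω}) := by
    apply Nat.card_congr
    refine Quot.congr (Equiv.refl _) ?_
    intro a b
    rw [Equiv.refl_apply, Equiv.refl_apply]
    constructor
    · rintro ⟨σ, h1, h2⟩
      refine (MulAction.orbitRel _ _).symm ?_
      exact ⟨⟨σ, Subgroup.mem_centralizer_singleton_iff.2 h1⟩, Subtype.ext h2⟩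
    · intro h
      have h' := (MulAction.orbitRel _ _).symm h
      obtain ⟨σ, hσ⟩ := h'
      exact ⟨σ.1, Subgroup.mem_centralizer_singleton_iff.1 σ.2, congrArg Subtype.val hσ⟩
  rw [e1, ← Nat.card_prod, ← Nat.card_congr e]
  apply Nat.card_congr
  refine ⟨fun q => ⟨⟨q.1.1, Subgroup.mem_centralizer_singleton_iff.2 q.2.1⟩, ⟨⟨q.1.2, q.2.2.1⟩, ?_⟩⟩,
    fun s => ⟨(s.1.1, s.2.1.1), Subgroup.mem_centralizer_singleton_iff.1 s.1.2, s.2.1.2, ?_⟩,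
    fun _ => rfl, fun _ => rfl⟩
  · rw [MulAction.mem_fixedBy]
    apply Subtype.ext
    rw [hs]
    exact mul_inv_eq_of_eq_mul q.2.2.2
  · have := congrArg Subtype.val (MulAction.mem_fixedBy.1 s.2.2)
    rw [hs] at this
    exact eq_mul_of_mul_inv_eq this

theorem bad_of_comm {N : ℕ} (hN : 1 ≤ N) {σ ω : Perm (Fin N × Fin 3)}
    (h : σ * r3 (Fin N) = r3 (Fin N) * σ) (hω : IsGlu (r3 (Fin N)) ω) (h' : σ * ω = ω * σ)
    (hne : σ ≠ 1) : IsBad N ω := by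
  refine ⟨hω.1, ?_⟩
  have hpos := orderOf_pos σ
  have h1 : orderOf σ ≠ 1 := by rwa [Ne, orderOf_eq_one_iff]
  obtain ⟨p, hp, hd⟩ := Nat.exists_prime_and_dvd h1
  have hord : orderOf (σ ^ (orderOf σ / p)) = p := orderOf_pow_orderOf_div hpos.ne' hd
  have c1 : σ ^ (orderOf σ / p) * r3 (Fin N) = r3 (Fin N) * σ ^ (orderOf σ / p) :=
    (Commute.pow_left (h : Commute _ _) _).eq
  have c2 : σ ^ (orderOf σ / p) * ω = ω * σ ^ (orderOf σ / p) :=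
    (Commute.pow_left (h' : Commute _ _) _).eq
  generalize σ ^ (orderOf σ / p) = τ at *
  have hτ1 : τ ≠ 1 := by
    rintro rfl
    rw [orderOf_one] at hord
    exact hp.one_lt.ne hord
  refine ⟨p, τ, hp, ?_, by rw [← hord]; exact pow_orderOf_eq_one τ,
    fun x hx => hτ1 (eq_of_fix c1 c2 hω x hx), c1, c2⟩
  let x0 : Fin N × Fin 3 := (⟨0, hN⟩, 0)
  have hinj : Function.Injective (fun s : Subgroup.zpowers τ => s.1 x0) := by
    rintro ⟨a, ⟨i, rfl⟩⟩ ⟨b, ⟨j, rfl⟩⟩ hab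
    simp only at hab
    have d1 : (τ ^ (i - j)) * r3 (Fin N) = r3 (Fin N) * (τ ^ (i - j)) :=
      (Commute.zpow_left (c1 : Commute _ _) _).eq
    have d2 : (τ ^ (i - j)) * ω = ω * (τ ^ (i - j)) :=
      (Commute.zpow_left (c2 : Commute _ _) _).eq
    have := eq_of_fix d1 d2 hω ((τ ^ j) x0) (by
      rw [← Perm.mul_apply, ← zpow_add, sub_add_cancel]; exact hab)
    apply Subtype.ext
    simp only
    rw [zpow_sub, mul_inv_eq_one] at this
    exact this
  have := Nat.card_le_card_of_injective _ hinj
  rw [Nat.card_zpowers, hord] at this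
  refine this.trans ?_
  simp; omega

theorem orbit_bounds {N : ℕ} (hN : 1 ≤ N) :
    cnt (r3 (Fin N)) ≤ Nat.card (Quot (ConjRel (r3 (Fin N)))) *
      Nat.card (Subgroup.centralizer ({r3 (Fin N)} : Set (Perm (Fin N × Fin 3)))) ∧
    Nat.card (Quot (ConjRel (r3 (Fin N)))) *
      Nat.card (Subgroup.centralizer ({r3 (Fin N)} : Set (Perm (Fin N × Fin 3)))) ≤
    cnt (r3 (Fin N)) + Set.ncard {ω | IsBad N ω} * (3 * N) := by
  classical
  rw [← burnside]
  have hc : cnt (r3 (Fin N)) = Nat.card {ω // IsGlu (r3 (Fin N)) ω} := rfl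
  have hb : Set.ncard {ω | IsBad N ω} = Nat.card {ω // IsBad N ω} := rfl
  rw [hc, hb]
  constructor
  · apply Nat.card_le_card_of_injective
      (fun ω => ⟨(1, ω.1), by rw [one_mul, mul_one], ω.2, by rw [one_mul, mul_one]⟩)
    intro a b hab
    simp only [Subtype.mk.injEq, Prod.mk.injEq, true_and] at hab
    exact Subtype.ext hab
  · let x0 : Fin N × Fin 3 := (⟨0, hN⟩, 0)
    have h3 : Nat.card (Fin N × Fin 3) = 3 * N := by simp; omega
    rw [← h3, ← Nat.card_prod, ← Nat.card_sum]
    let F : {q : Perm (Fin N × Fin 3) × Perm (Fin N × Fin 3) // q.1 * r3 (Fin N) = r3 (Fin N) * q.1 ∧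
        IsGlu (r3 (Fin N)) q.2 ∧ q.1 * q.2 = q.2 * q.1} →
        {ω // IsGlu (r3 (Fin N)) ω} ⊕ {ω // IsBad N ω} × (Fin N × Fin 3) := fun q =>
      if h : q.1.1 = 1 then Sum.inl ⟨q.1.2, q.2.2.1⟩ else
        Sum.inr (⟨q.1.2, bad_of_comm hN q.2.1 q.2.2.1 q.2.2.2 h⟩, q.1.1 x0)
    apply Nat.card_le_card_of_injective F
    rintro ⟨⟨σ, ω⟩, h1, h2, h3⟩ ⟨⟨σ', ω'⟩, h1', h2', h3'⟩ hF
    simp only at h1 h2 h3 h1' h2' h3'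
    simp only [F] at hF
    split_ifs at hF with ha hb hb
    · simp only [Sum.inl.injEq, Subtype.mk.injEq] at hF
      rw [Subtype.mk.injEq, ha, hb, hF]
    · simp only [Sum.inr.injEq, Prod.mk.injEq, Subtype.mk.injEq] at hF
      obtain ⟨rfl, hx⟩ := hF
      have c1 : (σ'⁻¹ * σ) * r3 (Fin N) = r3 (Fin N) * (σ'⁻¹ * σ) :=
        (Commute.mul_left (Commute.inv_left (h1' : Commute _ _)) (h1 : Commute _ _)).eq
      have c2 : (σ'⁻¹ * σ) * ω = ω * (σ'⁻¹ * σ) :=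
        (Commute.mul_left (Commute.inv_left (h3' : Commute _ _)) (h3 : Commute _ _)).eq
      have := eq_of_fix c1 c2 h2 x0 (by rw [Perm.mul_apply, hx]; simp)
      rw [inv_mul_eq_one] at this
      rw [Subtype.mk.injEq, this]

theorem card_centralizer (N : ℕ) :
    Nat.card (Subgroup.centralizer ({r3 (Fin N)} : Set (Perm (Fin N × Fin 3)))) =
      3 ^ N * N.factorial := by
  have fr : ∀ i, finRotate 3 i = i + 1 := by decide
  let mk : (Fin N → Fin 3) × Perm (Fin N) → Perm (Fin N × Fin 3) := fun q =>
    ⟨fun x => (q.2 x.1, q.1 x.1 + x.2), fun x => (q.2⁻¹ x.1, x.2 - q.1 (q.2⁻¹ x.1)),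
      fun x => by simp, fun x => by simp⟩
  have hmk : ∀ q x, mk q x = (q.2 x.1, q.1 x.1 + x.2) := fun _ _ => rfl
  have hcomm : ∀ q, mk q * r3 (Fin N) = r3 (Fin N) * mk q := by
    intro q
    ext1 x
    rw [Perm.mul_apply, Perm.mul_apply, hmk, hmk]
    simp [r3, fr, add_assoc]
  have hb : Function.Bijective (fun q => (⟨mk q,
      Subgroup.mem_centralizer_singleton_iff.2 (hcomm q)⟩ :
        Subgroup.centralizer ({r3 (Fin N)} : Set (Perm (Fin N × Fin 3))))) := by
    constructor
    · intro q q' h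
      rw [Subtype.mk.injEq] at h
      have h' : ∀ v, (q.2 v, q.1 v + 0) = (q'.2 v, q'.1 v + 0) := fun v => by
        have := congrArg (fun f : Perm (Fin N × Fin 3) => f (v, 0)) h
        exact this
      simp only [add_zero, Prod.mk.injEq] at h'
      refine Prod.ext (funext fun v => (h' v).2) (Equiv.ext fun v => (h' v).1)
    · rintro ⟨σ, hσ⟩
      have hσ' := Subgroup.mem_centralizer_singleton_iff.1 hσ
      obtain ⟨t, ht⟩ := exists_bar hσ'
      refine ⟨(fun v => (σ (v, 0)).2, t), Subtype.ext (Equiv.ext ?_)⟩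
      rintro ⟨v, i⟩
      simp only
      rw [hmk, comm_r3 hσ', ht]
  rw [← Nat.card_eq_of_bijective _ hb, Nat.card_prod]
  simp [Fintype.card_perm]

end OVT

namespace OVT
open Equiv

theorem cnt_r3 (N : ℕ) : cnt (r3 (Fin N)) = xx N 0 := by
  refine cnt_semiconj (Equiv.sumEmpty (Fin N × Fin 3) (Fin 0)).symm _ _ ?_
  rintro ⟨v, i⟩
  rfl

def eqv (N : ℕ) : Fin N × Fin 3 ≃ Fin (3 * N) := finProdFinEquiv.trans (finCongr (mul_comm N 3))

theorem eqv_rho (N : ℕ) (x : Fin N × Fin 3) : eqv N (r3 (Fin N) x) = rho N (eqv N x) := by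
  have fr : ∀ i : Fin 3, ((finRotate 3 i : Fin 3) : ℕ) = ((i : ℕ) + 1) % 3 := by decide
  obtain ⟨v, i⟩ := x
  apply Fin.ext
  have h1 : (eqv N (r3 (Fin N) (v, i)) : ℕ) = ((i : ℕ) + 1) % 3 + 3 * v := by
    rw [← fr]; rfl
  have h2 : (rho N (eqv N (v, i)) : ℕ) = 3 * (((i : ℕ) + 3 * v) / 3) + (((i : ℕ) + 3 * v) + 1) % 3 := rfl
  rw [h1, h2]
  have := i.isLt
  omega

theorem oneOrbit_iff {N : ℕ} (ω : Omega N) : OneOrbit ω ↔ IsGlu (rho N) ω.1 := by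
  have : Tr (ω.1 * rho N) ↔ Tr (rho N * ω.1) := tr_semiconj (rho N) _ _ (fun x => rfl)
  exact ⟨fun h => ⟨ω.2, this.1 h⟩, fun h => this.2 h.2⟩

theorem Ig1_eq (g : ℕ) : Ig1 g = Nat.card (Quot (ConjRel (r3 (Fin (4 * g - 2))))) := by
  generalize hN : 4 * g - 2 = N
  have e1 : Ig1 g = Nat.card (Quot (ConjRel (rho N))) := by
    subst hN
    apply Nat.card_congr
    refine Quot.congr ⟨fun t => ⟨t.1.1, (oneOrbit_iff t.1).1 t.2⟩,
      fun a => ⟨⟨a.1, a.2.1⟩, (oneOrbit_iff ⟨a.1, a.2.1⟩).2 a.2⟩, fun _ => rfl, fun _ => rfl⟩ ?_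
    intro a b
    exact Iff.rfl
  rw [e1]
  symm
  apply Nat.card_congr
  let e := eqv N
  have hmul : ∀ a b : Perm (Fin N × Fin 3), e.permCongr (a * b) = e.permCongr a * e.permCongr b :=
    fun a b => map_mul (Equiv.permCongrHom e) a b
  have hinv : ∀ a : Perm (Fin N × Fin 3), e.permCongr a⁻¹ = (e.permCongr a)⁻¹ :=
    fun a => map_inv (Equiv.permCongrHom e) a
  have hr : e.permCongr (r3 (Fin N)) = rho N := by
    ext1 x
    rw [Equiv.permCongr_apply, eqv_rho]
    simp [e]
  refine Quot.congr (Equiv.subtypeEquiv e.permCongr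
    (isGlu_semiconj e (r3 (Fin N)) (rho N) (eqv_rho N))) ?_
  rintro ⟨a, ha⟩ ⟨b, hb⟩
  constructor
  · rintro ⟨σ, h1, h2⟩
    refine ⟨e.permCongr σ, ?_, ?_⟩
    · rw [← hr, ← hmul, h1, hmul]
    · change e.permCongr σ * e.permCongr a * (e.permCongr σ)⁻¹ = e.permCongr b
      rw [← hinv, ← hmul, ← hmul]
      exact congrArg _ h2
  · rintro ⟨σ, h1, h2⟩
    obtain ⟨σ, rfl⟩ := e.permCongr.surjective σ
    change e.permCongr σ * e.permCongr a * (e.permCongr σ)⁻¹ = e.permCongr b at h2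
    refine ⟨σ, ?_, ?_⟩
    · apply e.permCongr.injective
      rw [hmul, hmul, hr, h1]
    · apply e.permCongr.injective
      rw [hmul, hmul, hinv]; exact h2

/-- Final finite bounds. -/
theorem Ig1_bounds (k : ℕ) :
    xx (4 * k + 2) 0 ≤ Ig1 (k + 1) * (3 ^ (4 * k + 2) * (4 * k + 2).factorial) ∧
    Ig1 (k + 1) * (3 ^ (4 * k + 2) * (4 * k + 2).factorial) ≤ xx (4 * k + 2) 0 +
      ((12 * k + 7) * (3 ^ (4 * k + 2) * (2 ^ (16 * k + 8) * (12 * k + 6) ^ (5 * k + 2)))) *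
        (12 * k + 6) := by
  have hN : 4 * (k + 1) - 2 = 4 * k + 2 := by omega
  have h := orbit_bounds (N := 4 * k + 2) (by omega)
  have hb := bad_count (4 * k + 2) (by omega)
  rw [cnt_r3, card_centralizer] at h
  rw [Ig1_eq, hN]
  refine ⟨h.1, h.2.trans ?_⟩
  have e1 : 3 * (4 * k + 2) = 12 * k + 6 := by ring
  have e2 : 5 * (4 * k + 2) / 4 = 5 * k + 2 := by omega
  have e3 : 4 * (4 * k + 2) = 16 * k + 8 := by ring
  rw [e1, e2, e3] at hb
  rw [e1]
  exact Nat.add_le_add_left (Nat.mul_le_mul_right _ hb) _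

end OVT

namespace OVT
open Equiv

noncomputable def Mk (k : ℕ) : ℝ := 2 * ((6 * k + 3).factorial : ℝ) /
  ((12 * k + 6) * 12 ^ (k + 1) * ((k + 1).factorial : ℝ) * ((3 * k + 1).factorial : ℝ))

noncomputable def Tk (g : ℝ) : ℝ := 2 / (3 * Real.sqrt π * (4 * g - 2) ^ ((3 : ℝ) / 2)) *
            ((12 * g - 6) / Real.exp 1) ^ (2 * g - 1)

theorem pow_id (t s q : ℝ) (k : ℕ) (ht : t ≠ 0) :
    t * (s * q) ^ (6 * k + 3) = (t * t * s) ^ (k + 1) * (q / t) ^ (k + 1) *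
      (s * q / t) ^ (3 * k + 1) * (t * s * q) ^ (2 * k + 1) := by
  simp only [mul_pow, div_pow]
  field_simp
  ring

theorem fact_st (n : ℕ) (hn : n ≠ 0) : (n.factorial : ℝ) =
    Stirling.stirlingSeq n * (√(2 * n) * (n / Real.exp 1) ^ n) := by
  rw [Stirling.stirlingSeq, div_mul_cancel₀]
  positivity

noncomputable def ak (k : ℕ) : ℝ := (1 + 1 / (2 * (k : ℝ) + 1)) ^ (k + 1)
noncomputable def bk (k : ℕ) : ℝ := (1 + -1 / (6 * (k : ℝ) + 3)) ^ (3 * k + 1)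
noncomputable def ck (k : ℕ) : ℝ := √(12 * (2 * (k : ℝ) + 1) ^ 2 / ((2 * k + 2) * (6 * k + 2)))

theorem tendsto_ak : Tendsto ak atTop (𝓝 (Real.exp (1 / 2))) := by
  have h : Tendsto (fun n : ℕ => (n : ℝ) * (1 / (2 * (n : ℝ) - 1))) atTop (𝓝 (1 / 2)) := by
    have h1 : Tendsto (fun n : ℕ => 1 / (2 - 1 / (n : ℝ))) atTop (𝓝 (1 / (2 - 0))) :=
      tendsto_const_nhds.div (tendsto_const_nhds.sub tendsto_one_div_atTop_nhds_zero_nat) (by norm_num)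
    rw [sub_zero] at h1
    refine h1.congr' ?_
    filter_upwards [eventually_ge_atTop 1] with n hn
    have : (1 : ℝ) ≤ n := by exact_mod_cast hn
    have h2 : 2 * (n : ℝ) - 1 ≠ 0 := by linarith
    field_simp
  have := (Real.tendsto_one_add_pow_exp_of_tendsto h).comp (tendsto_add_atTop_nat 1)
  refine this.congr fun k => ?_
  simp only [Function.comp, ak]
  push_cast
  ring_nf

theorem tendsto_bk : Tendsto bk atTop (𝓝 (Real.exp (-1 / 2))) := by
  have h : Tendsto (fun n : ℕ => (n : ℝ) * (-1 / (2 * (n : ℝ) + 1))) atTop (𝓝 (-1 / 2)) := by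
    have h1 : Tendsto (fun n : ℕ => -1 / (2 + 1 / (n : ℝ))) atTop (𝓝 (-1 / (2 + 0))) :=
      tendsto_const_nhds.div (tendsto_const_nhds.add tendsto_one_div_atTop_nhds_zero_nat) (by norm_num)
    rw [add_zero] at h1
    refine h1.congr' ?_
    filter_upwards [eventually_ge_atTop 1] with n hn
    have : (1 : ℝ) ≤ n := by exact_mod_cast hn
    field_simp
  have h3 : Tendsto (fun k : ℕ => 3 * k + 1) atTop atTop :=
    tendsto_atTop_mono (fun k => by omega : ∀ k : ℕ, k ≤ 3 * k + 1) tendsto_id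
  have := (Real.tendsto_one_add_pow_exp_of_tendsto h).comp h3
  refine this.congr fun k => ?_
  simp only [Function.comp, bk]
  push_cast
  ring_nf

theorem tendsto_ck : Tendsto ck atTop (𝓝 2) := by
  have h0 := tendsto_one_div_atTop_nhds_zero_nat (𝕜 := ℝ)
  have h1 : Tendsto (fun n : ℕ => 12 * (2 + 1 / (n : ℝ)) ^ 2 /
      ((2 + 2 * (1 / (n : ℝ))) * (6 + 2 * (1 / (n : ℝ))))) atTop
      (𝓝 (12 * (2 + 0) ^ 2 / ((2 + 2 * 0) * (6 + 2 * 0)))) := by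
    refine Tendsto.div ?_ ?_ (by norm_num)
    · exact ((tendsto_const_nhds.add h0).pow 2).const_mul _
    · exact (tendsto_const_nhds.add (h0.const_mul _)).mul (tendsto_const_nhds.add (h0.const_mul _))
  have h2 := h1.sqrt
  have e : √(12 * (2 + 0) ^ 2 / ((2 + 2 * 0) * (6 + 2 * 0)) : ℝ) = 2 := by
    rw [show (12 * (2 + 0) ^ 2 / ((2 + 2 * 0) * (6 + 2 * 0)) : ℝ) = 2 ^ 2 by norm_num]
    exact Real.sqrt_sq (by norm_num)
  rw [e] at h2
  refine h2.congr' ?_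
  filter_upwards [eventually_ge_atTop 1] with n hn
  have : (1 : ℝ) ≤ n := by exact_mod_cast hn
  unfold ck
  congr 1
  field_simp

theorem Tk_eq (k : ℕ) : Tk ((k + 1 : ℕ) : ℝ) = 2 / (3 * √π * ((4 * k + 2) * √(4 * k + 2))) *
    ((12 * k + 6) / Real.exp 1) ^ (2 * k + 1) := by
  unfold Tk
  have h1 : 4 * ((k + 1 : ℕ) : ℝ) - 2 = 4 * k + 2 := by push_cast; ring
  have h2 : 12 * ((k + 1 : ℕ) : ℝ) - 6 = 12 * k + 6 := by push_cast; ring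
  have h3 : 2 * ((k + 1 : ℕ) : ℝ) - 1 = ((2 * k + 1 : ℕ) : ℝ) := by push_cast; ring
  rw [h1, h2, h3, Real.rpow_natCast]
  have hp : (0 : ℝ) < 4 * k + 2 := by positivity
  rw [show (3 : ℝ) / 2 = 1 + 1 / 2 by norm_num, Real.rpow_add hp, Real.rpow_one,
    ← Real.sqrt_eq_rpow]

theorem Mk_div (k : ℕ) : Mk k / Tk ((k + 1 : ℕ) : ℝ) =
    √π * Stirling.stirlingSeq (6 * k + 3) /
      (Stirling.stirlingSeq (k + 1) * Stirling.stirlingSeq (3 * k + 1)) * ck k / (2 * ak k * bk k) := by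
  rw [Tk_eq]
  unfold Mk
  rw [fact_st (6 * k + 3) (by omega), fact_st (k + 1) (by omega), fact_st (3 * k + 1) (by omega)]
  have s1 : 0 < Stirling.stirlingSeq (k + 1) := Stirling.stirlingSeq'_pos k
  have s2 : 0 < Stirling.stirlingSeq (3 * k + 1) := Stirling.stirlingSeq'_pos (3 * k)
  generalize Stirling.stirlingSeq (k + 1) = S1 at *
  generalize Stirling.stirlingSeq (3 * k + 1) = S2 at *
  generalize Stirling.stirlingSeq (6 * k + 3) = S3 at *
  push_cast
  have he := Real.exp_pos 1
  have ha : 0 < ak k := by unfold ak; positivity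
  have hb : 0 < bk k := by
    unfold bk
    apply pow_pos
    have : (0 : ℝ) ≤ k := by positivity
    have : 1 + -1 / (6 * (k : ℝ) + 3) = (6 * k + 2) / (6 * k + 3) := by field_simp; ring
    rw [this]; positivity
  set q : ℝ := (2 * k + 1) / Real.exp 1 with hq
  have hq0 : 0 < q := by positivity
  have e1 : ((k : ℝ) + 1) / Real.exp 1 = q / 2 * (1 + 1 / (2 * (k : ℝ) + 1)) := by
    rw [hq]; field_simp; ring
  have e2 : (3 * (k : ℝ) + 1) / Real.exp 1 = 3 * q / 2 * (1 + -1 / (6 * (k : ℝ) + 3)) := by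
    rw [hq]; field_simp; ring
  have e3 : (6 * (k : ℝ) + 3) / Real.exp 1 = 3 * q := by rw [hq]; ring
  have e4 : (12 * (k : ℝ) + 6) / Real.exp 1 = 2 * 3 * q := by rw [hq]; ring
  rw [e1, e2, e3, e4, mul_pow (q / 2), mul_pow (3 * q / 2)]
  have a0 : (1 + 1 / (2 * (k : ℝ) + 1)) ^ (k + 1) = ak k := rfl
  have b0 : (1 + -1 / (6 * (k : ℝ) + 3)) ^ (3 * k + 1) = bk k := rfl
  rw [a0, b0]
  have hid := pow_id 2 3 q k (by norm_num)
  rw [show (2 * 2 * 3 : ℝ) = 12 by norm_num] at hid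
  have hc : ck k = √(2 * (6 * k + 3)) * √(4 * k + 2) / (√(2 * (k + 1)) * √(2 * (3 * k + 1))) := by
    unfold ck
    rw [← Real.sqrt_mul (by positivity), ← Real.sqrt_mul (by positivity),
      ← Real.sqrt_div (by positivity)]
    congr 1
    field_simp
    ring
  rw [hc]
  have p1 : 0 < √(2 * ((k : ℝ) + 1)) := by positivity
  have p2 : 0 < √(2 * (3 * (k : ℝ) + 1)) := by positivity
  have p3 : 0 < √(4 * (k : ℝ) + 2) := by positivity
  have p4 : 0 < √π := by positivity
  have h3q : (3 * q) ^ (6 * k + 3) = 12 ^ (k + 1) * (q / 2) ^ (k + 1) *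
      (3 * q / 2) ^ (3 * k + 1) * (2 * 3 * q) ^ (2 * k + 1) / 2 := by linarith
  rw [h3q]
  have r1 : 0 < (q / 2) ^ (k + 1) := by positivity
  have r2 : 0 < (3 * q / 2) ^ (3 * k + 1) := by positivity
  have r3 : 0 < (2 * 3 * q) ^ (2 * k + 1) := by positivity
  have r4 : (0 : ℝ) < 12 ^ (k + 1) := by positivity
  have r5 : (12 * (k : ℝ) + 6) = 3 * (4 * k + 2) := by ring
  rw [r5]
  have r6 : (0 : ℝ) < 4 * k + 2 := by positivity
  generalize √(2 * ((k : ℝ) + 1)) = u1 at *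
  generalize √(2 * (3 * (k : ℝ) + 1)) = u2 at *
  generalize √(4 * (k : ℝ) + 2) = u3 at *
  generalize √(2 * (6 * (k : ℝ) + 3)) = u5 at *
  generalize √π = u4 at *
  generalize (q / 2) ^ (k + 1) = v1 at *
  generalize (3 * q / 2) ^ (3 * k + 1) = v2 at *
  generalize (2 * 3 * q) ^ (2 * k + 1) = v3 at *
  generalize (12 : ℝ) ^ (k + 1) = v4 at *
  generalize 4 * (k : ℝ) + 2 = y at *
  field_simp

theorem tendsto_main : Tendsto (fun k : ℕ => Mk k / Tk ((k + 1 : ℕ) : ℝ)) atTop (𝓝 1) := by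
  have hs := Stirling.tendsto_stirlingSeq_sqrt_pi
  have s1 := hs.comp (tendsto_add_atTop_nat 1)
  have s2 := hs.comp (tendsto_atTop_mono (fun k => by omega : ∀ k : ℕ, k ≤ 3 * k + 1) tendsto_id)
  have s3 := hs.comp (tendsto_atTop_mono (fun k => by omega : ∀ k : ℕ, k ≤ 6 * k + 3) tendsto_id)
  have hp : √π ≠ 0 := by positivity
  have h := (((s3.const_mul √π).div (s1.mul s2) (by positivity)).mul tendsto_ck).div
    ((tendsto_ak.const_mul 2).mul tendsto_bk) (by positivity)
  have e : √π * √π / (√π * √π) * 2 / (2 * Real.exp (1 / 2) * Real.exp (-1 / 2)) = 1 := by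
    rw [mul_assoc 2, ← Real.exp_add, div_self (mul_ne_zero hp hp)]
    norm_num
  rw [e] at h
  refine h.congr fun k => ?_
  rw [Mk_div]
  rfl

end OVT

namespace OVT
open Equiv

theorem fact_lower (n : ℕ) : ((n : ℝ) / 3) ^ n ≤ n.factorial := by
  have h := Real.pow_div_factorial_le_exp (n : ℝ) (by positivity) n
  have h2 : Real.exp n ≤ 3 ^ n := by
    rw [← mul_one (n : ℝ), Real.exp_nat_mul]
    exact pow_le_pow_left₀ (Real.exp_pos 1).le Real.exp_one_lt_three.le n
  have hf : (0 : ℝ) < n.factorial := by positivity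
  rw [div_le_iff₀ hf] at h
  rw [div_pow, div_le_iff₀ (by positivity), mul_comm]
  exact h.trans (by gcongr)

theorem Mk_lower (k : ℕ) : 2 * (12 * (k : ℝ) + 6) ^ (2 * k) / 2 ^ (7 * k + 5) ≤ Mk k := by
  have h1 : (3 * k + 1).factorial * (3 * k + 1 + 1) ^ (3 * k + 2) ≤ (6 * k + 3).factorial := by
    have := Nat.factorial_mul_pow_le_factorial (m := 3 * k + 1) (n := 3 * k + 2)
    rwa [show 3 * k + 1 + (3 * k + 2) = 6 * k + 3 by ring] at this
  have h1' : ((3 * k + 1).factorial : ℝ) * (3 * k + 2) ^ (3 * k + 2) ≤ (6 * k + 3).factorial := by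
    have : (((3 * k + 1).factorial * (3 * k + 1 + 1) ^ (3 * k + 2) : ℕ) : ℝ) ≤
      (6 * k + 3).factorial := by exact_mod_cast h1
    push_cast at this
    rwa [show (3 * (k : ℝ) + 1 + 1) = 3 * k + 2 by ring] at this
  have h2 : ((k + 1).factorial : ℝ) ≤ ((k : ℝ) + 1) ^ (k + 1) := by
    exact_mod_cast Nat.factorial_le_pow (k + 1)
  set m : ℝ := 12 * (k : ℝ) + 6 with hm
  have hk : (0 : ℝ) ≤ k := by positivity
  have hm0 : 0 < m := by positivity
  have h3 : (m / 4) ^ (3 * k + 2) ≤ (3 * (k : ℝ) + 2) ^ (3 * k + 2) :=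
    pow_le_pow_left₀ (by positivity) (by rw [hm]; linarith) _
  have h4 : (12 : ℝ) ^ (k + 1) * (k + 1).factorial ≤ (2 * m) ^ (k + 1) := by
    calc (12 : ℝ) ^ (k + 1) * (k + 1).factorial ≤ 12 ^ (k + 1) * ((k : ℝ) + 1) ^ (k + 1) := by gcongr
      _ = (12 * ((k : ℝ) + 1)) ^ (k + 1) := by rw [mul_pow]
      _ ≤ (2 * m) ^ (k + 1) := pow_le_pow_left₀ (by positivity) (by rw [hm]; linarith) _
  unfold Mk
  have hf : (0 : ℝ) < (3 * k + 1).factorial := by positivity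
  rw [← hm]
  calc 2 * m ^ (2 * k) / 2 ^ (7 * k + 5)
      = 2 * ((m / 4) ^ (3 * k + 2) * (3 * k + 1).factorial) /
        (m * (2 * m) ^ (k + 1) * (3 * k + 1).factorial) := by
        rw [mul_pow, div_pow, show (4 : ℝ) = 2 ^ 2 by norm_num, ← pow_mul]
        field_simp
        ring
    _ ≤ 2 * (6 * k + 3).factorial / (m * (12 ^ (k + 1) * (k + 1).factorial) * (3 * k + 1).factorial) := by
        gcongr
        exact (mul_le_mul_of_nonneg_right h3 hf.le).trans (by rw [mul_comm]; exact h1')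
    _ = _ := by ring

theorem two_pow_ge (k : ℕ) : (k : ℝ) + 1 ≤ 2 ^ k := by
  exact_mod_cast Nat.lt_two_pow_self (n := k)

theorem err_bound (k : ℕ) :
    ((12 * (k : ℝ) + 7) * (2 ^ (16 * k + 8) * (12 * k + 6) ^ (5 * k + 2)) * (12 * k + 6)) /
      (4 * k + 2).factorial / Mk k ≤ 288 * 2 ^ 12 * 81 * ((4 * 2 ^ 23 * 9 ^ 4) ^ k / k.factorial) := by
  have hG := fact_lower (4 * k + 2)
  have hM := Mk_lower k
  have hk1 := two_pow_ge k
  set m : ℝ := 12 * (k : ℝ) + 6 with hm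
  have hm0 : 0 < m := by positivity
  have e1 : ((4 * k + 2 : ℕ) : ℝ) / 3 = m / 9 := by rw [hm]; push_cast; ring
  rw [e1] at hG
  have hk : (0 : ℝ) ≤ k := by positivity
  have hkf : (k.factorial : ℝ) ≤ m ^ k := by
    have : (k.factorial : ℝ) ≤ (k : ℝ) ^ k := by exact_mod_cast Nat.factorial_le_pow k
    exact this.trans (pow_le_pow_left₀ hk (by rw [hm]; linarith) _)
  have hkp : (0 : ℝ) < k.factorial := by positivity
  have e2 : 12 * (k : ℝ) + 7 = m + 1 := by rw [hm]; ring
  rw [e2]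
  have hmm : (m + 1) * m ≤ 288 * 4 ^ k := by
    have h4 : (4 : ℝ) ^ k = 2 ^ k * 2 ^ k := by rw [← mul_pow]; norm_num
    rw [h4]
    have : m ≤ 12 * 2 ^ k := by rw [hm]; linarith
    have : m + 1 ≤ 24 * 2 ^ k := by rw [hm]; linarith
    have h5 : (0 : ℝ) < 2 ^ k := by positivity
    calc (m + 1) * m ≤ (24 * 2 ^ k) * (12 * 2 ^ k) := by gcongr
      _ = _ := by ring
  have hMp : 0 < 2 * m ^ (2 * k) / 2 ^ (7 * k + 5) := by positivity
  calc (m + 1) * (2 ^ (16 * k + 8) * m ^ (5 * k + 2)) * m / (4 * k + 2).factorial / Mk k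
      ≤ (m + 1) * (2 ^ (16 * k + 8) * m ^ (5 * k + 2)) * m / (m / 9) ^ (4 * k + 2) /
          (2 * m ^ (2 * k) / 2 ^ (7 * k + 5)) := by gcongr
    _ = (m + 1) * m * (2 ^ (16 * k + 8) * 9 ^ (4 * k + 2) * 2 ^ (7 * k + 4)) / m ^ k := by
        rw [div_pow, show 4 * k + 2 = k + k + k + k + 2 by ring]
        simp only [pow_add, pow_mul', pow_succ]
        field_simp
    _ ≤ 288 * 4 ^ k * (2 ^ (16 * k + 8) * 9 ^ (4 * k + 2) * 2 ^ (7 * k + 4)) / k.factorial := by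
        gcongr
    _ = _ := by
        simp only [mul_pow, ← pow_mul]
        rw [show 16 * k + 8 = 16 * k + 8 from rfl, pow_add 2 (16 * k), pow_add 2 (7 * k),
          pow_add 9 (4 * k), show 23 * k = 16 * k + 7 * k by ring, pow_add 2 (16 * k) (7 * k)]
        ring

theorem final : Tendsto (fun k : ℕ => (Ig1 (k + 1) : ℝ) / Tk ((k + 1 : ℕ) : ℝ)) atTop (𝓝 1) := by
  set er : ℕ → ℝ := fun k => 288 * 2 ^ 12 * 81 * ((4 * 2 ^ 23 * 9 ^ 4) ^ k / k.factorial) with her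
  have he : Tendsto er atTop (𝓝 0) := by
    have := (FloorSemiring.tendsto_pow_div_factorial_atTop (K := ℝ) (4 * 2 ^ 23 * 9 ^ 4)).const_mul
      (288 * 2 ^ 12 * 81)
    rwa [mul_zero] at this
  have hu : Tendsto (fun k => Mk k / Tk ((k + 1 : ℕ) : ℝ) * (1 + er k)) atTop (𝓝 1) := by
    have := tendsto_main.mul (he.const_add 1)
    rwa [add_zero, one_mul] at this
  have hT : ∀ k : ℕ, 0 < Tk ((k + 1 : ℕ) : ℝ) := fun k => by
    rw [Tk_eq]; positivity
  have hM : ∀ k, 0 < Mk k := fun k => by unfold Mk; positivity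
  have hb : ∀ k, Mk k ≤ Ig1 (k + 1) ∧ (Ig1 (k + 1) : ℝ) ≤ Mk k * (1 + er k) := by
    intro k
    have hc := xx_closed k
    obtain ⟨b1, b2⟩ := Ig1_bounds k
    have hc' : (xx (4 * k + 2) 0 : ℝ) * ((12 * k + 6) * 12 ^ (k + 1) * (k + 1).factorial *
        (3 * k + 1).factorial) = 2 * (6 * k + 3).factorial *
        (3 ^ (4 * k + 2) * (4 * k + 2).factorial) := by exact_mod_cast hc
    have b1' : (xx (4 * k + 2) 0 : ℝ) ≤ Ig1 (k + 1) * (3 ^ (4 * k + 2) * (4 * k + 2).factorial) := by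
      exact_mod_cast b1
    have b2' : (Ig1 (k + 1) : ℝ) * (3 ^ (4 * k + 2) * (4 * k + 2).factorial) ≤ xx (4 * k + 2) 0 +
        ((12 * k + 7) * (3 ^ (4 * k + 2) * (2 ^ (16 * k + 8) * (12 * k + 6) ^ (5 * k + 2)))) *
        (12 * k + 6) := by exact_mod_cast b2
    have hX : (xx (4 * k + 2) 0 : ℝ) = Mk k * (3 ^ (4 * k + 2) * (4 * k + 2).factorial) := by
      unfold Mk
      rw [div_mul_eq_mul_div, eq_div_iff (by positivity)]
      exact hc'
    rw [hX] at b1' b2'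
    have hG : (0 : ℝ) < 3 ^ (4 * k + 2) * (4 * k + 2).factorial := by positivity
    refine ⟨le_of_mul_le_mul_right b1' hG, ?_⟩
    have hE := err_bound k
    rw [div_le_iff₀ (hM k), div_le_iff₀ (by positivity)] at hE
    apply le_of_mul_le_mul_right _ hG
    refine b2'.trans ?_
    have h3 : (0 : ℝ) < 3 ^ (4 * k + 2) := by positivity
    have hE2 := mul_le_mul_of_nonneg_right hE h3.le
    have : Mk k * (1 + er k) * (3 ^ (4 * k + 2) * (4 * k + 2).factorial) =
      Mk k * (3 ^ (4 * k + 2) * (4 * k + 2).factorial) +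
      er k * Mk k * (4 * k + 2).factorial * 3 ^ (4 * k + 2) := by ring
    rw [this]
    have hE3 := add_le_add_left hE2 (Mk k * (3 ^ (4 * k + 2) * (4 * k + 2).factorial))
    refine le_trans (le_of_eq ?_) (add_le_add_right hE2 _)
    ring
  refine tendsto_of_tendsto_of_tendsto_of_le_of_le tendsto_main hu ?_ ?_
  · intro k
    exact div_le_div_of_nonneg_right (hb k).1 (hT k).le
  · intro k
    simp only
    rw [div_mul_eq_mul_div]
    exact div_le_div_of_nonneg_right (hb k).2 (hT k).le

end OVT

/-- Theorem (Petri, after Penner):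
`I_{g,1} ∼ (2/(3√π (4g-2)^{3/2})) ((12g-6)/e)^{2g-1}` as `g → ∞`. -/
theorem one_vertex_triangulation_count :
    Tendsto
      (fun g : ℕ =>
        (Ig1 g : ℝ) /
          (2 / (3 * Real.sqrt π * (4 * (g : ℝ) - 2) ^ ((3 : ℝ) / 2)) *
            ((12 * (g : ℝ) - 6) / Real.exp 1) ^ (2 * (g : ℝ) - 1)))
      atTop (𝓝 1) := by
  rw [← tendsto_add_atTop_iff_nat 1]
  exact OVT.final
end

section
/- Asymptotically almost surely, one-vertex triangulations have no nontrivial automorphisms: as g → ∞, with N = 4g−2, the proportion, among ω ∈ Ω_N such that ω∘ρ has exactly one orbit, of those ω for which there exists a permutation σ ≠ id of Fin (3N) commuting with ρ and satisfying σωσ⁻¹ = ω, tends to 0. -/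
open Filter Real Topology

section PermLemmas
open Equiv Equiv.Perm

lemma closed_of_step {X : Type*} [Finite X] (c : Perm X) (S : Set X)
    (hS : ∀ x ∈ S, c x ∈ S) {x y : X} (hx : x ∈ S) (h : c.SameCycle x y) : y ∈ S := by
  obtain ⟨i, -, -, rfl⟩ := h.exists_pow_eq''
  clear h
  induction i with
  | zero => simpa using hx
  | succ k ih => rw [pow_succ', mul_apply]; exact hS _ ih

lemma sc_of_step {X : Type*} [Finite X] (c c' : Perm X)
    (h : ∀ x, c'.SameCycle x (c x)) {x y : X} (hxy : c.SameCycle x y) : c'.SameCycle x y :=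
  closed_of_step c {z | c'.SameCycle x z} (fun z hz => SameCycle.trans hz (h z))
    (SameCycle.refl _ _) hxy

lemma merge_aux {X : Type*} [Finite X] [DecidableEq X] (c : Perm X) (a b : X)
    (hab : ¬ c.SameCycle a b) : (c * swap a b).SameCycle (c a) a := by
  by_contra hn
  have := closed_of_step c {x | (c * swap a b).SameCycle (c a) x ∧ c.SameCycle a x}
    (by
      rintro x ⟨h1, h2⟩
      have hxa : x ≠ a := by rintro rfl; exact hn h1
      have hxb : x ≠ b := by rintro rfl; exact hab h2
      have e : (c * swap a b) x = c x := by rw [mul_apply, swap_apply_of_ne_of_ne hxa hxb]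
      refine ⟨?_, sameCycle_apply_right.2 h2⟩
      rw [← e]; exact sameCycle_apply_right.2 h1)
    (x := c a) (y := a)
    ⟨SameCycle.refl _ _, sameCycle_apply_right.2 (SameCycle.refl _ _)⟩
    (sameCycle_apply_left.2 (SameCycle.refl _ _))
  exact hn this.1

lemma merge {X : Type*} [Finite X] [DecidableEq X] (c : Perm X) (a b : X)
    (hab : ¬ c.SameCycle a b) : (c * swap a b).SameCycle a b ∧
      ∀ x y, c.SameCycle x y → (c * swap a b).SameCycle x y := by
  have h1 := merge_aux c a b hab
  have h2 := merge_aux c b a (fun h => hab h.symm)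
  rw [swap_comm] at h2
  have e : (c * swap a b) b = c a := by simp
  refine ⟨?_, fun x y hxy => sc_of_step c _ (fun x => ?_) hxy⟩
  · rw [← e] at h1
    exact (sameCycle_apply_left.1 h1).symm
  · by_cases hxa : x = a
    · subst hxa; exact h1.symm
    by_cases hxb : x = b
    · subst hxb; exact h2.symm
    have e : (c * swap a b) x = c x := by rw [mul_apply, swap_apply_of_ne_of_ne hxa hxb]
    rw [← e]; exact sameCycle_apply_right.2 (SameCycle.refl _ _)

lemma sign_of_trans {X : Type*} [Fintype X] [DecidableEq X] (c : Perm X)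
    (hc : ∀ x y, c.SameCycle x y) {a b : X} (hab : a ≠ b) :
    sign c = -(-1) ^ Fintype.card X := by
  have hne : ∀ x, c x ≠ x := by
    intro x hx
    have : ∀ y, y = x := fun y => closed_of_step c {x} (by rintro _ rfl; exact hx) rfl (hc x y)
    exact hab ((this a).trans (this b).symm)
  have hcy : c.IsCycle := ⟨a, hne a, fun y _ => hc a y⟩
  rw [hcy.sign]
  congr 2
  rw [← Finset.card_univ]
  congr 1
  ext x; simp [hne x]

lemma split_two {X : Type*} [Finite X] [DecidableEq X] (c : Perm X)
    (hc : ∀ x y, c.SameCycle x y) (a b : X) (x : X) :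
    (c * swap a b).SameCycle a x ∨ (c * swap a b).SameCycle b x := by
  refine closed_of_step c {x | (c * swap a b).SameCycle a x ∨ (c * swap a b).SameCycle b x}
    ?_ (x := a) (Or.inl (SameCycle.refl _ _)) (hc a x)
  intro x hx
  by_cases hxa : x = a
  · subst hxa
    right
    have e : (c * swap x b) b = c x := by simp
    rw [← e]; exact sameCycle_apply_right.2 (SameCycle.refl _ _)
  by_cases hxb : x = b
  · subst hxb
    left
    have e : (c * swap a x) a = c x := by simp
    rw [← e]; exact sameCycle_apply_right.2 (SameCycle.refl _ _)
  have e : (c * swap a b) x = c x := by rw [mul_apply, swap_apply_of_ne_of_ne hxa hxb]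
  show _ ∨ _
  rw [← e, sameCycle_apply_right, sameCycle_apply_right]; exact hx

lemma glue {X : Type*} [Fintype X] [DecidableEq X] (c : Perm X)
    (hc : ∀ x y, c.SameCycle x y) (a b d : X) (hab : a ≠ b) :
    (∀ x y, (c * (swap a b * swap b d)).SameCycle x y) ∨
    (∀ x y, (c * (swap a b * swap a d)).SameCycle x y) := by
  have h2 := split_two c hc a b
  rw [← mul_assoc, ← mul_assoc]
  set c1 := c * swap a b with hc1
  by_cases hbd : c1.SameCycle b d
  · by_cases had : c1.SameCycle a d
    · exfalso
      have hba : c1.SameCycle a b := had.trans hbd.symm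
      have ht : ∀ x, c1.SameCycle a x := fun x => (h2 x).elim id (fun h => hba.trans h)
      have s1 := sign_of_trans c hc hab
      have s2 := sign_of_trans c1 (fun x y => (ht x).symm.trans (ht y)) hab
      rw [hc1, Perm.sign_mul, sign_swap hab, s1] at s2
      rcases neg_one_pow_eq_or ℤˣ (Fintype.card X) with h | h <;> rw [h] at s2 <;>
        revert s2 <;> decide
    · right
      obtain ⟨m1, m2⟩ := merge c1 a d had
      have ht : ∀ x, (c1 * swap a d).SameCycle a x := fun x => (h2 x).elim (m2 _ _)
        (fun h => m1.trans ((m2 _ _ hbd.symm).trans (m2 _ _ h)))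
      exact fun x y => (ht x).symm.trans (ht y)
  · left
    obtain ⟨m1, m2⟩ := merge c1 b d hbd
    have had : c1.SameCycle a d := (h2 d).resolve_right hbd
    have ht : ∀ x, (c1 * swap b d).SameCycle b x := fun x => (h2 x).elim
        (fun h => m1.trans ((m2 _ _ had.symm).trans (m2 _ _ h))) (m2 _ _)
    exact fun x y => (ht x).symm.trans (ht y)

end PermLemmas

section Orient
set_option linter.unusedSimpArgs false
open Equiv Equiv.Perm

def RFun {N : ℕ} (e : ℕ → Bool) (k : ℕ) (x : Fin (3 * N)) : Fin (3 * N) :=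
  if x.val / 3 < k then
    (if e (x.val / 3) = true then ⟨3 * (x.val / 3) + (x.val + 2) % 3, by have := x.isLt; omega⟩
      else rhoFun x) else x

lemma RFun_val {N : ℕ} (e : ℕ → Bool) (k : ℕ) (x : Fin (3 * N)) :
    (RFun e k x).val = if x.val / 3 < k then
    (if e (x.val / 3) = true then 3 * (x.val / 3) + (x.val + 2) % 3
      else 3 * (x.val / 3) + (x.val + 1) % 3) else x.val := by
  unfold RFun rhoFun; split_ifs <;> rfl

lemma RFun_div {N : ℕ} (e : ℕ → Bool) (k : ℕ) (x : Fin (3 * N)) :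
    (RFun e k x).val / 3 = x.val / 3 := by
  rw [RFun_val]; split_ifs <;> omega

noncomputable def RR {N : ℕ} (e : ℕ → Bool) (k : ℕ) : Perm (Fin (3 * N)) :=
  Equiv.ofBijective (RFun e k) (Finite.injective_iff_bijective.mp (by
      intro a b h
      have h0 := RFun_div e k a
      rw [h, RFun_div] at h0
      have h' := congrArg Fin.val h
      rw [RFun_val, RFun_val, h0] at h'
      apply Fin.ext
      split_ifs at h' <;> omega))

lemma RR_val {N : ℕ} (e : ℕ → Bool) (k : ℕ) (x : Fin (3 * N)) :
    (RR e k x).val = if x.val / 3 < k then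
    (if e (x.val / 3) = true then 3 * (x.val / 3) + (x.val + 2) % 3
      else 3 * (x.val / 3) + (x.val + 1) % 3) else x.val := RFun_val e k x

lemma rho_val {N : ℕ} (x : Fin (3 * N)) :
    (rho N x).val = 3 * (x.val / 3) + (x.val + 1) % 3 := rfl

def TwFun {N : ℕ} (e : ℕ → Bool) (x : Fin (3 * N)) : Fin (3 * N) :=
  if e (x.val / 3) = true then ⟨3 * (x.val / 3) + (3 - x.val % 3) % 3, by have := x.isLt; omega⟩
   else x

lemma TwFun_val {N : ℕ} (e : ℕ → Bool) (x : Fin (3 * N)) :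
    (TwFun e x).val = if e (x.val / 3) = true then 3 * (x.val / 3) + (3 - x.val % 3) % 3
      else x.val := by
  unfold TwFun; split_ifs <;> rfl

lemma TwFun_div {N : ℕ} (e : ℕ → Bool) (x : Fin (3 * N)) :
    (TwFun e x).val / 3 = x.val / 3 := by
  rw [TwFun_val]; split_ifs <;> omega

lemma TwFun_invol {N : ℕ} (e : ℕ → Bool) (x : Fin (3 * N)) : TwFun e (TwFun e x) = x := by
  apply Fin.ext
  rw [TwFun_val, TwFun_div, TwFun_val]
  split_ifs <;> omega

def Tw {N : ℕ} (e : ℕ → Bool) : Perm (Fin (3 * N)) :=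
  ⟨TwFun e, TwFun e, TwFun_invol e, TwFun_invol e⟩

lemma Tw_mul_self {N : ℕ} (e : ℕ → Bool) : (Tw e : Perm (Fin (3 * N))) * Tw e = 1 := by
  ext x; exact congrArg Fin.val (TwFun_invol e x)

lemma Tw_conj {N : ℕ} (e : ℕ → Bool) : (RR e N : Perm (Fin (3 * N))) = Tw e * rho N * Tw e := by
  apply Equiv.ext; intro x; apply Fin.ext
  have hx := x.isLt
  have h1 : (rho N (TwFun e x)).val / 3 = x.val / 3 := by
    rw [rho_val, TwFun_div]; omega
  show (RR e N x).val = (TwFun e (rho N (TwFun e x))).val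
  rw [RR_val, TwFun_val, h1, rho_val, TwFun_div, TwFun_val]
  split_ifs <;> omega

lemma RR_succ {N : ℕ} (e : ℕ → Bool) (k : ℕ) (a b d : Fin (3 * N)) (ha : a.val = 3 * k)
    (hb : b.val = 3 * k + 1) (hd : d.val = 3 * k + 2) :
    (RR e (k + 1) : Perm (Fin (3 * N))) =
      RR e k * (if e k = true then swap a b * swap a d else swap a b * swap b d) := by
  have hab : a ≠ b := by intro h; have := congrArg Fin.val h; omega
  have had : a ≠ d := by intro h; have := congrArg Fin.val h; omega
  have hbd : b ≠ d := by intro h; have := congrArg Fin.val h; omega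
  have q1 : (3 * k + 1) / 3 = k := by omega
  have q2 : (3 * k + 2) / 3 = k := by omega
  apply Equiv.ext; intro x; apply Fin.ext
  by_cases hxa : x = a
  · subst hxa
    cases hek : e k <;> simp [RR_val, q1, q2, hek, ha, hb, hd, swap_apply_of_ne_of_ne, hab, had, hbd, had.symm, hab.symm, hbd.symm] <;> omega
  by_cases hxb : x = b
  · subst hxb
    cases hek : e k <;> simp [RR_val, q1, q2, hek, ha, hb, hd, swap_apply_of_ne_of_ne, hab, had, hbd, had.symm, hab.symm, hbd.symm] <;> omega
  by_cases hxd : x = d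
  · subst hxd
    cases hek : e k <;> simp [RR_val, q1, q2, hek, ha, hb, hd, swap_apply_of_ne_of_ne, hab, had, hbd, had.symm, hab.symm, hbd.symm] <;> omega
  have hk : x.val / 3 ≠ k := by
    intro h
    have h1 : x.val ≠ a.val := fun h => hxa (Fin.ext h)
    have h2 : x.val ≠ b.val := fun h => hxb (Fin.ext h)
    have h3 : x.val ≠ d.val := fun h => hxd (Fin.ext h)
    omega
  have : (if e k = true then swap a b * swap a d else swap a b * swap b d) x = x := by
    split_ifs <;> simp [swap_apply_of_ne_of_ne, hxa, hxb, hxd]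
  rw [mul_apply, this, RR_val, RR_val]
  have : x.val / 3 < k + 1 ↔ x.val / 3 < k := by omega
  simp only [this]

lemma RR_zero {N : ℕ} (e : ℕ → Bool) : (RR e 0 : Perm (Fin (3 * N))) = 1 := by
  ext x; simp [RR_val]

lemma RR_congr {N : ℕ} (e e' : ℕ → Bool) (k : ℕ) (h : ∀ j < k, e j = e' j) :
    (RR e k : Perm (Fin (3 * N))) = RR e' k := by
  ext x
  rw [RR_val, RR_val]
  by_cases hx : x.val / 3 < k
  · rw [h _ hx]
  · simp [hx]

/-- Tree stage. -/
lemma tree_stage {N M : ℕ} (hNM : 3 * N = 4 * M + 2) (hM : 1 ≤ M) (ω : Perm (Fin (3 * N)))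
    (hinv : ∀ x, ω (ω x) = x)
    (h1 : ∀ x : Fin (3 * N), x.val < 3 * M → x.val % 3 = 0 → x.val ≠ 0 →
      (ω x).val + 2 = x.val)
    (h2 : ∀ x : Fin (3 * N), x.val < 3 * M → x.val % 3 = 1 → x.val + 2 ≤ (ω x).val)
    (h3 : ∀ x : Fin (3 * N), x.val < 3 * M → x.val % 3 = 2 → 3 * M ≤ (ω x).val)
    (z : Fin (3 * N)) (hz : z.val = 0) :
    ∀ k ≤ M, (ω * RR (fun _ => false) k).SameCycle z (ω z) ∧
      ∀ x : Fin (3 * N), x.val < 3 * k → (ω * RR (fun _ => false) k).SameCycle z x ∧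
      (ω * RR (fun _ => false) k).SameCycle z (ω x) := by
  intro k
  induction k with
  | zero =>
    intro _
    rw [RR_zero, mul_one]
    exact ⟨sameCycle_apply_right.2 (SameCycle.refl _ _), fun x hx => absurd hx (by omega)⟩
  | succ k ih =>
    intro hk
    obtain ⟨ih0, ih⟩ := ih (by omega)
    obtain ⟨a, ha⟩ : ∃ a : Fin (3 * N), a.val = 3 * k := ⟨⟨3 * k, by omega⟩, rfl⟩
    obtain ⟨b, hb⟩ : ∃ a : Fin (3 * N), a.val = 3 * k + 1 := ⟨⟨3 * k + 1, by omega⟩, rfl⟩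
    obtain ⟨d, hd⟩ : ∃ a : Fin (3 * N), a.val = 3 * k + 2 := ⟨⟨3 * k + 2, by omega⟩, rfl⟩
    have hR := RR_succ (fun _ => false) k a b d ha hb hd
    simp only [Bool.false_eq_true, if_false] at hR
    rw [hR, ← mul_assoc, ← mul_assoc]
    set c := ω * RR (fun _ => false) k with hc
    have hbω := h2 b (by omega) (by omega)
    have hdω := h3 d (by omega) (by omega)
    have cfix : ∀ x : Fin (3 * N), 3 * k ≤ x.val → c x = ω x := by
      intro x hx
      rw [hc, mul_apply]; congr 1
      apply Fin.ext; rw [RR_val, if_neg (by omega)]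
    have hab : a ≠ b := by intro h; have := congrArg Fin.val h; omega
    have had : a ≠ d := by intro h; have := congrArg Fin.val h; omega
    have hbd : b ≠ d := by intro h; have := congrArg Fin.val h; omega
    have n1 : ¬ c.SameCycle a b := by
      intro h
      have := closed_of_step c {b, ω b} (by
        rintro x (rfl | rfl)
        · rw [cfix _ (by omega)]; simp
        · rw [cfix _ (by omega), hinv]; simp) (by simp) h.symm
      rcases this with h | h
      · exact hab h
      · have := congrArg Fin.val h; omega
    obtain ⟨m1, m2⟩ := merge c a b n1
    set c1 := c * swap a b with hc1
    have c1fix : ∀ x : Fin (3 * N), 3 * k + 2 ≤ x.val → c1 x = ω x := by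
      intro x hx
      rw [hc1, mul_apply, swap_apply_of_ne_of_ne, cfix x (by omega)]
      · intro h; have := congrArg Fin.val h; omega
      · intro h; have := congrArg Fin.val h; omega
    have n2 : ¬ c1.SameCycle b d := by
      intro h
      have := closed_of_step c1 {d, ω d} (by
        rintro x (rfl | rfl)
        · rw [c1fix _ (by omega)]; simp
        · rw [c1fix _ (by omega), hinv]; simp) (by simp) h.symm
      rcases this with h | h
      · exact hbd h
      · have := congrArg Fin.val h; omega
    obtain ⟨l1, l2⟩ := merge c1 b d n2
    set c2 := c1 * swap b d with hc2
    have lift : ∀ x y, c.SameCycle x y → c2.SameCycle x y := fun x y h => l2 _ _ (m2 _ _ h)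
    have za : c.SameCycle z a ∧ c.SameCycle z (ω a) := by
      by_cases hk0 : k = 0
      · have : z = a := Fin.ext (by omega)
        rw [← this]; exact ⟨SameCycle.refl _ _, ih0⟩
      · have := h1 a (by omega) (by omega) (by omega)
        have h5 := ih (ω a) (by omega)
        rw [hinv] at h5
        exact ⟨h5.2, h5.1⟩
    have zb : c2.SameCycle z b := (lift _ _ za.1).trans (l2 _ _ m1)
    have zd : c2.SameCycle z d := zb.trans l1
    have zb' : c2.SameCycle z (ω b) := zb.trans (lift _ _ (by
      rw [← cfix b (by omega)]; exact sameCycle_apply_right.2 (SameCycle.refl _ _)))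
    have zd' : c2.SameCycle z (ω d) := zd.trans (lift _ _ (by
      rw [← cfix d (by omega)]; exact sameCycle_apply_right.2 (SameCycle.refl _ _)))
    refine ⟨lift _ _ ih0, fun x hx => ?_⟩
    by_cases hxk : x.val < 3 * k
    · exact ⟨lift _ _ (ih x hxk).1, lift _ _ (ih x hxk).2⟩
    obtain h | h | h : x = a ∨ x = b ∨ x = d := by
      simp only [Fin.ext_iff]; omega
    · rw [h]; exact ⟨lift _ _ za.1, lift _ _ za.2⟩
    · rw [h]; exact ⟨zb, zb'⟩
    · rw [h]; exact ⟨zd, zd'⟩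

lemma exists_orient {N M : ℕ} (hNM : 3 * N = 4 * M + 2) (hM : 1 ≤ M) (ω : Perm (Fin (3 * N)))
    (hinv : ∀ x, ω (ω x) = x)
    (h1 : ∀ x : Fin (3 * N), x.val < 3 * M → x.val % 3 = 0 → x.val ≠ 0 →
      (ω x).val + 2 = x.val)
    (h2 : ∀ x : Fin (3 * N), x.val < 3 * M → x.val % 3 = 1 → x.val + 2 ≤ (ω x).val)
    (h3 : ∀ x : Fin (3 * N), x.val < 3 * M → x.val % 3 = 2 → 3 * M ≤ (ω x).val)
    (h4 : ∀ x : Fin (3 * N), 3 * M ≤ x.val → (ω x).val < 3 * M) :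
    ∃ e : ℕ → Bool, (∀ k, (k < M ∨ N ≤ k) → e k = false) ∧
      ∀ x y, (ω * RR e N).SameCycle x y := by
  have key : ∀ j, M + j ≤ N → ∃ e : ℕ → Bool, (∀ k, (k < M ∨ M + j ≤ k) → e k = false) ∧
      ∀ x y, (ω * RR e (M + j)).SameCycle x y := by
    intro j
    induction j with
    | zero =>
      intro _
      refine ⟨fun _ => false, fun _ _ => rfl, ?_⟩
      have ht := (tree_stage hNM hM ω hinv h1 h2 h3 ⟨0, by omega⟩ rfl M le_rfl).2
      have : ∀ x, (ω * RR (fun _ => false) M).SameCycle ⟨0, by omega⟩ x := by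
        intro x
        by_cases hx : x.val < 3 * M
        · exact (ht x hx).1
        · have := (ht (ω x) (h4 x (by omega))).2
          rwa [hinv] at this
      exact fun x y => (this x).symm.trans (this y)
    | succ j ih =>
      intro hj
      obtain ⟨e, he, ht⟩ := ih (by omega)
      obtain ⟨a, ha⟩ : ∃ a : Fin (3 * N), a.val = 3 * (M + j) := ⟨⟨3 * (M + j), by omega⟩, rfl⟩
      obtain ⟨b, hb⟩ : ∃ a : Fin (3 * N), a.val = 3 * (M + j) + 1 :=
        ⟨⟨3 * (M + j) + 1, by omega⟩, rfl⟩
      obtain ⟨d, hd⟩ : ∃ a : Fin (3 * N), a.val = 3 * (M + j) + 2 :=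
        ⟨⟨3 * (M + j) + 2, by omega⟩, rfl⟩
      have hab : a ≠ b := by intro h; have := congrArg Fin.val h; omega
      have gen : ∀ t : Bool, (RR (Function.update e (M + j) t) (M + j + 1) : Perm (Fin (3 * N)))
          = RR e (M + j) * (if t = true then swap a b * swap a d else swap a b * swap b d) := by
        intro t
        rw [RR_succ _ (M + j) a b d ha hb hd, RR_congr _ e (M + j)]
        · simp
        · intro i hi; rw [Function.update_of_ne (by omega)]
      have hupd : ∀ t : Bool, ∀ k, (k < M ∨ M + (j + 1) ≤ k) →
          Function.update e (M + j) t k = false := by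
        intro t k hk
        rw [Function.update_of_ne (by omega)]; exact he k (by omega)
      rcases glue _ ht a b d hab with h | h
      · refine ⟨Function.update e (M + j) false, hupd _, ?_⟩
        rw [← add_assoc, gen, ← mul_assoc]; simpa using h
      · refine ⟨Function.update e (M + j) true, hupd _, ?_⟩
        rw [← add_assoc, gen, ← mul_assoc]; simpa using h
  have := key (N - M) (by omega)
  rwa [show M + (N - M) = N by omega] at this

end Orient
section Lower
open Equiv Equiv.Perm

def om0Fun (M x : ℕ) : ℕ :=
  if x = 0 then 4 * M else if x = 3 * M - 2 then 4 * M + 1 else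
  if x < 3 * M then (if x % 3 = 0 then x - 2 else if x % 3 = 1 then x + 2 else 3 * M + x / 3)
  else if x < 4 * M then 3 * (x - 3 * M) + 2 else if x = 4 * M then 0 else 3 * M - 2

lemma om0Fun_lt {M x : ℕ} (hM : 1 ≤ M) (hx : x < 4 * M + 2) : om0Fun M x < 4 * M + 2 := by
  unfold om0Fun; split_ifs <;> omega

lemma om0Fun_ne {M x : ℕ} (hM : 1 ≤ M) (hx : x < 4 * M + 2) : om0Fun M x ≠ x := by
  unfold om0Fun; split_ifs <;> omega

lemma om0Fun_invol {M x : ℕ} (hM : 1 ≤ M) (hx : x < 4 * M + 2) : om0Fun M (om0Fun M x) = x := by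
  obtain ⟨y, hy⟩ : ∃ y, y = om0Fun M x := ⟨_, rfl⟩
  rw [← hy]
  unfold om0Fun at hy ⊢
  split_ifs at hy <;> split_ifs <;> omega

def om0 {N M : ℕ} (hNM : 3 * N = 4 * M + 2) (hM : 1 ≤ M) : Perm (Fin (3 * N)) where
  toFun x := ⟨om0Fun M x.val, by have := om0Fun_lt hM (x.isLt.trans_eq hNM); omega⟩
  invFun x := ⟨om0Fun M x.val, by have := om0Fun_lt hM (x.isLt.trans_eq hNM); omega⟩
  left_inv x := Fin.ext (om0Fun_invol hM (x.isLt.trans_eq hNM))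
  right_inv x := Fin.ext (om0Fun_invol hM (x.isLt.trans_eq hNM))

lemma om0_val {N M : ℕ} (hNM : 3 * N = 4 * M + 2) (hM : 1 ≤ M) (x : Fin (3 * N)) :
    (om0 hNM hM x).val = om0Fun M x.val := rfl

lemma om0_invol {N M : ℕ} (hNM : 3 * N = 4 * M + 2) (hM : 1 ≤ M) (x : Fin (3 * N)) :
    om0 hNM hM (om0 hNM hM x) = x := Fin.ext (om0Fun_invol hM (x.isLt.trans_eq hNM))

lemma om0_ne {N M : ℕ} (hNM : 3 * N = 4 * M + 2) (hM : 1 ≤ M) (x : Fin (3 * N)) :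
    om0 hNM hM x ≠ x := fun h => om0Fun_ne hM (x.isLt.trans_eq hNM) (congrArg Fin.val h)

def UFun {N M : ℕ} (hMN : M ≤ N) (u : Perm (Fin M)) (x : Fin (3 * N)) : Fin (3 * N) :=
  if h : x.val < 3 * M then
    ⟨3 * (u ⟨x.val / 3, by omega⟩).val + x.val % 3, by
      have := (u ⟨x.val / 3, by omega⟩).isLt; omega⟩ else x

lemma UFun_val {N M : ℕ} (hMN : M ≤ N) (u : Perm (Fin M)) (x : Fin (3 * N)) (k : Fin M) (r : ℕ)
    (hr : r < 3) (hx : x.val = 3 * k.val + r) : (UFun hMN u x).val = 3 * (u k).val + r := by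
  have hk := k.isLt
  have h : x.val < 3 * M := by omega
  have h2 : (⟨x.val / 3, by omega⟩ : Fin M) = k := Fin.ext (by simp only; omega)
  unfold UFun
  rw [dif_pos h]
  simp only [h2]; omega

lemma UFun_of_le {N M : ℕ} (hMN : M ≤ N) (u : Perm (Fin M)) (x : Fin (3 * N))
    (hx : 3 * M ≤ x.val) : UFun hMN u x = x := by
  unfold UFun; rw [dif_neg (by omega)]

lemma UFun_mul {N M : ℕ} (hMN : M ≤ N) (u v : Perm (Fin M)) (huv : ∀ k, u (v k) = k)
    (x : Fin (3 * N)) : UFun hMN u (UFun hMN v x) = x := by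
  by_cases hx : x.val < 3 * M
  · have h1 := UFun_val hMN v x ⟨x.val / 3, by omega⟩ (x.val % 3) (by omega) (by simp only; omega)
    apply Fin.ext
    rw [UFun_val hMN u _ _ _ (by omega) h1, huv]
    simp only; omega
  · rw [UFun_of_le hMN v x (by omega), UFun_of_le hMN u x (by omega)]

def UU {N M : ℕ} (hMN : M ≤ N) (u : Perm (Fin M)) : Perm (Fin (3 * N)) where
  toFun := UFun hMN u
  invFun := UFun hMN u⁻¹
  left_inv := UFun_mul hMN _ _ (by simp)
  right_inv := UFun_mul hMN _ _ (by simp)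

lemma UU_rho {N M : ℕ} (hMN : M ≤ N) (u : Perm (Fin M)) :
    UU hMN u * rho N = rho N * UU hMN u := by
  apply Equiv.ext; intro x; apply Fin.ext
  show (UFun hMN u (rho N x)).val = (rho N (UFun hMN u x)).val
  have hr := rho_val x
  by_cases hx : x.val < 3 * M
  · have h1 := UFun_val hMN u x ⟨x.val / 3, by omega⟩ (x.val % 3) (by omega) (by simp only; omega)
    rw [rho_val, UFun_val hMN u (rho N x) ⟨x.val / 3, by omega⟩ ((x.val + 1) % 3) (by omega)
      (by simp only; omega), h1]
    omega
  · rw [UFun_of_le hMN u x (by omega), UFun_of_le hMN u _ (by omega)]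

lemma rigid {N M : ℕ} (hNM : 3 * N = 4 * M + 2) (hM : 1 ≤ M) (hMN : M ≤ N)
    (u1 u2 : Perm (Fin M)) (γ1 γ2 : Perm (Fin (3 * N)))
    (hconj : γ1 * om0 hNM hM * γ1⁻¹ = γ2 * om0 hNM hM * γ2⁻¹)
    (hu1 : ∀ x : Fin (3 * N), x.val < 3 * M → γ1 x = UFun hMN u1 x)
    (hu2 : ∀ x : Fin (3 * N), x.val < 3 * M → γ2 x = UFun hMN u2 x)
    (hg1 : ∀ x : Fin (3 * N), 3 * M ≤ x.val → 3 * M ≤ (γ1 x).val) :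
    u1 = u2 ∧ γ1 = γ2 := by
  obtain ⟨ω, hω⟩ : ∃ ω, ω = γ1 * om0 hNM hM * γ1⁻¹ := ⟨_, rfl⟩
  have c1 : ∀ x, γ1 (om0 hNM hM x) = ω (γ1 x) := by intro x; simp [hω]
  have c2 : ∀ x, γ2 (om0 hNM hM x) = ω (γ2 x) := by intro x; simp [hω, hconj]
  have d1 : ∀ x, γ1 x = ω (γ1 (om0 hNM hM x)) := by intro x; rw [← c1, om0_invol]
  have d2 : ∀ x, γ2 x = ω (γ2 (om0 hNM hM x)) := by intro x; rw [← c2, om0_invol]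
  have hu : ∀ k (hk : k < M), u1 ⟨k, hk⟩ = u2 ⟨k, hk⟩ := by
    intro k
    induction k with
    | zero =>
      intro hk
      obtain ⟨y, hy⟩ : ∃ y, u2 y = u1 ⟨0, hk⟩ := u2.surjective _
      have hyl := y.isLt
      obtain ⟨z, hz⟩ : ∃ z : Fin (3 * N), z.val = 0 := ⟨⟨0, by omega⟩, rfl⟩
      obtain ⟨w, hw⟩ : ∃ z : Fin (3 * N), z.val = 3 * y.val := ⟨⟨3 * y.val, by omega⟩, rfl⟩
      have e : γ1 z = γ2 w := by
        rw [hu1 z (by omega), hu2 w (by omega)]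
        apply Fin.ext
        rw [UFun_val hMN u1 z ⟨0, hk⟩ 0 (by omega) (by simpa using hz),
          UFun_val hMN u2 w y 0 (by omega) (by omega), hy]
      by_cases hy0 : y.val = 0
      · rw [← hy]; congr 1; exact Fin.ext hy0
      · exfalso
        have e2 : γ1 (om0 hNM hM z) = γ2 (om0 hNM hM w) := by rw [c1, c2, e]
        have v1 : (om0 hNM hM z).val = 4 * M := by rw [om0_val, hz]; simp [om0Fun]
        have v2 : (om0 hNM hM w).val = 3 * (y.val - 1) + 1 := by
          rw [om0_val]; unfold om0Fun; split_ifs <;> omega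
        have b1 := hg1 (om0 hNM hM z) (by omega)
        rw [e2, hu2 _ (by omega), UFun_val hMN u2 _ ⟨y.val - 1, by omega⟩ 1 (by omega) v2] at b1
        have := (u2 ⟨y.val - 1, by omega⟩).isLt
        omega
    | succ k ih =>
      intro hk
      have ih := ih (by omega)
      obtain ⟨x, hx⟩ : ∃ z : Fin (3 * N), z.val = 3 * (k + 1) := ⟨⟨3 * (k + 1), by omega⟩, rfl⟩
      have v : (om0 hNM hM x).val = 3 * k + 1 := by
        rw [om0_val]; unfold om0Fun; split_ifs <;> omega
      have e : γ1 x = γ2 x := by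
        rw [d1, d2, hu1 _ (by omega), hu2 _ (by omega)]
        congr 1
        apply Fin.ext
        rw [UFun_val hMN u1 _ ⟨k, by omega⟩ 1 (by omega) v,
          UFun_val hMN u2 _ ⟨k, by omega⟩ 1 (by omega) v, ih]
      rw [hu1 _ (by omega), hu2 _ (by omega)] at e
      have e := congrArg Fin.val e
      rw [UFun_val hMN u1 _ ⟨k + 1, hk⟩ 0 (by omega) (by simpa using hx),
          UFun_val hMN u2 _ ⟨k + 1, hk⟩ 0 (by omega) (by simpa using hx)] at e
      apply Fin.ext; omega
  have hu' : u1 = u2 := Equiv.ext fun k => hu k.val k.isLt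
  refine ⟨hu', Equiv.ext fun x => ?_⟩
  by_cases hx : x.val < 3 * M
  · rw [hu1 x hx, hu2 x hx, hu']
  · have : (om0 hNM hM x).val < 3 * M := by
      have := x.isLt
      rw [om0_val]; unfold om0Fun; split_ifs <;> omega
    rw [d1, d2, hu1 _ this, hu2 _ this, hu']

abbrev Leaf (N M : ℕ) := {x : Fin (3 * N) // 3 * M ≤ x.val}

lemma card_Leaf {N M : ℕ} (hNM : 3 * N = 4 * M + 2) : Fintype.card (Leaf N M) = M + 2 := by
  rw [← Fintype.card_fin (M + 2)]
  refine Fintype.card_congr ⟨fun x => ⟨x.val.val - 3 * M, by have := x.val.isLt; omega⟩,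
    fun x => ⟨⟨x.val + 3 * M, by have := x.isLt; omega⟩, by simp⟩, ?_, ?_⟩
  · intro x
    have := x.2
    apply Subtype.ext; apply Fin.ext; simp only; omega
  · intro x
    apply Fin.ext; simp

lemma leaf_lt {N M : ℕ} (β : Perm (Leaf N M)) (x : Fin (3 * N)) (hx : x.val < 3 * M) :
    ofSubtype β x = x := ofSubtype_apply_of_not_mem β (by omega)

lemma leaf_le {N M : ℕ} (β : Perm (Leaf N M)) (x : Fin (3 * N)) (hx : 3 * M ≤ x.val) :
    3 * M ≤ (ofSubtype β x).val := by
  rw [ofSubtype_apply_of_mem β hx]; exact (β _).2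

lemma exists_e {N M : ℕ} (hNM : 3 * N = 4 * M + 2) (hM : 1 ≤ M) (β : Perm (Leaf N M)) :
    ∃ e : ℕ → Bool, (∀ k, (k < M ∨ N ≤ k) → e k = false) ∧
      ∀ x y, (ofSubtype β * om0 hNM hM * (ofSubtype β)⁻¹ * RR e N).SameCycle x y := by
  have hlt : ∀ x : Fin (3 * N), x.val < 3 * M → (ofSubtype β)⁻¹ x = x := by
    intro x hx; rw [← map_inv]; exact leaf_lt _ x hx
  have hle : ∀ x : Fin (3 * N), 3 * M ≤ x.val → 3 * M ≤ ((ofSubtype β)⁻¹ x).val := by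
    intro x hx; rw [← map_inv]; exact leaf_le _ x hx
  apply exists_orient hNM hM
  · intro x; simp [om0_invol]
  · intro x hx h0 h1
    have v : (om0 hNM hM x).val = x.val - 2 := by
      rw [om0_val]; unfold om0Fun; split_ifs <;> omega
    rw [mul_apply, mul_apply, hlt x hx, leaf_lt _ _ (by omega)]; omega
  · intro x hx h0
    rw [mul_apply, mul_apply, hlt x hx]
    by_cases h : x.val = 3 * M - 2
    · have v : (om0 hNM hM x).val = 4 * M + 1 := by
        rw [om0_val]; unfold om0Fun; split_ifs <;> omega
      have := leaf_le β (om0 hNM hM x) (by omega)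
      omega
    · have v : (om0 hNM hM x).val = x.val + 2 := by
        rw [om0_val]; unfold om0Fun; split_ifs <;> omega
      rw [leaf_lt _ _ (by omega)]; omega
  · intro x hx h0
    rw [mul_apply, mul_apply, hlt x hx]
    have v : (om0 hNM hM x).val = 3 * M + x.val / 3 := by
      rw [om0_val]; unfold om0Fun; split_ifs <;> omega
    exact leaf_le β (om0 hNM hM x) (by omega)
  · intro x hx
    have h1 := hle x hx
    have h2 := ((ofSubtype β)⁻¹ x).isLt
    rw [mul_apply, mul_apply]
    have v : (om0 hNM hM ((ofSubtype β)⁻¹ x)).val < 3 * M := by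
      rw [om0_val]; unfold om0Fun; split_ifs <;> omega
    rw [leaf_lt _ _ v]; exact v

instance (N : ℕ) : Finite (Omega N) := by unfold Omega; infer_instance

lemma lower_bound {N M : ℕ} (hNM : 3 * N = 4 * M + 2) (hM : 1 ≤ M) :
    M.factorial * (M + 2).factorial ≤ Nat.card {ω : Omega N // OneOrbit ω} * 2 ^ N := by
  have hMN : M ≤ N := by omega
  choose e he ht using exists_e hNM hM
  let γ : Perm (Fin M) × Perm (Leaf N M) → Perm (Fin (3 * N)) := fun p =>
    UU hMN p.1 * Tw (e p.2) * ofSubtype p.2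
  let W : Perm (Fin M) × Perm (Leaf N M) → Omega N := fun p =>
    ⟨γ p * om0 hNM hM * (γ p)⁻¹, fun a => ⟨by simp [om0_invol], fun h => by
      apply om0_ne hNM hM ((γ p)⁻¹ a)
      rw [mul_apply, mul_apply] at h
      exact (Equiv.Perm.inv_eq_iff_eq).2 h.symm |>.symm⟩⟩
  have hW : ∀ p, OneOrbit (W p) := by
    intro p a b
    have hT : (Tw (e p.2) : Perm (Fin (3 * N)))⁻¹ = Tw (e p.2) :=
      inv_eq_of_mul_eq_one_left (Tw_mul_self _)
    have hU : (UU hMN p.1)⁻¹ * rho N = rho N * (UU hMN p.1)⁻¹ := by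
      rw [inv_mul_eq_iff_eq_mul, ← mul_assoc, UU_rho, mul_assoc, mul_inv_cancel, mul_one]
    have : (W p).val * rho N = (UU hMN p.1 * Tw (e p.2)) *
        (ofSubtype p.2 * om0 hNM hM * (ofSubtype p.2)⁻¹ * RR (e p.2) N) *
        (UU hMN p.1 * Tw (e p.2))⁻¹ := by
      rw [Tw_conj]
      show (γ p * om0 hNM hM * (γ p)⁻¹) * rho N = _
      simp only [γ, mul_inv_rev, hT]
      have h3 := Tw_mul_self (N := N) (e p.2)
      calc _ = UU hMN p.1 * Tw (e p.2) * ofSubtype p.2 * om0 hNM hM * (ofSubtype p.2)⁻¹ *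
            Tw (e p.2) * ((UU hMN p.1)⁻¹ * rho N) := by simp only [mul_assoc]
        _ = UU hMN p.1 * Tw (e p.2) * ofSubtype p.2 * om0 hNM hM * (ofSubtype p.2)⁻¹ *
            Tw (e p.2) * rho N * (Tw (e p.2) * Tw (e p.2)) * (UU hMN p.1)⁻¹ := by
              rw [hU, h3]; simp only [mul_assoc, one_mul]
        _ = _ := by simp only [mul_assoc]
    rw [this, sameCycle_conj]
    exact ht _ _ _
  let Φ : Perm (Fin M) × Perm (Leaf N M) → {ω : Omega N // OneOrbit ω} × (Fin N → Bool) :=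
    fun p => (⟨W p, hW p⟩, fun k => e p.2 k.val)
  have hΦ : Function.Injective Φ := by
    rintro ⟨u1, β1⟩ ⟨u2, β2⟩ h
    have hw : γ (u1, β1) * om0 hNM hM * (γ (u1, β1))⁻¹ =
        γ (u2, β2) * om0 hNM hM * (γ (u2, β2))⁻¹ :=
      congrArg (fun q => q.1.1.val) h
    have hee : e β1 = e β2 := by
      funext k
      by_cases hk : k < N
      · exact congrFun (congrArg Prod.snd h) ⟨k, hk⟩
      · rw [he β1 k (by omega), he β2 k (by omega)]
    have hlt : ∀ p, ∀ x : Fin (3 * N), x.val < 3 * M → γ p x = UFun hMN p.1 x := by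
      intro p x hx
      show UFun hMN p.1 (TwFun (e p.2) (ofSubtype p.2 x)) = _
      rw [leaf_lt _ x hx]
      congr 1
      apply Fin.ext
      rw [TwFun_val, he _ _ (by omega)]; simp
    have hle : ∀ p, ∀ x : Fin (3 * N), 3 * M ≤ x.val → 3 * M ≤ (γ p x).val := by
      intro p x hx
      show 3 * M ≤ (UFun hMN p.1 (TwFun (e p.2) (ofSubtype p.2 x))).val
      have h1 := leaf_le p.2 x hx
      have h2 := TwFun_div (e p.2) (ofSubtype p.2 x)
      rw [UFun_of_le hMN _ _ (by omega)]
      omega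
    obtain ⟨r1, r2⟩ := rigid hNM hM hMN u1 u2 _ _ hw (hlt _) (hlt _) (hle _)
    subst r1
    simp only [γ, hee] at r2
    have r3 := ofSubtype_injective (mul_left_cancel r2)
    rw [r3]
  have := Nat.card_le_card_of_injective Φ hΦ
  rw [Nat.card_prod, Nat.card_prod] at this
  simpa [Nat.card_eq_fintype_card, Fintype.card_perm, card_Leaf hNM] using this

end Lower
section Upper
open Equiv Equiv.Perm

lemma same_of_agree {Y : Type*} [Finite Y] (f f' : Perm Y) (W : Set Y)
    (hW : ∀ x ∈ W, ∀ y ∈ W, f.SameCycle x y → x = y)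
    (hW' : ∀ x ∈ W, ∀ y ∈ W, f'.SameCycle x y → x = y)
    (hag : ∀ x, x ∉ W → f x = f' x) : f = f' := by
  apply Equiv.ext
  intro w
  by_cases hw : w ∈ W
  swap
  · exact hag w hw
  -- `v` is the point with `f v = f' w`
  obtain ⟨v, hv⟩ : ∃ v, f v = f' w := f.surjective _
  have hvW : v ∈ W := by
    by_contra h
    rw [hag v h] at hv
    exact h (f'.injective hv ▸ hw)
  have hs : f'.SameCycle w v := by
    by_contra hn
    have := closed_of_step f {x | f'.SameCycle w x ∧ f.SameCycle v x}
      (by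
        rintro x ⟨h1, h2⟩
        have hx : x ∉ W := by
          intro hx
          have := hW v hvW x hx h2
          exact hn (this ▸ h1)
        refine ⟨?_, sameCycle_apply_right.2 h2⟩
        rw [hag x hx]; exact sameCycle_apply_right.2 h1)
      (x := f v) (y := v)
      ⟨by rw [hv]; exact sameCycle_apply_right.2 (SameCycle.refl _ _),
        sameCycle_apply_right.2 (SameCycle.refl _ _)⟩
      (sameCycle_apply_left.2 (SameCycle.refl _ _))
    exact hn this.1
  have := hW' w hw v hvW hs
  rw [← hv, this]

lemma count_perm {Y : Type*} [Finite Y] (e b K : ℕ) (he : 0 < e) (hK : Nat.card Y ≤ K)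
    (hK1 : 1 ≤ K) (hb : ∀ w, Nat.card Y ≤ w * e → b ≤ w) :
    Nat.card {f : Perm Y // f ^ e = 1} ≤ K ^ (Nat.card Y - b) * 2 ^ (Nat.card Y) := by
  classical
  have := Fintype.ofFinite Y
  let W : Perm Y → Finset Y := fun f =>
    Finset.univ.image (fun q : Quotient (SameCycle.setoid f) => q.out)
  have hWs : ∀ f, ∀ x ∈ (W f : Set Y), ∀ y ∈ (W f : Set Y), f.SameCycle x y → x = y := by
    intro f x hx y hy hxy
    simp only [W, Finset.coe_image, Finset.coe_univ, Set.image_univ, Set.mem_range] at hx hy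
    obtain ⟨p, rfl⟩ := hx
    obtain ⟨q, rfl⟩ := hy
    have : (⟦p.out⟧ : Quotient (SameCycle.setoid f)) = ⟦q.out⟧ := Quotient.sound hxy
    rw [Quotient.out_eq, Quotient.out_eq] at this
    rw [this]
  have hWc : ∀ f : Perm Y, f ^ e = 1 → b ≤ (W f).card := by
    intro f hf
    apply hb
    let F : (W f) × Fin e → Y := fun p => (f ^ p.2.val) p.1.val
    have hF : Function.Surjective F := by
      intro y
      let q : Quotient (SameCycle.setoid f) := ⟦y⟧
      have h1 : f.SameCycle q.out y := Quotient.exact (Quotient.out_eq q)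
      obtain ⟨i, -, -, hi⟩ := h1.exists_pow_eq''
      refine ⟨(⟨q.out, by simp [W]⟩, ⟨i % e, Nat.mod_lt _ he⟩), ?_⟩
      show (f ^ (i % e)) q.out = y
      rw [← pow_eq_pow_mod i hf]; exact hi
    have := Nat.card_le_card_of_surjective F hF
    simpa [Nat.card_eq_fintype_card] using this
  rw [Nat.card_eq_fintype_card (α := {f : Perm Y // f ^ e = 1}), Fintype.card_subtype]
  have key := Finset.card_le_mul_card_image_of_maps_to (s := Finset.univ.filter fun f : Perm Y => f ^ e = 1)
    (t := (Finset.univ : Finset (Finset Y))) (f := W) (fun _ _ => Finset.mem_univ _)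
    (K ^ (Nat.card Y - b)) (by
      intro V _
      by_cases hV : b ≤ V.card
      · calc _ ≤ Fintype.card ({y // y ∉ V} → Y) := by
              rw [← Finset.card_univ]
              refine Finset.card_le_card_of_injOn (fun f y => f y.val) (by simp) ?_
              intro f hf f' hf' hff
              simp only [Finset.coe_filter, Finset.mem_filter, Finset.mem_univ, true_and,
                Set.mem_setOf_eq] at hf hf'
              have e1 := hWs f
              have e2 := hWs f'
              rw [hf.2] at e1
              rw [hf'.2] at e2
              exact same_of_agree f f' V e1 e2 (fun x hx => congrFun hff ⟨x, hx⟩)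
          _ = Nat.card Y ^ (Nat.card Y - V.card) := by
              rw [Fintype.card_fun, Fintype.card_subtype_compl, Nat.card_eq_fintype_card]
              simp
          _ ≤ K ^ (Nat.card Y - V.card) := Nat.pow_le_pow_left hK _
          _ ≤ _ := Nat.pow_le_pow_right hK1 (by omega)
      · rw [Finset.card_eq_zero.2]
        · exact Nat.zero_le _
        · rw [Finset.filter_eq_empty_iff]
          intro f hf hfV
          simp only [Finset.mem_filter, Finset.mem_univ, true_and] at hf
          exact hV (hfV ▸ hWc f hf))
  simpa [Nat.card_eq_fintype_card] using key

abbrev Orb {X : Type*} (pp : Perm X) := Quotient (SameCycle.setoid pp)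

lemma out_pow {X : Type*} [Finite X] (pp : Perm X) (k : ℕ) (hk : 0 < k) (hpp : pp ^ k = 1)
    (q : Orb pp) (x : X) (hx : (⟦x⟧ : Orb pp) = q) : ∃ i : Fin k, (pp ^ i.val) q.out = x := by
  have h1 : pp.SameCycle q.out x := Quotient.exact ((Quotient.out_eq q).trans hx.symm)
  obtain ⟨i, -, -, hi⟩ := h1.exists_pow_eq''
  refine ⟨⟨i % k, Nat.mod_lt _ hk⟩, ?_⟩
  rw [← pow_eq_pow_mod i hpp]; exact hi

lemma card_orb {X : Type*} [Finite X] (pp : Perm X) (k : ℕ) (hk : 0 < k) (hpp : pp ^ k = 1)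
    (hfree : ∀ i, 0 < i → i < k → ∀ x, (pp ^ i) x ≠ x) : Nat.card (Orb pp) * k = Nat.card X := by
  let F : Orb pp × Fin k → X := fun p => (pp ^ p.2.val) p.1.out
  have hF : Function.Bijective F := by
    constructor
    · rintro ⟨p, i⟩ ⟨q, j⟩ h
      have h : (pp ^ i.val) p.out = (pp ^ j.val) q.out := h
      have hpq : p = q := by
        rw [← Quotient.out_eq p, ← Quotient.out_eq q]
        apply Quotient.sound
        show pp.SameCycle _ _
        rw [← sameCycle_pow_left (n := i.val), h, sameCycle_pow_left]
      subst hpq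
      have aux : ∀ i j : Fin k, (pp ^ i.val) p.out = (pp ^ j.val) p.out → i.val < j.val → False := by
        intro i j h hij
        have : pp ^ j.val = pp ^ i.val * pp ^ (j.val - i.val) := by
          rw [← pow_add]; congr 1; omega
        rw [this, mul_apply] at h
        exact hfree (j.val - i.val) (by omega) (by have := j.isLt; omega) _
          ((pp ^ i.val).injective h).symm
      have : i = j := by
        apply Fin.ext
        rcases lt_trichotomy i.val j.val with h' | h' | h'
        · exact (aux _ _ h h').elim
        · exact h'
        · exact (aux _ _ h.symm h').elim
      rw [this]
    · intro x
      obtain ⟨i, hi⟩ := out_pow pp k hk hpp ⟦x⟧ x rfl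
      exact ⟨(⟦x⟧, i), hi⟩
  have := Nat.card_congr (Equiv.ofBijective F hF)
  rw [Nat.card_prod] at this
  simpa using this

def barPerm {X : Type*} (pp τ : Perm X) (h : τ * pp = pp * τ) : Perm (Orb pp) :=
  Quotient.congr τ (fun a b => by
    show pp.SameCycle a b ↔ pp.SameCycle (τ a) (τ b)
    have : pp = τ * pp * τ⁻¹ := by rw [h, mul_assoc, mul_inv_cancel, mul_one]
    conv_rhs => rw [this, sameCycle_conj]
    simp)

lemma barPerm_mk {X : Type*} (pp τ : Perm X) (h : τ * pp = pp * τ) (x : X) :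
    barPerm pp τ h ⟦x⟧ = ⟦τ x⟧ := rfl

lemma barPerm_pow {X : Type*} (pp τ : Perm X) (h : τ * pp = pp * τ) (e : ℕ) (he : τ ^ e = 1) :
    barPerm pp τ h ^ e = 1 := by
  have : ∀ i : ℕ, ∀ x : X, (barPerm pp τ h ^ i) ⟦x⟧ = ⟦(τ ^ i) x⟧ := by
    intro i
    induction i with
    | zero => intro x; rfl
    | succ i ih => intro x; rw [pow_succ', mul_apply, ih, barPerm_mk, pow_succ', mul_apply]
  apply Equiv.ext
  intro q
  induction q using Quotient.inductionOn with
  | h x => rw [this, he]; rfl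

lemma count_comm {X : Type*} [Finite X] (pp : Perm X) (k : ℕ) (hk : 0 < k) (hpp : pp ^ k = 1)
    (e : ℕ) : Nat.card {τ : Perm X // τ * pp = pp * τ ∧ τ ^ e = 1} ≤
      Nat.card {f : Perm (Orb pp) // f ^ e = 1} * k ^ (Nat.card (Orb pp)) := by
  have hs : ∀ τ : {τ : Perm X // τ * pp = pp * τ ∧ τ ^ e = 1}, ∀ q : Orb pp, ∃ i : Fin k,
      (pp ^ i.val) (barPerm pp τ.1 τ.2.1 q).out = τ.1 q.out := by
    intro τ q
    apply out_pow pp k hk hpp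
    rw [← barPerm_mk pp τ.1 τ.2.1, Quotient.out_eq]
  choose s hs using hs
  let F : {τ : Perm X // τ * pp = pp * τ ∧ τ ^ e = 1} →
      {f : Perm (Orb pp) // f ^ e = 1} × (Orb pp → Fin k) := fun τ =>
    (⟨barPerm pp τ.1 τ.2.1, barPerm_pow pp τ.1 τ.2.1 e τ.2.2⟩, s τ)
  have hF : Function.Injective F := by
    intro τ τ' h
    have h1 : barPerm pp τ.1 τ.2.1 = barPerm pp τ'.1 τ'.2.1 := congrArg (fun p => p.1.1) h
    have h2 : s τ = s τ' := congrArg Prod.snd h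
    have h3 : ∀ q : Orb pp, τ.1 q.out = τ'.1 q.out := by
      intro q; rw [← hs, ← hs, h1, h2]
    apply Subtype.ext
    apply Equiv.ext
    intro x
    obtain ⟨i, hi⟩ := out_pow pp k hk hpp ⟦x⟧ x rfl
    have comm : ∀ σ : Perm X, σ * pp = pp * σ → ∀ y, σ ((pp ^ i.val) y) = (pp ^ i.val) (σ y) := by
      intro σ hσ y
      have : Commute σ pp := hσ
      have := this.pow_right i.val
      rw [← mul_apply, this.eq, mul_apply]
    rw [← hi, comm _ τ.2.1, comm _ τ'.2.1, h3]
  have key := Nat.card_le_card_of_injective F hF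
  rw [Nat.card_prod] at key
  have := Fintype.ofFinite (Orb pp)
  simpa [Nat.card_eq_fintype_card (α := Orb pp), Nat.card_fun] using key

lemma rho_pow_val {N : ℕ} (x : Fin (3 * N)) :
    (((rho N) ^ 2) x).val = 3 * (x.val / 3) + (x.val + 2) % 3 := by
  rw [pow_two, mul_apply, rho_val, rho_val]; omega

lemma rho_cube (N : ℕ) : rho N ^ 3 = 1 := by
  ext x
  rw [pow_succ', mul_apply, rho_val, rho_pow_val]
  show _ = x.val
  omega

lemma card_orb_rho (N : ℕ) : Nat.card (Orb (rho N)) = N := by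
  have := card_orb (rho N) 3 (by norm_num) (rho_cube N) (by
    intro i h0 h3 x hx
    have hx := congrArg Fin.val hx
    obtain rfl | rfl : i = 1 ∨ i = 2 := by omega
    · rw [pow_one, rho_val] at hx; omega
    · rw [rho_pow_val] at hx; omega)
  simp at this
  omega

lemma upper_d (N d : ℕ) (hN : 1 ≤ N) (hd : 2 ≤ d) (m : ℕ) (hm : m * d = 3 * N) :
    Nat.card {σ : Perm (Fin (3 * N)) // σ * rho N = rho N * σ ∧ σ ^ d = 1} ≤
      (3 * N) ^ (N - (m + 2) / 3) * 2 ^ N * 3 ^ N := by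
  have h1 := count_comm (rho N) 3 (by norm_num) (rho_cube N) d
  have h2 := count_perm (Y := Orb (rho N)) d ((m + 2) / 3) (3 * N) (by omega)
    (by rw [card_orb_rho]; omega) (by omega) (by
      intro w hw
      rw [card_orb_rho] at hw
      have : m * d ≤ (3 * w) * d := by rw [hm]; nlinarith
      have := Nat.le_of_mul_le_mul_right this (by omega)
      omega)
  rw [card_orb_rho] at h1 h2
  exact h1.trans (Nat.mul_le_mul_right _ h2)

lemma upper_sigma (N d : ℕ) (hN : 1 ≤ N) (hd : 2 ≤ d) (m : ℕ) (hm : m * d = 3 * N)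
    (σ : Perm (Fin (3 * N))) (hσ : σ ^ d = 1)
    (hfree : ∀ i, 0 < i → i < d → ∀ x, (σ ^ i) x ≠ x) :
    Nat.card {ω : Perm (Fin (3 * N)) // ω * σ = σ * ω ∧ ω ^ 2 = 1} ≤
      (3 * N) ^ (m - (m + 1) / 2) * 2 ^ (3 * N) * 2 ^ (3 * N) := by
  have hc := card_orb σ d (by omega) hσ hfree
  rw [Nat.card_fin] at hc
  have hc := Nat.eq_of_mul_eq_mul_right (by omega) (hc.trans hm.symm)
  have hmN : m ≤ 3 * N := by nlinarith
  have h1 := count_comm σ d (by omega) hσ 2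
  have h2 := count_perm (Y := Orb σ) 2 ((m + 1) / 2) (3 * N) (by omega)
    (by rw [hc]; exact hmN) (by omega) (by intro w hw; rw [hc] at hw; omega)
  rw [hc] at h1 h2
  refine h1.trans (Nat.mul_le_mul (h2.trans (Nat.mul_le_mul_left _
    (Nat.pow_le_pow_right (by omega) hmN))) ?_)
  calc d ^ m ≤ (2 ^ d) ^ m := Nat.pow_le_pow_left (Nat.lt_two_pow_self).le _
    _ = 2 ^ (3 * N) := by rw [← pow_mul, mul_comm, hm]

lemma upper_bound (N : ℕ) (hN : 1 ≤ N) :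
    Nat.card {ω : Omega N // OneOrbit ω ∧
            ∃ σ : Equiv.Perm (Fin (3 * N)), σ ≠ 1 ∧ σ * rho N = rho N * σ ∧
              σ * ω.val * σ⁻¹ = ω.val} ≤
      (3 * N) * (384 ^ N * (3 * N) ^ (5 * N / 4)) := by
  classical
  let S : ℕ → Finset (Perm (Fin (3 * N))) := fun d => Finset.univ.filter fun σ =>
    σ * rho N = rho N * σ ∧ σ ^ d = 1 ∧ ∀ i, 0 < i → i < d → ∀ x, (σ ^ i) x ≠ x
  let O : Perm (Fin (3 * N)) → Finset (Perm (Fin (3 * N))) := fun σ => Finset.univ.filter fun ω =>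
    ω * σ = σ * ω ∧ ω ^ 2 = 1
  let Bd : Finset (Perm (Fin (3 * N))) :=
    (Finset.Icc 2 (3 * N)).biUnion fun d => (S d).biUnion O
  have h1 : Nat.card {ω : Omega N // OneOrbit ω ∧
            ∃ σ : Equiv.Perm (Fin (3 * N)), σ ≠ 1 ∧ σ * rho N = rho N * σ ∧
              σ * ω.val * σ⁻¹ = ω.val} ≤ Bd.card := by
    rw [← Fintype.card_coe, ← Nat.card_eq_fintype_card]
    refine Nat.card_le_card_of_injective (fun ω => ⟨ω.1.1, ?_⟩) ?_
    swap
    · intro a b h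
      have h' : a.1.1 = b.1.1 := congrArg (fun z : {x // x ∈ Bd} => z.val) h
      exact Subtype.ext (Subtype.ext h')
    · obtain ⟨⟨ω, hω⟩, ho, σ, hne, hρ, hc⟩ := ω
      have ho : ∀ a b : Fin (3 * N), (ω * rho N).SameCycle a b := ho
      have hc : σ * ω * σ⁻¹ = ω := hc
      show ω ∈ Bd
      have hc' : σ * ω = ω * σ := by rwa [mul_inv_eq_iff_eq_mul] at hc
      have hfix : ∀ i, ∀ x, (σ ^ i) x = x → σ ^ i = 1 := by
        intro i x hx
        have hcm : Commute σ (ω * rho N) := by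
          show σ * (ω * rho N) = (ω * rho N) * σ
          rw [← mul_assoc, hc', mul_assoc, hρ, mul_assoc]
        have hcm := hcm.pow_left i
        apply Equiv.ext
        intro y
        exact closed_of_step (ω * rho N) {y | (σ ^ i) y = y} (by
          intro y hy
          show (σ ^ i) ((ω * rho N) y) = _
          rw [← mul_apply, hcm.eq, mul_apply, hy]) hx (ho x y)
      have hpos : 0 < orderOf σ := orderOf_pos σ
      have h2 : 2 ≤ orderOf σ := by
        have : orderOf σ ≠ 1 := fun h => hne (orderOf_eq_one_iff.1 h)
        omega
      have hfree : ∀ i, 0 < i → i < orderOf σ → ∀ x, (σ ^ i) x ≠ x := by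
        intro i h0 hi x hx
        exact pow_ne_one_of_lt_orderOf (by omega) hi (hfix i x hx)
      have hcard := card_orb σ _ hpos (pow_orderOf_eq_one σ) hfree
      rw [Nat.card_fin] at hcard
      simp only [Bd, Finset.mem_biUnion, Finset.mem_Icc, S, O, Finset.mem_filter,
        Finset.mem_univ, true_and]
      refine ⟨orderOf σ, ⟨h2, Nat.le_of_dvd (by omega) (Dvd.intro_left _ hcard)⟩,
        σ, ⟨hρ, pow_orderOf_eq_one σ, hfree⟩, hc'.symm, ?_⟩
      rw [pow_two]
      exact Equiv.ext fun x => (hω x).1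
  refine h1.trans ?_
  have h2 : ∀ d ∈ Finset.Icc 2 (3 * N), ((S d).biUnion O).card ≤
      384 ^ N * (3 * N) ^ (5 * N / 4) := by
    intro d hd
    rw [Finset.mem_Icc] at hd
    by_cases hS : (S d).Nonempty
    swap
    · rw [Finset.not_nonempty_iff_eq_empty] at hS
      rw [hS]; simp
    obtain ⟨σ0, hσ0⟩ := hS
    have hmem : ∀ σ ∈ S d, σ * rho N = rho N * σ ∧ σ ^ d = 1 ∧
        ∀ i, 0 < i → i < d → ∀ x, (σ ^ i) x ≠ x := by
      intro σ hσ; simpa [S] using hσ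
    obtain ⟨-, q1, q2⟩ := hmem σ0 hσ0
    have hm := card_orb σ0 d (by omega) q1 q2
    rw [Nat.card_fin] at hm
    obtain ⟨m, hm'⟩ : ∃ m, m = Nat.card (Orb σ0) := ⟨_, rfl⟩
    rw [← hm'] at hm
    have hSc : (S d).card ≤ (3 * N) ^ (N - (m + 2) / 3) * 2 ^ N * 3 ^ N := by
      refine le_trans ?_ (upper_d N d hN hd.1 m hm)
      rw [Nat.card_eq_fintype_card, Fintype.card_subtype]
      apply Finset.card_le_card
      intro σ hσ
      have := hmem σ hσ
      simp only [Finset.mem_filter, Finset.mem_univ, true_and]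
      exact ⟨this.1, this.2.1⟩
    have hOc : ∀ σ ∈ S d, (O σ).card ≤ (3 * N) ^ (m - (m + 1) / 2) * 2 ^ (3 * N) * 2 ^ (3 * N) := by
      intro σ hσ
      have := hmem σ hσ
      refine le_trans ?_ (upper_sigma N d hN hd.1 m hm σ this.2.1 this.2.2)
      rw [Nat.card_eq_fintype_card, Fintype.card_subtype]
    refine (Finset.card_biUnion_le_card_mul _ _ _ hOc).trans ((Nat.mul_le_mul_right _ hSc).trans ?_)
    have h2m : 2 * m ≤ 3 * N := by nlinarith
    have hE : (N - (m + 2) / 3) + (m - (m + 1) / 2) ≤ 5 * N / 4 := by omega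
    calc _ = 384 ^ N * (3 * N) ^ ((N - (m + 2) / 3) + (m - (m + 1) / 2)) := by
          have e1 : (384 : ℕ) ^ N = 2 ^ N * 3 ^ N * 8 ^ N * 8 ^ N := by
            rw [← mul_pow, ← mul_pow, ← mul_pow]; norm_num
          have e2 : (2 : ℕ) ^ (3 * N) = 8 ^ N := by rw [pow_mul]; norm_num
          rw [pow_add, e1, e2]
          generalize (3 * N) ^ (N - (m + 2) / 3) = p
          generalize (3 * N) ^ (m - (m + 1) / 2) = q
          generalize (8 : ℕ) ^ N = r
          generalize (2 : ℕ) ^ N = s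
          generalize (3 : ℕ) ^ N = t
          ring
      _ ≤ _ := Nat.mul_le_mul_left _ (Nat.pow_le_pow_right (by omega) hE)
  refine (Finset.card_biUnion_le_card_mul _ _ _ h2).trans (Nat.mul_le_mul_right _ ?_)
  simp

end Upper
lemma final_nat (g : ℕ) (hg : 1 ≤ g) (A B : ℕ)
    (hA : (3 * g - 2).factorial * (3 * g).factorial ≤ A * 2 ^ (4 * g - 2))
    (hB : B ≤ (3 * (4 * g - 2)) *
      (384 ^ (4 * g - 2) * (3 * (4 * g - 2)) ^ (5 * (4 * g - 2) / 4))) :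
    B * g ^ g ≤ A * (108 * g ^ 3 * (768 ^ 4 * 12 ^ 5) ^ g) := by
  have f1 : (3 * g).factorial ≤ (9 * g ^ 2) * (3 * g - 2).factorial := by
    obtain ⟨k, hk⟩ : ∃ k, 3 * g = k + 2 := ⟨3 * g - 2, by omega⟩
    have : 9 * g ^ 2 = (k + 2) * (k + 2) := by rw [← hk]; ring
    rw [this, hk, Nat.add_sub_cancel, Nat.factorial_succ, Nat.factorial_succ, ← mul_assoc]
    exact Nat.mul_le_mul_right _ (Nat.mul_le_mul_left _ (by omega))
  have f2 : g ^ (3 * g) ≤ (3 * g).factorial := by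
    have h1 := Real.pow_div_factorial_le_exp (x := ((3 * g : ℕ) : ℝ)) (by positivity) (3 * g)
    rw [div_le_iff₀ (by positivity)] at h1
    have h2 : Real.exp ((3 * g : ℕ) : ℝ) ≤ 3 ^ (3 * g) := by
      rw [← Real.exp_one_pow]
      exact pow_le_pow_left₀ (Real.exp_pos 1).le
        (by have := Real.exp_one_lt_d9; linarith) _
    have h3 : (((3 * g : ℕ) : ℝ)) ^ (3 * g) ≤ 3 ^ (3 * g) * ((3 * g).factorial : ℝ) :=
      h1.trans (mul_le_mul_of_nonneg_right h2 (by positivity))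
    have h4 : (3 * g) ^ (3 * g) ≤ 3 ^ (3 * g) * (3 * g).factorial := by exact_mod_cast h3
    rw [mul_pow] at h4
    exact Nat.le_of_mul_le_mul_left h4 (by positivity)
  have B1 : B ≤ (12 * g) * (384 ^ (4 * g) * (12 * g) ^ (5 * g)) := by
    refine hB.trans (Nat.mul_le_mul (by omega) (Nat.mul_le_mul
      (Nat.pow_le_pow_right (by norm_num) (by omega)) ?_))
    exact (Nat.pow_le_pow_left (by omega) _).trans (Nat.pow_le_pow_right (by omega) (by omega))
  have A1 : g ^ (6 * g) ≤ (9 * g ^ 2) * (A * 2 ^ (4 * g)) := by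
    calc g ^ (6 * g) = g ^ (3 * g) * g ^ (3 * g) := by rw [← pow_add]; congr 1; omega
      _ ≤ ((9 * g ^ 2) * (3 * g - 2).factorial) * (3 * g).factorial :=
          Nat.mul_le_mul (f2.trans f1) f2
      _ = (9 * g ^ 2) * ((3 * g - 2).factorial * (3 * g).factorial) := by ring
      _ ≤ (9 * g ^ 2) * (A * 2 ^ (4 * g)) := Nat.mul_le_mul_left _ (hA.trans
          (Nat.mul_le_mul_left _ (Nat.pow_le_pow_right (by norm_num) (by omega))))
  calc B * g ^ g ≤ (12 * g) * (384 ^ (4 * g) * (12 * g) ^ (5 * g)) * g ^ g :=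
        Nat.mul_le_mul_right _ B1
    _ = (12 * g) * (384 ^ (4 * g) * 12 ^ (5 * g)) * g ^ (6 * g) := by
        rw [mul_pow 12 g, show 6 * g = 5 * g + g by ring, pow_add g (5 * g) g]; ring
    _ ≤ (12 * g) * (384 ^ (4 * g) * 12 ^ (5 * g)) * ((9 * g ^ 2) * (A * 2 ^ (4 * g))) :=
        Nat.mul_le_mul_left _ A1
    _ = A * (108 * g ^ 3 * (768 ^ 4 * 12 ^ 5) ^ g) := by
        rw [mul_pow, ← pow_mul, ← pow_mul, show (768 : ℕ) = 384 * 2 by norm_num, mul_pow 384 2]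
        ring

/-- Theorem: asymptotically almost surely, a one-vertex triangulation has no nontrivial
automorphism: as `g → ∞`, with `N = 4g - 2`, the proportion of one-orbit configurations
`ω ∈ Ω_N` fixed by conjugation by some nontrivial permutation commuting with `ρ`
tends to `0`. -/
theorem one_vertex_triangulations_asymmetric :
    Tendsto
      (fun g : ℕ =>
        (Nat.card {ω : Omega (4 * g - 2) // OneOrbit ω ∧
            ∃ σ : Equiv.Perm (Fin (3 * (4 * g - 2))), σ ≠ 1 ∧
              σ * rho (4 * g - 2) = rho (4 * g - 2) * σ ∧
              σ * ω.val * σ⁻¹ = ω.val} : ℝ) /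
          (Nat.card {ω : Omega (4 * g - 2) // OneOrbit ω} : ℝ))
      atTop (𝓝 0) := by
  have hlim : Tendsto (fun g : ℕ => 108 * ((g : ℝ) ^ 3 * (1 / 2 : ℝ) ^ g)) atTop (𝓝 0) := by
    have := (tendsto_pow_const_mul_const_pow_of_abs_lt_one 3
      (r := (1 / 2 : ℝ)) (by rw [abs_of_pos] <;> norm_num)).const_mul 108
    simpa using this
  refine squeeze_zero' (Eventually.of_forall fun g => by positivity) ?_ hlim
  filter_upwards [eventually_ge_atTop (2 * (768 ^ 4 * 12 ^ 5))] with g hg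
  have hg1 : 1 ≤ g := le_trans (by norm_num) hg
  have hA := lower_bound (N := 4 * g - 2) (M := 3 * g - 2) (by omega) (by omega)
  rw [show 3 * g - 2 + 2 = 3 * g by omega] at hA
  have hB := upper_bound (4 * g - 2) (by omega)
  have hN := final_nat g hg1 _ _ hA hB
  have hApos : 0 < Nat.card {ω : Omega (4 * g - 2) // OneOrbit ω} := by
    by_contra h
    have h0 : Nat.card {ω : Omega (4 * g - 2) // OneOrbit ω} = 0 := by omega
    rw [h0, zero_mul] at hA
    have := Nat.mul_pos (Nat.factorial_pos (3 * g - 2)) (Nat.factorial_pos (3 * g))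
    omega
  generalize Nat.card {ω : Omega (4 * g - 2) // OneOrbit ω} = A at *
  generalize Nat.card {ω : Omega (4 * g - 2) // OneOrbit ω ∧
            ∃ σ : Equiv.Perm (Fin (3 * (4 * g - 2))), σ ≠ 1 ∧
              σ * rho (4 * g - 2) = rho (4 * g - 2) * σ ∧
              σ * ω.val * σ⁻¹ = ω.val} = B at *
  obtain ⟨K, hK⟩ : ∃ K : ℕ, K = 768 ^ 4 * 12 ^ 5 := ⟨_, rfl⟩
  rw [← hK] at hN hg
  have hNR : (B : ℝ) * (g : ℝ) ^ g ≤ A * (108 * (g : ℝ) ^ 3 * (K : ℝ) ^ g) := by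
    exact_mod_cast hN
  have hgpos : (0 : ℝ) < (g : ℝ) := by exact_mod_cast hg1
  have hAp : (0 : ℝ) < (A : ℝ) := by exact_mod_cast hApos
  have hKg : (K : ℝ) ^ g ≤ (1 / 2 : ℝ) ^ g * (g : ℝ) ^ g := by
    rw [← mul_pow]
    have : (2 * K : ℝ) ≤ g := by exact_mod_cast hg
    exact pow_le_pow_left₀ (by positivity) (by linarith) _
  rw [div_le_iff₀ hAp]
  have hgg : (0 : ℝ) < (g : ℝ) ^ g := by positivity
  refine le_of_mul_le_mul_right ?_ hgg
  calc (B : ℝ) * (g : ℝ) ^ g ≤ A * (108 * (g : ℝ) ^ 3 * (K : ℝ) ^ g) := hNR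
    _ ≤ A * (108 * (g : ℝ) ^ 3 * ((1 / 2 : ℝ) ^ g * (g : ℝ) ^ g)) := by gcongr
    _ = _ := by ring
end
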